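/- arXiv:1308.5373 — 4 statements merged into one kernel-verified Lean document; each statement's English description precedes it below -/
import Mathlib

section
/- Let m be a positive integer, q = 3^m, n = q − 1, and let v be an integer with 0 ≤ v ≤ n−1 such that v is not congruent to any power 3^j modulo n (i.e., v ∉ C₁, the 3-cyclotomic coset of 1 modulo n) and such that the residues v·3^j mod n for j = 0, 1, …, m−1 are pairwise distinct (i.e., |C_v| = m). Then the code D = {c ∈ GF(3)^{n} : Σ_{i=0}^{n−1} c_i α^i = 0 and Σ_{i=0}^{n−1} c_i α^{iv} = 0 in GF(q)} has dimension n − 2m and minimum nonzero Hamming weight equal to 4 if and only if the following three conditions all hold: (C1) v is even; (C2) the only x ∈ GF(q)* with (−x−1)^v + x^v + 1 = 0 is x = 1; (C3) the only x ∈ GF(q) with (x+1)^v − x^v − 1 = 0 is x = 0. -/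
/-! The columns `(x, x ^ v)`, `x ∈ Fˣ`, of the parity-check matrix span `F × F` over `ZMod 3`: by
nondegeneracy of the trace form, a functional vanishing on them all is a relation
`Tr (a x) + Tr (b x ^ v) = 0` for all `x`, and expanding the traces gives a linear relation among
the characters `x ↦ x ^ 3 ^ j` and `x ↦ x ^ (v * 3 ^ j)`. The hypotheses on cyclotomic cosets make
these `2 m` characters distinct, so `a = b = 0` by Dedekind's theorem, and `D` has codimension
`2 m`.

A word of weight at most three is a signed relation among at most three columns. Dividing by one of
the columns and normalising signs leaves `x = -y` with `x ^ v = -y ^ v`, impossible exactly when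
`v` is even, and the two equations in C2 and C3.

Weight four is forced by packing: the ball of radius two has `1 + 2 n ^ 2` words, and for `n ≥ 3`
this exceeds the number `(n + 1) ^ 2` of syndromes, so two words of the ball differ by a nonzero
codeword of weight at most four. -/

section Hamming

open Finset

variable {ι K : Type*} [Fintype ι] [DecidableEq K]

theorem hammingNorm_add_le [AddGroup K] (c d : ι → K) :
    hammingNorm (c + d) ≤ hammingNorm c + hammingNorm d := by
  simpa [hammingDist_eq_hammingNorm] using hammingDist_triangle (-c) 0 d

theorem hammingNorm_single_le_one [Zero K] [DecidableEq ι] (i : ι) (a : K) :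
    hammingNorm (Pi.single i a : ι → K) ≤ 1 := by
  have hsub : ({j | (Pi.single i a : ι → K) j ≠ 0} : Finset ι) ⊆ {i} := fun j hj => by
    by_contra hji
    simp_all
  exact (card_le_card hsub).trans_eq (card_singleton i)

theorem card_filter_hammingNorm_eq [DecidableEq ι] [Zero K] [Fintype K] (w : ℕ) :
    #{c : ι → K | hammingNorm c = w} =
      (Fintype.card ι).choose w * (Fintype.card K - 1) ^ w := by
  have card_support_eq (s : Finset ι) (hs : s ∈ powersetCard w univ) :
      #{c ∈ ({c | hammingNorm c = w} : Finset (ι → K)) | ({i | c i ≠ 0} : Finset ι) = s} =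
        (Fintype.card K - 1) ^ w := by
    have hw : #s = w := (mem_powersetCard.1 hs).2
    have hfiber : ({c ∈ ({c | hammingNorm c = w} : Finset (ι → K)) |
        ({i | c i ≠ 0} : Finset ι) = s}) =
        Fintype.piFinset fun i => if i ∈ s then {0}ᶜ else {0} := by
      ext c
      simp only [mem_filter, mem_univ, true_and, Fintype.mem_piFinset, hammingNorm]
      constructor
      · rintro ⟨-, rfl⟩ i
        by_cases hi : c i = 0 <;> simp [hi]
      · intro hc
        have hsupp : ({i | c i ≠ 0} : Finset ι) = s := by
          ext i
          have := hc i
          split_ifs at this <;> simp_all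
        exact ⟨hsupp ▸ hw, hsupp⟩
    rw [hfiber, Fintype.card_piFinset]
    simp [apply_ite, card_compl, hw]
  rw [card_eq_sum_card_fiberwise (t := powersetCard w univ)
    (f := fun c : ι → K => ({i | c i ≠ 0} : Finset ι)), sum_congr rfl card_support_eq]
  · simp
  · intro c hc
    simpa [mem_powersetCard, hammingNorm] using hc

theorem card_filter_hammingNorm_le [DecidableEq ι] [Zero K] [Fintype K] (t : ℕ) :
    #{c : ι → K | hammingNorm c ≤ t} =
      ∑ w ∈ range (t + 1), (Fintype.card ι).choose w * (Fintype.card K - 1) ^ w := by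
  rw [card_eq_sum_card_fiberwise (t := range (t + 1)) (f := hammingNorm)]
  · refine sum_congr rfl fun w hw => ?_
    rw [← card_filter_hammingNorm_eq, filter_filter]
    congr! 2 with c
    grind
  · intro c hc
    simpa [Nat.lt_succ_iff] using hc

theorem exists_hammingNorm_le_two_mul_of_card_lt [AddGroup K] [Fintype K] {W : Type*} [AddGroup W]
    [Fintype W] (f : (ι → K) →+ W) {t : ℕ}
    (hW : Fintype.card W <
      ∑ w ∈ range (t + 1), (Fintype.card ι).choose w * (Fintype.card K - 1) ^ w) :
    ∃ c, f c = 0 ∧ c ≠ 0 ∧ hammingNorm c ≤ 2 * t := by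
  classical
  rw [← card_filter_hammingNorm_le] at hW
  obtain ⟨c, hc, d, hd, hcd, heq⟩ :=
    exists_ne_map_eq_of_card_lt_of_maps_to hW (f := f) fun _ _ => mem_univ _
  rw [mem_filter_univ] at hc hd
  refine ⟨-c + d, by rw [map_add, map_neg, heq, neg_add_cancel], ?_, ?_⟩
  · rwa [Ne, neg_add_eq_zero]
  · have htri := hammingDist_triangle c 0 d
    rw [hammingDist_zero_right, hammingDist_zero_left, hammingDist_eq_hammingNorm] at htri
    lia

theorem eq_zero_of_smul_add_smul_add_smul_eq_zero {R W : Type*} [Ring R] [DecidableEq R]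
    [AddCommGroup W] [Module R W] {h : ι → W}
    (hmin : ∀ c, Fintype.linearCombination R h c = 0 → c ≠ 0 → 4 ≤ hammingNorm c)
    {i j k : ι} (hij : i ≠ j) (hik : i ≠ k) {r s t : R}
    (heq : r • h i + s • h j + t • h k = 0) : r = 0 := by
  classical
  let c : ι → R := Pi.single i r + Pi.single j s + Pi.single k t
  have hc : hammingNorm c ≤ 3 := by
    have := hammingNorm_add_le (Pi.single i r + Pi.single j s) (Pi.single k t)
    have := hammingNorm_add_le (Pi.single i r) (Pi.single j s)
    have := hammingNorm_single_le_one i r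
    have := hammingNorm_single_le_one j s
    have := hammingNorm_single_le_one k t
    grind
  have hc0 : c = 0 := by
    by_contra hne
    have := hmin c (by simpa [c, Fintype.linearCombination_apply_single] using heq) hne
    omega
  simpa [c, hij, hik] using congrFun hc0 i

end Hamming

section Trace

open Module

theorem finrank_eq_of_card_eq_pow {K V : Type*} [DivisionRing K] [Finite K] [AddCommGroup V]
    [Module K V] [Module.Finite K V] {m : ℕ} (h : Nat.card V = Nat.card K ^ m) :
    finrank K V = m :=
  Nat.pow_right_injective (Finite.one_lt_card (α := K))
    ((Module.natCard_eq_pow_finrank (K := K) (V := V)).symm.trans h)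

theorem linearIndependent_units_pow {L ι : Type*} [Field L] [Finite L] {e : ι → ℕ}
    (he : ∀ i j, e i ≡ e j [MOD Nat.card Lˣ] → i = j) :
    LinearIndependent L fun i (x : Lˣ) => (x : L) ^ e i := by
  let χ (i : ι) : Lˣ →* L := (Units.coeHom L).comp (powMonoidHom (e i))
  have hχ : Function.Injective χ := by
    intro i j hij
    obtain ⟨g, hg⟩ := IsCyclic.exists_ofOrder_eq_natCard (α := Lˣ)
    apply he
    rw [← hg, ← pow_eq_pow_iff_modEq]
    exact Units.ext (DFunLike.congr_fun hij g)
  exact (linearIndependent_monoidHom Lˣ L).comp χ hχ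

theorem exists_eq_sum_trace {K L κ : Type*} [Field K] [Field L] [Algebra K L]
    [FiniteDimensional K L] [Algebra.IsSeparable K L] [Fintype κ] (f : Dual K (κ → L)) :
    ∃ a : κ → L, ∀ y, f y = ∑ k, Algebra.trace K L (a k * y k) := by
  classical
  have hnd : (Algebra.traceForm K L).Nondegenerate := traceForm_nondegenerate K L
  let fk (k : κ) : Dual K L := f ∘ₗ LinearMap.single K (fun _ => L) k
  refine ⟨fun k => ((Algebra.traceForm K L).toDual hnd).symm (fk k), fun y => ?_⟩
  simp_rw [← Algebra.traceForm_apply, LinearMap.BilinForm.apply_toDual_symm_apply]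
  simp [fk, ← map_sum, Finset.univ_sum_single]

/-- The exponents `e k` have pairwise disjoint `q`-cyclotomic cosets modulo `q ^ m - 1`, each of
full size `m`; the coset of `e k` is listed as `e k * q ^ j` for `j < m`. -/
def HasDisjointFullCosets {κ : Type*} (q m : ℕ) (e : κ → ℕ) : Prop :=
  ∀ p p' : κ × Fin m,
    e p.1 * q ^ (p.2 : ℕ) ≡ e p'.1 * q ^ (p'.2 : ℕ) [MOD q ^ m - 1] → p = p'

/-- The `K`-linear code of words `c` with `∑ i, c i • β i ^ e k = 0` for all `k`. When `β` lists the
powers of a primitive element this is the cyclic code with check exponents `e`. -/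
def checkCode (K : Type*) {ι L κ : Type*} [Fintype ι] [Field K] [Field L] [Algebra K L]
    (β : ι → Lˣ) (e : κ → ℕ) : Submodule K (ι → K) :=
  LinearMap.ker (Fintype.linearCombination K fun i k => (β i : L) ^ e k)

variable {K L κ : Type*} [Field K] [Field L] [Finite L] [Algebra K L]

theorem eq_zero_of_sum_trace_eq_zero [Fintype κ] {e : κ → ℕ}
    (he : HasDisjointFullCosets (Nat.card K) (finrank K L) e) {a : κ → L}
    (ha : ∀ x : Lˣ, ∑ k, Algebra.trace K L (a k * (x : L) ^ e k) = 0) : a = 0 := by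
  have : Finite K := Finite.of_injective _ (algebraMap K L).injective
  have hcard : Nat.card Lˣ = Nat.card K ^ finrank K L - 1 := by
    rw [Nat.card_units, Module.natCard_eq_pow_finrank (K := K)]
  have hindep := linearIndependent_units_pow (L := L)
    (e := fun p : κ × Fin (finrank K L) => e p.1 * Nat.card K ^ (p.2 : ℕ)) (by rwa [hcard])
  have hcoeff := Fintype.linearIndependent_iff.1 hindep
    (fun p => a p.1 ^ Nat.card K ^ (p.2 : ℕ)) <| by
      funext x
      have hx := congrArg (algebraMap K L) (ha x)
      simpa [FiniteField.algebraMap_trace_eq_sum_pow, Finset.sum_range, Fintype.sum_prod_type,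
        mul_pow, pow_mul] using hx
  funext k
  simpa using hcoeff (k, ⟨0, finrank_pos⟩)

theorem span_range_units_pow_eq_top [Finite κ] {e : κ → ℕ}
    (he : HasDisjointFullCosets (Nat.card K) (finrank K L) e) :
    Submodule.span K (Set.range fun (x : Lˣ) k => (x : L) ^ e k) = ⊤ := by
  have := Fintype.ofFinite κ
  by_contra hne
  obtain ⟨f, hf, hker⟩ := Submodule.exists_le_ker_of_lt_top _ (lt_top_iff_ne_top.2 hne)
  obtain ⟨a, ha⟩ := exists_eq_sum_trace f
  obtain rfl : a = 0 := eq_zero_of_sum_trace_eq_zero he fun x => by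
    rw [← ha]
    exact hker (Submodule.subset_span ⟨x, rfl⟩)
  exact hf (LinearMap.ext fun y => by simp [ha])

theorem finrank_checkCode_add [Fintype κ] {ι : Type*} [Fintype ι] {β : ι → Lˣ}
    (hβ : Function.Surjective β) {e : κ → ℕ}
    (he : HasDisjointFullCosets (Nat.card K) (finrank K L) e) :
    finrank K (checkCode K β e) + Fintype.card κ * finrank K L = Fintype.card ι := by
  have hrange : LinearMap.range (Fintype.linearCombination K fun i k => (β i : L) ^ e k) = ⊤ := by
    rw [Fintype.range_linearCombination, ← span_range_units_pow_eq_top he]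
    exact congrArg _ (hβ.range_comp fun (x : Lˣ) k => (x : L) ^ e k)
  have hnullity := LinearMap.finrank_range_add_finrank_ker
    (Fintype.linearCombination K fun i k => (β i : L) ^ e k)
  rw [hrange, finrank_top, finrank_pi_fintype, finrank_fintype_fun_eq_card] at hnullity
  simp only [Finset.sum_const, Finset.card_univ, smul_eq_mul] at hnullity
  rw [checkCode, add_comm]
  exact hnullity

end Trace

section CyclotomicCosets

theorem bijective_fin_pow_of_forall_mem_zpowers {G : Type*} [Group G] [Finite G] {g : G}
    (hg : ∀ x, x ∈ Subgroup.zpowers g) {n : ℕ} (hn : Nat.card G = n) :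
    Function.Bijective fun i : Fin n => g ^ (i : ℕ) := by
  have hord : orderOf g = n := (orderOf_eq_card_of_forall_mem_zpowers hg).trans hn
  refine Function.Injective.bijective_of_nat_card_le (fun i j hij => ?_) (by simp [hn])
  exact Fin.ext (pow_injOn_Iio_orderOf (by simp [hord]) (by simp [hord]) hij)

variable {q m : ℕ}

theorem modEq_pow_of_mul_pow_modEq {v j k : ℕ} (hq : 0 < q) (hj : j ≤ m)
    (h : v * q ^ j ≡ q ^ k [MOD q ^ m - 1]) : v ≡ q ^ (k + (m - j)) [MOD q ^ m - 1] := by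
  have hone : q ^ m ≡ 1 [MOD q ^ m - 1] :=
    ((Nat.modEq_iff_dvd' (Nat.one_le_pow _ _ hq)).2 dvd_rfl).symm
  calc v ≡ v * q ^ m [MOD q ^ m - 1] := by simpa using (hone.mul_left v).symm
    _ = v * q ^ j * q ^ (m - j) := by rw [mul_assoc, ← pow_add, Nat.add_sub_cancel' hj]
    _ ≡ q ^ k * q ^ (m - j) [MOD q ^ m - 1] := h.mul_right _
    _ = q ^ (k + (m - j)) := (pow_add ..).symm

theorem pow_modEq_pow_iff {j k : ℕ} (hq : 2 ≤ q) (hj : j < m) (hk : k < m) :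
    q ^ j ≡ q ^ k [MOD q ^ m - 1] ↔ j = k := by
  refine ⟨fun h => ?_, fun h => h ▸ rfl⟩
  wlog hjk : j ≤ k generalizing j k
  · exact (this hk hj h.symm (by lia)).symm
  have hjk' : q ^ j ≤ q ^ k := Nat.pow_le_pow_right (by lia) hjk
  have hkm : q ^ k < q ^ m := Nat.pow_lt_pow_right hq hk
  have hpos : 0 < q ^ j := by positivity
  have hdvd := (Nat.modEq_iff_dvd' hjk').1 h
  have hlt : q ^ k - q ^ j < q ^ m - 1 := by lia
  exact le_antisymm hjk <| (Nat.pow_le_pow_iff_right hq).1 <|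
    Nat.sub_eq_zero_iff_le.1 (Nat.eq_zero_of_dvd_of_lt hdvd hlt)

theorem hasDisjointFullCosets_one_cons {v : ℕ} (hq : 2 ≤ q)
    (hv1 : ∀ j, ¬ v ≡ q ^ j [MOD q ^ m - 1])
    (hv2 : ∀ j k, j < m → k < m → v * q ^ j ≡ v * q ^ k [MOD q ^ m - 1] → j = k) :
    HasDisjointFullCosets q m ![1, v] := by
  rintro ⟨a, j, hj⟩ ⟨b, k, hk⟩ h
  fin_cases a <;> fin_cases b <;>
    simp only [Fin.zero_eta, Fin.mk_one, Matrix.cons_val_zero, Matrix.cons_val_one, one_mul] at h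
  · simpa using (pow_modEq_pow_iff hq hj hk).1 h
  · exact absurd (modEq_pow_of_mul_pow_modEq (by lia) hk.le h.symm) (hv1 _)
  · exact absurd (modEq_pow_of_mul_pow_modEq (by lia) hj.le h) (hv1 _)
  · simpa using hv2 j k hj hk h

theorem eq_zero_iff_eq_one_of_not_modEq_three_pow {v : ℕ} (hm : 0 < m) (hv : v ≤ 3 ^ m - 2)
    (hv1 : ∀ j : ℕ, ¬ v ≡ 3 ^ j [MOD 3 ^ m - 1])
    (hv2 : ∀ j k : ℕ, j < m → k < m → v * 3 ^ j ≡ v * 3 ^ k [MOD 3 ^ m - 1] → j = k) :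
    v = 0 ↔ m = 1 := by
  constructor
  · rintro rfl
    by_contra hm1
    exact zero_ne_one (hv2 0 1 hm (by lia) (by simp [Nat.ModEq.refl]))
  · rintro rfl
    have hv1 : v ≠ 1 := fun h => hv1 0 (by rw [h, pow_zero])
    lia

end CyclotomicCosets

section Ternary

section Field

variable {F : Type*} [Field F] {v : ℕ} {x y z : F}

theorem eq_of_add_eq_zero_of_pow_add_eq_zero
    (h2 : ∀ x : F, x ≠ 0 → (-x - 1) ^ v + x ^ v + 1 = 0 → x = 1) (hx : x ≠ 0) (hz : z ≠ 0)
    (h : x + y + z = 0) (hv : x ^ v + y ^ v + z ^ v = 0) : x = z := by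
  have hyz : -(x / z) - 1 = y / z := by
    field_simp
    linear_combination -h
  refine (div_eq_one_iff_eq hz).1 (h2 _ (div_ne_zero hx hz) ?_)
  rw [hyz, div_pow, div_pow]
  field_simp
  linear_combination hv

theorem eq_zero_of_add_eq_of_pow_add_pow_eq
    (h3 : ∀ x : F, (x + 1) ^ v - x ^ v - 1 = 0 → x = 0) (hy : y ≠ 0)
    (h : x + y = z) (hv : x ^ v + y ^ v = z ^ v) : x = 0 := by
  have hzy : x / y + 1 = z / y := by
    field_simp
    exact h
  refine (div_eq_zero_iff.1 (h3 (x / y) ?_)).resolve_right hy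
  rw [hzy, div_pow, div_pow]
  field_simp
  linear_combination -hv

end Field

variable {F : Type*} [Field F] [Algebra (ZMod 3) F] {v : ℕ}

theorem three_eq_zero_of_algebra_zmod_three (R : Type*) [Ring R] [Algebra (ZMod 3) R] :
    (3 : R) = 0 := by
  rw [← map_ofNat (algebraMap (ZMod 3) R) 3, show (OfNat.ofNat 3 : ZMod 3) = 0 from rfl, map_zero]

theorem eq_one_or_eq_neg_one_of_ne_zero {s : ZMod 3} (hs : s ≠ 0) : s = 1 ∨ s = -1 := by
  decide +revert

theorem eq_of_smul_add_smul_eq_zero (hev : Even v) {s t : ZMod 3}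
    (hs : s ≠ 0) (ht : t ≠ 0) {x y : F} (hx : x ≠ 0) (h : s • x + t • y = 0)
    (hv : s • x ^ v + t • y ^ v = 0) : x = y := by
  have h3 := three_eq_zero_of_algebra_zmod_three F
  have not_opposite (hxy : x + y = 0) (hv : x ^ v + y ^ v = 0) : x = y := by
    rw [eq_neg_of_add_eq_zero_right hxy, hev.neg_pow] at hv
    exact absurd (by linear_combination x ^ v * h3 - hv) (pow_ne_zero v hx)
  obtain rfl | rfl := eq_one_or_eq_neg_one_of_ne_zero hs <;>
    obtain rfl | rfl := eq_one_or_eq_neg_one_of_ne_zero ht <;>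
    simp only [one_smul, neg_smul] at h hv
  · exact not_opposite h hv
  · linear_combination h
  · linear_combination -h
  · exact not_opposite (by linear_combination -h) (by linear_combination -hv)

theorem eq_of_smul_add_smul_add_smul_eq_zero
    (h2 : ∀ x : F, x ≠ 0 → (-x - 1) ^ v + x ^ v + 1 = 0 → x = 1)
    (h3 : ∀ x : F, (x + 1) ^ v - x ^ v - 1 = 0 → x = 0)
    {s t u : ZMod 3} (hs : s ≠ 0) (ht : t ≠ 0) (hu : u ≠ 0) {x y z : F}
    (hx : x ≠ 0) (hy : y ≠ 0) (hz : z ≠ 0) (h : s • x + t • y + u • z = 0)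
    (hv : s • x ^ v + t • y ^ v + u • z ^ v = 0) : x = z := by
  have no_sum {x y : F} (z : F) (hx : x ≠ 0) (hy : y ≠ 0) (h : x + y = z)
      (hv : x ^ v + y ^ v = z ^ v) : False := hx (eq_zero_of_add_eq_of_pow_add_pow_eq h3 hy h hv)
  obtain rfl | rfl := eq_one_or_eq_neg_one_of_ne_zero hs <;>
    obtain rfl | rfl := eq_one_or_eq_neg_one_of_ne_zero ht <;>
    obtain rfl | rfl := eq_one_or_eq_neg_one_of_ne_zero hu <;>
    simp only [one_smul, neg_smul] at h hv
  · exact eq_of_add_eq_zero_of_pow_add_eq_zero h2 hx hz h hv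
  · exact (no_sum z hx hy (by linear_combination h) (by linear_combination hv)).elim
  · exact (no_sum y hx hz (by linear_combination h) (by linear_combination hv)).elim
  · exact (no_sum x hy hz (by linear_combination -h) (by linear_combination -hv)).elim
  · exact (no_sum x hy hz (by linear_combination h) (by linear_combination hv)).elim
  · exact (no_sum y hx hz (by linear_combination -h) (by linear_combination -hv)).elim
  · exact (no_sum z hx hy (by linear_combination -h) (by linear_combination -hv)).elim
  · exact eq_of_add_eq_zero_of_pow_add_eq_zero (y := y) h2 hx hz (by linear_combination -h)
      (by linear_combination -hv)

variable {ι : Type*} [Fintype ι] {β : ι → Fˣ}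

theorem mem_checkCode_one_cons {c : ι → ZMod 3} :
    c ∈ checkCode (ZMod 3) β ![1, v] ↔
      ∑ i, c i • (β i : F) = 0 ∧ ∑ i, c i • (β i : F) ^ v = 0 := by
  simp [checkCode, Fintype.linearCombination_apply, funext_iff, Fin.forall_fin_two]

theorem four_le_hammingNorm_of_mem_checkCode (hβ : Function.Injective β) (hev : Even v)
    (h2 : ∀ x : F, x ≠ 0 → (-x - 1) ^ v + x ^ v + 1 = 0 → x = 1)
    (h3 : ∀ x : F, (x + 1) ^ v - x ^ v - 1 = 0 → x = 0)
    {c : ι → ZMod 3} (hc : c ∈ checkCode (ZMod 3) β ![1, v]) (hc0 : c ≠ 0) :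
    4 ≤ hammingNorm c := by
  classical
  by_contra! hlt
  set S : Finset ι := {i | c i ≠ 0}
  have hcS {i} (hi : i ∈ S) : c i ≠ 0 := (Finset.mem_filter_univ i).1 hi
  have hne {i j} (hij : i ≠ j) : (β i : F) ≠ β j := Units.val_injective.ne (hβ.ne hij)
  have sum_support (f : ι → F) : ∑ i ∈ S, c i • f i = ∑ i, c i • f i :=
    Finset.sum_filter_of_ne fun _ _ h => left_ne_zero_of_smul h
  obtain ⟨h, hv⟩ := mem_checkCode_one_cons.1 hc
  rw [← sum_support] at h hv
  have hpos : 0 < S.card := hammingNorm_pos_iff.2 hc0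
  have hcard : S.card = 1 ∨ S.card = 2 ∨ S.card = 3 := by
    have : S.card < 4 := hlt
    lia
  obtain hcard | hcard | hcard := hcard
  · obtain ⟨i, hSi⟩ := Finset.card_eq_one.1 hcard
    rw [hSi] at h hcS
    simp [hcS] at h
  · obtain ⟨i, j, hij, hSij⟩ := Finset.card_eq_two.1 hcard
    rw [hSij] at h hv hcS
    rw [Finset.sum_pair hij] at h hv
    exact hne hij (eq_of_smul_add_smul_eq_zero hev (hcS (by simp)) (hcS (by simp))
      (β i).ne_zero h hv)
  · obtain ⟨i, j, k, hij, hik, hjk, hSijk⟩ := Finset.card_eq_three.1 hcard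
    rw [hSijk] at h hv hcS
    rw [Finset.sum_insert (by simp [hij, hik]), Finset.sum_pair hjk, ← add_assoc] at h hv
    exact hne hik (eq_of_smul_add_smul_add_smul_eq_zero h2 h3 (hcS (by simp)) (hcS (by simp))
      (hcS (by simp)) (β i).ne_zero (β j).ne_zero (β k).ne_zero h hv)

theorem eq_or_eq_of_four_le_hammingNorm (hβ : Function.Surjective β)
    (hmin : ∀ c ∈ checkCode (ZMod 3) β ![1, v], c ≠ 0 → 4 ≤ hammingNorm c)
    {x y z : F} (hx : x ≠ 0) (hy : y ≠ 0) (hz : z ≠ 0) (s : ZMod 3) (h : x + y + s • z = 0)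
    (hv : x ^ v + y ^ v + s • z ^ v = 0) : x = y ∨ x = z := by
  obtain ⟨i, hi⟩ := hβ (Units.mk0 x hx)
  obtain ⟨j, hj⟩ := hβ (Units.mk0 y hy)
  obtain ⟨k, hk⟩ := hβ (Units.mk0 z hz)
  by_contra! hne
  have hij : i ≠ j := by
    rintro rfl
    exact hne.1 (congrArg Units.val (hi.symm.trans hj))
  have hik : i ≠ k := by
    rintro rfl
    exact hne.2 (congrArg Units.val (hi.symm.trans hk))
  refine one_ne_zero (eq_zero_of_smul_add_smul_add_smul_eq_zero hmin hij hik
    (r := 1) (s := 1) (t := s) ?_)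
  funext a
  fin_cases a <;> simpa [hi, hj, hk]

theorem even_of_four_le_hammingNorm (hβ : Function.Surjective β)
    (hmin : ∀ c ∈ checkCode (ZMod 3) β ![1, v], c ≠ 0 → 4 ≤ hammingNorm c) : Even v := by
  have h3 := three_eq_zero_of_algebra_zmod_three F
  by_contra hodd
  rw [Nat.not_even_iff_odd] at hodd
  have hone : (1 : F) = -1 := by
    simpa using eq_or_eq_of_four_le_hammingNorm hβ hmin one_ne_zero (neg_ne_zero.2 one_ne_zero)
      (neg_ne_zero.2 one_ne_zero) 0 (by simp) (by simp [hodd.neg_pow])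
  exact one_ne_zero (α := F) (by linear_combination h3 - hone)

theorem eq_one_of_four_le_hammingNorm (hβ : Function.Surjective β)
    (hmin : ∀ c ∈ checkCode (ZMod 3) β ![1, v], c ≠ 0 → 4 ≤ hammingNorm c) (hv : v ≠ 0)
    {x : F} (hx : x ≠ 0) (h : (-x - 1) ^ v + x ^ v + 1 = 0) : x = 1 := by
  have h3 := three_eq_zero_of_algebra_zmod_three F
  have hx1 : x ≠ -1 := by
    rintro rfl
    rw [(even_of_four_le_hammingNorm hβ hmin).neg_pow, neg_neg, sub_self, zero_pow hv,
      one_pow] at h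
    exact one_ne_zero (α := F) (by linear_combination h3 - h)
  obtain hx | hx := eq_or_eq_of_four_le_hammingNorm hβ hmin hx one_ne_zero
    (z := -x - 1) (fun h0 => hx1 (by linear_combination -h0)) 1 (by simp)
    (by simp only [one_pow, one_smul]; linear_combination h)
  · exact hx
  · linear_combination x * h3 - hx

theorem eq_zero_of_four_le_hammingNorm (hβ : Function.Surjective β)
    (hmin : ∀ c ∈ checkCode (ZMod 3) β ![1, v], c ≠ 0 → 4 ≤ hammingNorm c) (hv : v ≠ 0)
    {x : F} (h : (x + 1) ^ v - x ^ v - 1 = 0) : x = 0 := by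
  have h3 := three_eq_zero_of_algebra_zmod_three F
  have hev := even_of_four_le_hammingNorm hβ hmin
  have hx1 : x ≠ -1 := by
    rintro rfl
    rw [hev.neg_pow, neg_add_cancel, zero_pow hv, one_pow] at h
    exact one_ne_zero (α := F) (by linear_combination h3 + h)
  by_contra hx
  obtain rfl | hx := eq_or_eq_of_four_le_hammingNorm hβ hmin hx one_ne_zero
    (z := x + 1) (fun h0 => hx1 (by linear_combination h0)) (-1) (by rw [neg_one_smul]; ring)
    (by simp only [one_pow, neg_smul, one_smul]; linear_combination -h)
  · rw [show (1 + 1 : F) = -1 by linear_combination h3, hev.neg_pow, one_pow] at h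
    exact one_ne_zero (α := F) (by linear_combination -h)
  · exact one_ne_zero (α := F) (by linear_combination -hx)

theorem forall_four_le_hammingNorm_iff (hβ : Function.Bijective β) (hv : v ≠ 0) :
    (∀ c ∈ checkCode (ZMod 3) β ![1, v], c ≠ 0 → 4 ≤ hammingNorm c) ↔
      Even v ∧ (∀ x : F, x ≠ 0 → ((-x - 1) ^ v + x ^ v + 1 = 0 ↔ x = 1)) ∧
        ∀ x : F, (x + 1) ^ v - x ^ v - 1 = 0 ↔ x = 0 := by
  have h3 := three_eq_zero_of_algebra_zmod_three F
  constructor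
  · intro hmin
    refine ⟨even_of_four_le_hammingNorm hβ.2 hmin, fun x hx => ⟨fun h => ?_, ?_⟩,
      fun x => ⟨fun h => ?_, ?_⟩⟩
    · exact eq_one_of_four_le_hammingNorm hβ.2 hmin hv hx h
    · rintro rfl
      rw [show (-1 - 1 : F) = 1 by linear_combination -h3, one_pow]
      linear_combination h3
    · exact eq_zero_of_four_le_hammingNorm hβ.2 hmin hv h
    · rintro rfl
      simp [hv]
  · rintro ⟨hev, hC2, hC3⟩ c hc hc0
    exact four_le_hammingNorm_of_mem_checkCode hβ.1 hev (fun x hx => (hC2 x hx).1)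
      (fun x => (hC3 x).1) hc hc0

theorem sum_range_three_choose_mul_two_pow (n : ℕ) :
    ∑ w ∈ Finset.range 3, n.choose w * 2 ^ w = 2 * n ^ 2 + 1 := by
  induction n with
  | zero => rfl
  | succ n ih =>
    simp only [Finset.sum_range_succ, Finset.range_zero, Finset.sum_empty, Nat.choose_zero_right,
      Nat.choose_one_right, Nat.choose_succ_succ', zero_add, one_add_one_eq_two] at ih ⊢
    linarith

theorem exists_mem_checkCode_hammingNorm_le_four [Fintype F] (β : ι → Fˣ) (v : ℕ)
    (hF : Fintype.card F = Fintype.card ι + 1) (hι : 3 ≤ Fintype.card ι) :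
    ∃ c ∈ checkCode (ZMod 3) β ![1, v], c ≠ 0 ∧ hammingNorm c ≤ 4 :=
  exists_hammingNorm_le_two_mul_of_card_lt (t := 2)
    (Fintype.linearCombination (ZMod 3) fun i k => (β i : F) ^ (![1, v]) k).toAddMonoidHom <| by
      rw [ZMod.card, sum_range_three_choose_mul_two_pow, Fintype.card_fun, Fintype.card_fin, hF]
      nlinarith

end Ternary

/-- Lemma of Ding–Helleseth: let `q = 3^m`, `n = q - 1`, `α` a generator
of `GF(q)*`, and `v` with `0 ≤ v ≤ n-1`, `v ∉ C₁` (`v` not congruent to any `3^j` mod `n`)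
and `|C_v| = m` (the residues `v·3^j mod n`, `0 ≤ j < m`, pairwise distinct). Then the
dual code `D` (cut out by the two check equations) has dimension `n - 2m` and minimum
nonzero Hamming weight `4` if and only if conditions C1, C2, C3 all hold. -/
theorem stmt14 {m : ℕ} (hm : 0 < m)
    {F : Type*} [Field F] [Fintype F] [Algebra (ZMod 3) F]
    (hF : Fintype.card F = 3 ^ m)
    (α : Fˣ) (hα : ∀ x : Fˣ, x ∈ Subgroup.zpowers α)
    (v : ℕ) (hv : v ≤ 3 ^ m - 2)
    (hv1 : ∀ j : ℕ, ¬ v ≡ 3 ^ j [MOD 3 ^ m - 1])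
    (hv2 : ∀ j k : ℕ, j < m → k < m → v * 3 ^ j ≡ v * 3 ^ k [MOD 3 ^ m - 1] → j = k)
    (D : Submodule (ZMod 3) (Fin (3 ^ m - 1) → ZMod 3))
    (hD : (D : Set (Fin (3 ^ m - 1) → ZMod 3)) =
        {c | (∑ i : Fin (3 ^ m - 1), algebraMap (ZMod 3) F (c i) * (α : F) ^ (i : ℕ) = 0) ∧
             (∑ i : Fin (3 ^ m - 1), algebraMap (ZMod 3) F (c i) * (α : F) ^ ((i : ℕ) * v) = 0)}) :
    (Module.finrank (ZMod 3) D = (3 ^ m - 1) - 2 * m ∧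
      (∀ c, c ∈ D → c ≠ 0 → 4 ≤ hammingNorm c) ∧
      (∃ c, c ∈ D ∧ c ≠ 0 ∧ hammingNorm c = 4)) ↔
    (Even v ∧
      (∀ x : F, x ≠ 0 → ((-x - 1) ^ v + x ^ v + 1 = 0 ↔ x = 1)) ∧
      (∀ x : F, ((x + 1) ^ v - x ^ v - 1 = 0 ↔ x = 0))) := by
  let β (i : Fin (3 ^ m - 1)) : Fˣ := α ^ (i : ℕ)
  have hβ : Function.Bijective β := bijective_fin_pow_of_forall_mem_zpowers hα <| by
    rw [Nat.card_units, Nat.card_eq_fintype_card, hF]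
  have hm1 := eq_zero_iff_eq_one_of_not_modEq_three_pow hm hv hv1 hv2
  obtain rfl : D = checkCode (ZMod 3) β ![1, v] := SetLike.coe_injective <| by
    ext c
    simp [hD, mem_checkCode_one_cons, β, Algebra.smul_def, pow_mul]
  have hfinrank : Module.finrank (ZMod 3) F = m :=
    finrank_eq_of_card_eq_pow (by rw [Nat.card_eq_fintype_card, hF, Nat.card_zmod])
  have hdim := finrank_checkCode_add hβ.2 (K := ZMod 3) (e := ![1, v]) <| by
    rw [Nat.card_zmod, hfinrank]
    exact hasDisjointFullCosets_one_cons (by lia) hv1 hv2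
  rw [Fintype.card_fin, Fintype.card_fin, hfinrank] at hdim
  constructor
  · rintro ⟨-, hmin, c, -, -, hc⟩
    refine (forall_four_le_hammingNorm_iff hβ fun hv0 => ?_).1 hmin
    have hlen := hammingNorm_le_card_fintype (x := c)
    rw [hc, Fintype.card_fin, hm1.1 hv0] at hlen
    lia
  · intro hC
    -- For `v = 0` the expression in C3 takes the value `-1` at `x = 0`, since `0 ^ 0 = 1`.
    have hv0 : v ≠ 0 := fun hv0 => by simpa [hv0] using hC.2.2 0
    have hmin := (forall_four_le_hammingNorm_iff hβ hv0).2 hC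
    have hlen : 3 ^ 2 ≤ 3 ^ m := Nat.pow_le_pow_right (by lia) (by lia)
    obtain ⟨c, hcD, hc0, hc⟩ := exists_mem_checkCode_hammingNorm_le_four β v
      (by rw [hF, Fintype.card_fin]; lia) (by rw [Fintype.card_fin]; lia)
    exact ⟨by lia, hmin, c, hcD, hc0, hc.antisymm (hmin c hcD hc0)⟩
end

section
/- Let p be an odd prime, m ≥ 3 odd, q = p^m, and h a positive integer with gcd(m,h) = 1. For (a,b) ∈ GF(q)² let c(a,b) ∈ GF(p)^{q−1} be the word with c(a,b)_i = Tr(a α^{i(p^h+1)}) + Tr(b α^{2i}) for 0 ≤ i ≤ q−2. Then the map (a,b) ↦ c(a,b) is injective (so the code C_{(p^h+1,2,p,m)} = {c(a,b)} has dimension 2m), and the number of pairs (a,b) ∈ GF(q)² with wt(c(a,b)) = w equals: 1 if w = 0; (1/2)(p^m−1)(p^{m−1}+p^{(m−1)/2}) if w = (p−1)(p^{m−1}−p^{(m−1)/2}); (p^m−1)(p^m−p^{m−1}+1) if w = (p−1)p^{m−1}; (1/2)(p^m−1)(p^{m−1}−p^{(m−1)/2}) if w = (p−1)(p^{m−1}+p^{(m−1)/2});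 and 0 for every other value of w. -/
/-!
The weight of the word of `(a, b)` is determined by the number of zeros of the quadratic form
`x ↦ Tr (a x^(p^h+1) + b x²)` on `GF(q)`, which Gauss sums express through its rank. With
`σ x = x^(p^h)`, whose fixed field is `GF(p)`, the radical of the form is the kernel of the skew
polynomial `σ(a) σ² + 2 σ(b) σ + a`, so it has dimension at most `2`. As `m` is odd, only three
weights occur for nonzero `(a, b)`, and their frequencies follow from the first two power moments,
which count the linear relations between one or two of the functionals
`(a, b) ↦ Tr (a x^(p^h+1) + b x²)`.
-/

open Module QuadraticMap

section CharacterSums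

theorem sum_units_eq_sum_sub {G₀ M : Type*} [GroupWithZero G₀] [Fintype G₀] [DecidableEq G₀]
    [AddCommGroup M] (g : G₀ → M) : ∑ t : G₀ˣ, g t = ∑ t, g t - g 0 := by
  rw [← Finset.sum_erase_eq_sub (Finset.mem_univ 0)]
  refine Finset.sum_bij (fun t _ ↦ (t : G₀)) (by simp) (fun s _ t _ h ↦ Units.ext h) ?_ (by simp)
  exact fun t ht ↦ ⟨Units.mk0 t (Finset.ne_of_mem_erase ht), Finset.mem_univ _, rfl⟩

theorem addChar_sum {A M ι : Type*} [AddCommMonoid A] [CommMonoid M] (ψ : AddChar A M)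
    (s : Finset ι) (a : ι → A) : ψ (∑ i ∈ s, a i) = ∏ i ∈ s, ψ (a i) :=
  map_prod ψ.toMonoidHom (fun i ↦ Multiplicative.ofAdd (a i)) s

theorem primitiveChar_to_Complex_ne_one (K : Type*) [Field K] [Finite K] :
    AddChar.FiniteField.primitiveChar_to_Complex K ≠ 1 := by
  simpa using AddChar.FiniteField.primitiveChar_to_Complex_isPrimitive K one_ne_zero

variable {K R : Type*} [Field K] [CommRing R] [IsDomain R] {ψ : AddChar K R}

theorem sum_addChar_dual {V : Type*} [AddCommGroup V] [Module K V] [Fintype V] (hψ : ψ ≠ 1)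
    (f : Dual K V) [Decidable (f = 0)] :
    ∑ v, ψ (f v) = if f = 0 then (Fintype.card V : R) else 0 := by
  split_ifs with hf
  · simp [hf]
  · obtain ⟨y, hy⟩ := AddChar.ne_one_iff.mp hψ
    obtain ⟨v, rfl⟩ := f.surjective hf y
    exact AddChar.sum_eq_zero_of_ne_one (ψ := ψ.compAddMonoidHom f.toAddMonoidHom)
      (AddChar.ne_one_iff.mpr ⟨v, hy⟩)

variable [Fintype K] [DecidableEq K]

/-- The excess `|K| * N - |X|`, where `N` is the number of zeros of `f : X → K`. It measures how far
`f` is from taking the value `0` as often as a uniformly distributed function would. -/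
def zeroExcess {X : Type*} [Fintype X] (f : X → K) : ℤ :=
  Fintype.card K * Fintype.card {x // f x = 0} - Fintype.card X

theorem zeroExcess_zero {X : Type*} [Fintype X] :
    zeroExcess (fun _ : X ↦ (0 : K)) = (Fintype.card K - 1) * Fintype.card X := by
  simp [zeroExcess, sub_mul]

theorem card_mul_card_ne_zero {X : Type*} [Fintype X] (f : X → K) :
    (Fintype.card K * Fintype.card {x // f x ≠ 0} : ℤ) =
      (Fintype.card K - 1) * Fintype.card X - zeroExcess f := by
  rw [zeroExcess, Fintype.card_subtype_compl, Nat.cast_sub (Fintype.card_subtype_le _)]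
  ring

theorem cast_zeroExcess (hψ : ψ ≠ 1) {X : Type*} [Fintype X] (f : X → K) :
    (zeroExcess f : R) = ∑ t : Kˣ, ∑ x, ψ (t * f x) := by
  have sum_units (b : K) :
      ∑ t : Kˣ, ψ (t * b) = (if b = 0 then (Fintype.card K : R) else 0) - 1 := by
    rw [sum_units_eq_sum_sub fun t ↦ ψ (t * b),
      AddChar.sum_mulShift b (AddChar.IsPrimitive.of_ne_one hψ)]
    simp
  rw [Finset.sum_comm]
  simp only [sum_units, Finset.sum_sub_distrib, Finset.sum_ite, Finset.sum_const, zeroExcess,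
    Fintype.card_subtype]
  simp [mul_comm]

end CharacterSums

section PowerMoments

variable {K V X : Type*} [Field K] [Fintype K] [DecidableEq K] [AddCommGroup V] [Module K V]
  [Fintype V] [Fintype X]

theorem sum_zeroExcess_pow [DecidableEq (Dual K V)] (ℓ : X → Dual K V) (n : ℕ) :
    ∑ v, zeroExcess (fun x ↦ ℓ x v) ^ n =
      Fintype.card V *
        Fintype.card {z : Fin n → Kˣ × X // ∑ i, (z i).1 • ℓ (z i).2 = 0} := by
  have hψ := primitiveChar_to_Complex_ne_one K
  set ψ := AddChar.FiniteField.primitiveChar_to_Complex K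
  have expand (v : V) : (zeroExcess (fun x ↦ ℓ x v) : ℂ) ^ n =
      ∑ z : Fin n → Kˣ × X, ψ ((∑ i, (z i).1 • ℓ (z i).2) v) := by
    rw [cast_zeroExcess hψ, ← Fintype.sum_prod_type', Fintype.sum_pow]
    refine Finset.sum_congr rfl fun z _ ↦ ?_
    simp [LinearMap.sum_apply, addChar_sum, Units.smul_def]
  have : (∑ v, (zeroExcess (fun x ↦ ℓ x v) : ℂ) ^ n) = Fintype.card V *
        Fintype.card {z : Fin n → Kˣ × X // ∑ i, (z i).1 • ℓ (z i).2 = 0} := by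
    simp_rw [expand]
    rw [Finset.sum_comm]
    simp_rw [sum_addChar_dual hψ]
    simp [Finset.sum_ite, Fintype.card_subtype, mul_comm]
  exact_mod_cast this

end PowerMoments

section QuadraticForms

variable {K R : Type*} [Field K] [Fintype K] [DecidableEq K] [CommRing R] [IsDomain R]
  {ψ : AddChar K R}

theorem sum_addChar_mul_sq (hK : ringChar K ≠ 2) (hψ : ψ ≠ 1) {a : K} (ha : a ≠ 0) :
    ∑ x, ψ (a * x ^ 2) = quadraticChar K a *
      gaussSum ((quadraticChar K).ringHomComp (Int.castRingHom R)) ψ := by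
  have card_sqrt (s : K) : ((Finset.univ.filter fun x : K ↦ x ^ 2 = s).card : R) =
      quadraticChar K s + 1 := by
    have := quadraticChar_card_sqrts hK s
    rw [Set.toFinset_ofPred] at this
    exact_mod_cast congrArg (Int.cast : ℤ → R) this
  have sum_eq_zero : ∑ s, ψ (a * s) = 0 :=
    AddChar.sum_eq_zero_of_ne_one (AddChar.IsPrimitive.of_ne_one hψ ha)
  calc ∑ x, ψ (a * x ^ 2)
      = ∑ s, ∑ x with x ^ 2 = s, ψ (a * x ^ 2) := (Finset.sum_fiberwise ..).symm
    _ = ∑ s, (quadraticChar K s + 1) * ψ (a * s) := by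
      refine Finset.sum_congr rfl fun s _ ↦ ?_
      rw [Finset.sum_congr rfl (g := fun _ ↦ ψ (a * s)) (by simp +contextual), Finset.sum_const,
        nsmul_eq_mul, card_sqrt]
    _ = gaussSum ((quadraticChar K).ringHomComp (Int.castRingHom R)) (ψ.mulShift a) := by
      simp [add_mul, Finset.sum_add_distrib, sum_eq_zero, gaussSum]
    _ = _ := by
      have mulShift := gaussSum_mulShift_eq
        ((quadraticChar K).ringHomComp (Int.castRingHom R)) ψ (Units.mk0 a ha)
      rw [((quadraticChar_isQuadratic K).comp _).inv] at mulShift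
      simpa using mulShift

variable {ι : Type*} [Fintype ι] [DecidableEq ι]

theorem sum_addChar_weightedSumSquares (hK : ringChar K ≠ 2) (hψ : ψ ≠ 1) (w : ι → K) (t : Kˣ) :
    ∑ v, ψ (t * weightedSumSquares K w v) =
      Fintype.card K ^ Fintype.card {i // w i = 0} *
        (∏ i : {i // w i ≠ 0}, quadraticChar K (w i)) *
        (quadraticChar K t * gaussSum ((quadraticChar K).ringHomComp (Int.castRingHom R)) ψ) ^
          Fintype.card {i // w i ≠ 0} := by
  set G := gaussSum ((quadraticChar K).ringHomComp (Int.castRingHom R)) ψ with hG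
  have factor (i : ι) : ∑ x, ψ (t * (w i * x ^ 2)) =
      if w i = 0 then (Fintype.card K : R)
      else quadraticChar K (w i) * (quadraticChar K t * G) := by
    split_ifs with hi
    · simp [hi]
    · simp_rw [← mul_assoc]
      rw [sum_addChar_mul_sq hK hψ (mul_ne_zero t.ne_zero hi), map_mul, Int.cast_mul, ← hG]
      ring
  calc ∑ v, ψ (t * weightedSumSquares K w v)
      = ∑ v : ι → K, ∏ i, ψ (t * (w i * v i ^ 2)) := by
        simp [weightedSumSquares_apply, Finset.mul_sum, addChar_sum, pow_two]
    _ = ∏ i, ∑ x, ψ (t * (w i * x ^ 2)) := by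
        rw [Finset.prod_univ_sum, Fintype.piFinset_univ]
    _ = _ := by
        simp_rw [factor]
        rw [Finset.prod_ite, Finset.prod_const, Finset.prod_mul_distrib, Finset.prod_const,
          Finset.prod_subtype (p := fun i ↦ w i ≠ 0) _ (by simp), Fintype.card_subtype,
          Fintype.card_subtype, Int.cast_prod, mul_assoc]

theorem cast_zeroExcess_weightedSumSquares (hK : ringChar K ≠ 2) (hψ : ψ ≠ 1) (w : ι → K) :
    (zeroExcess (weightedSumSquares K w) : R) =
      Fintype.card K ^ Fintype.card {i // w i = 0} *
        (∏ i : {i // w i ≠ 0}, quadraticChar K (w i)) *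
        gaussSum ((quadraticChar K).ringHomComp (Int.castRingHom R)) ψ ^
          Fintype.card {i // w i ≠ 0} *
        ∑ t : Kˣ, (quadraticChar K t : R) ^ Fintype.card {i // w i ≠ 0} := by
  simp_rw [cast_zeroExcess hψ, sum_addChar_weightedSumSquares hK hψ, mul_pow, Finset.mul_sum]
  exact Finset.sum_congr rfl fun t _ ↦ by ring

theorem zeroExcess_weightedSumSquares_of_odd (hK : ringChar K ≠ 2) {w : ι → K}
    (hw : Odd (Fintype.card {i // w i ≠ 0})) : zeroExcess (weightedSumSquares K w) = 0 := by
  have hψ := primitiveChar_to_Complex_ne_one K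
  have sum_units : ∑ t : Kˣ, (quadraticChar K t : ℂ) ^ Fintype.card {i // w i ≠ 0} = 0 := by
    have (t : Kˣ) : quadraticChar K t ^ Fintype.card {i // w i ≠ 0} = quadraticChar K t := by
      rcases quadraticChar_dichotomy t.ne_zero with ht | ht <;> rw [ht]
      exacts [one_pow _, hw.neg_one_pow]
    norm_cast
    simp_rw [this]
    rw [sum_units_eq_sum_sub, quadraticChar_sum_zero hK, quadraticChar_zero, sub_zero]
  have := cast_zeroExcess_weightedSumSquares hK hψ w
  rw [sum_units, mul_zero] at this
  exact_mod_cast this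

theorem zeroExcess_weightedSumSquares_of_even (hK : ringChar K ≠ 2) {w : ι → K} {k : ℕ}
    (hw : Fintype.card {i // w i ≠ 0} = 2 * k) : ∃ ε : ℤˣ, zeroExcess (weightedSumSquares K w) =
      ε * (Fintype.card K - 1) * Fintype.card K ^ (Fintype.card {i // w i = 0} + k) := by
  have hψ := primitiveChar_to_Complex_ne_one K
  set ψ := AddChar.FiniteField.primitiveChar_to_Complex K
  have isUnit_char {a : K} (ha : a ≠ 0) : IsUnit (quadraticChar K a) :=
    Int.isUnit_iff.mpr (quadraticChar_dichotomy ha)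
  have sum_units : ∑ t : Kˣ, (quadraticChar K t : ℂ) ^ (2 * k) = Fintype.card K - 1 := by
    have (t : Kˣ) : quadraticChar K t ^ (2 * k) = 1 := by
      rw [pow_mul, quadraticChar_sq_one t.ne_zero, one_pow]
    simp_rw [← Int.cast_pow, this]
    simp [Fintype.card_units, Nat.cast_sub Fintype.card_pos]
  have gauss_sq : gaussSum ((quadraticChar K).ringHomComp (Int.castRingHom ℂ)) ψ ^ (2 * k) =
      quadraticChar K (-1) ^ k * Fintype.card K ^ k := by
    rw [pow_mul, gaussSum_sq ((MulChar.ringHomComp_ne_one_iff Int.cast_injective).mpr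
      (quadraticChar_ne_one hK)) ((quadraticChar_isQuadratic K).comp _)
      (AddChar.IsPrimitive.of_ne_one hψ), mul_pow]
    simp
  obtain ⟨ε, hε⟩ : IsUnit
      ((∏ i : {i // w i ≠ 0}, quadraticChar K (w i)) * quadraticChar K (-1) ^ k) :=
    (IsUnit.prod_univ_iff.mpr fun i ↦ isUnit_char i.2).mul
      ((isUnit_char (neg_ne_zero.mpr one_ne_zero)).pow k)
  refine ⟨ε, ?_⟩
  have := cast_zeroExcess_weightedSumSquares hK hψ w
  rw [hw, sum_units, gauss_sq] at this
  rw [hε, ← Int.cast_inj (α := ℂ), this]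
  push_cast
  ring

theorem zeroExcess_comp_equiv {X Y : Type*} [Fintype X] [Fintype Y] (e : X ≃ Y) (f : Y → K) :
    zeroExcess (f ∘ e) = zeroExcess f := by
  have card_zeros : Fintype.card {x // f (e x) = 0} = Fintype.card {y // f y = 0} :=
    Fintype.card_congr (e.subtypeEquiv fun _ ↦ Iff.rfl)
  simp [zeroExcess, card_zeros, Fintype.card_congr e]

variable {V : Type*} [AddCommGroup V] [Module K V] [Fintype V]

theorem exists_weightedSumSquares_zeroExcess_eq (hK : ringChar K ≠ 2) (Q : QuadraticForm K V) :
    ∃ w : Fin (finrank K V) → K, zeroExcess Q = zeroExcess (weightedSumSquares K w) ∧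
      Fintype.card {i // w i = 0} = finrank K Q.radical := by
  have two_ne_zero : (2 : K) ≠ 0 := Ring.two_ne_zero hK
  have : NeZero (2 : K) := ⟨two_ne_zero⟩
  have := invertibleOfNonzero two_ne_zero
  obtain ⟨w, ⟨e⟩⟩ := QuadraticForm.equivalent_weightedSumSquares Q
  refine ⟨w, ?_, ?_⟩
  · rw [← zeroExcess_comp_equiv e.toEquiv]
    exact congrArg zeroExcess (funext fun v ↦ (e.map_app v).symm)
  · rw [QuadraticForm.finrank_radical_of_equiv_weightedSumSquares ⟨e⟩, ← Nat.card_eq_fintype_card]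
    rfl

theorem zeroExcess_eq_zero_of_odd (hK : ringChar K ≠ 2) {Q : QuadraticForm K V}
    (hQ : Odd (finrank K V - finrank K Q.radical)) : zeroExcess Q = 0 := by
  obtain ⟨w, zeroExcess_eq, card_zero⟩ := exists_weightedSumSquares_zeroExcess_eq hK Q
  rw [zeroExcess_eq]
  apply zeroExcess_weightedSumSquares_of_odd hK
  rwa [Fintype.card_subtype_compl, Fintype.card_fin, card_zero]

theorem exists_zeroExcess_eq_of_even (hK : ringChar K ≠ 2) {Q : QuadraticForm K V} {k : ℕ}
    (hQ : finrank K V - finrank K Q.radical = 2 * k) :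
    ∃ ε : ℤˣ, zeroExcess Q =
      ε * (Fintype.card K - 1) * Fintype.card K ^ (finrank K Q.radical + k) := by
  obtain ⟨w, zeroExcess_eq, card_zero⟩ := exists_weightedSumSquares_zeroExcess_eq hK Q
  rw [zeroExcess_eq, ← card_zero]
  apply zeroExcess_weightedSumSquares_of_even hK
  rwa [Fintype.card_subtype_compl, Fintype.card_fin, card_zero]

end QuadraticForms

section SkewOperators

theorem finrank_le_finrank_map_add_finrank_ker {K V W : Type*} [DivisionRing K] [AddCommGroup V]
    [Module K V] [AddCommGroup W] [Module K W] [FiniteDimensional K V] (f : V →ₗ[K] W)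
    (S : Submodule K V) : finrank K S ≤ finrank K (S.map f) + finrank K f.ker := by
  rw [← LinearMap.range_domRestrict, ← (f.domRestrict S).finrank_range_add_finrank_ker]
  gcongr
  rw [LinearMap.ker_domRestrict, ← Submodule.finrank_map_subtype_eq]
  exact Submodule.finrank_mono (Submodule.map_comap_le _ _)

variable {K F : Type*} [Field K] [Field F] [Algebra K F]

/-- The operator `∑_{i ≤ d} c i σ^i`, the action on `F` of the skew polynomial of degree at most `d`
in `σ` with coefficients `c`. -/
def skewOperator (σ : F →ₐ[K] F) (c : ℕ → F) (d : ℕ) : F →ₗ[K] F :=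
  ∑ i ∈ Finset.range (d + 1), LinearMap.mulLeft K (c i) ∘ₗ (σ ^ i).toLinearMap

theorem skewOperator_apply (σ : F →ₐ[K] F) (c : ℕ → F) (d : ℕ) (x : F) :
    skewOperator σ c d x = ∑ i ∈ Finset.range (d + 1), c i * (σ ^ i) x := by
  simp [skewOperator, LinearMap.sum_apply]

-- Summation by parts: the kernel element `x` lets one divide by `σ - 1` on the right.
theorem skewOperator_mul_eq {σ : F →ₐ[K] F} {c : ℕ → F} {d : ℕ} {x : F}
    (hx : skewOperator σ c (d + 1) x = 0) (u : F) :
    skewOperator σ c (d + 1) (u * x) =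
      skewOperator σ (fun i ↦ -skewOperator σ c i x) d (σ u - u) := by
  have parts := Finset.sum_range_by_parts (fun i ↦ (σ ^ i) u) (fun i ↦ c i * (σ ^ i) x) (d + 2)
  simp only [smul_eq_mul, ← skewOperator_apply, Nat.add_one_sub_one, hx, mul_zero, zero_sub]
    at parts
  have : skewOperator σ c (d + 1) (u * x) =
      ∑ i ∈ Finset.range (d + 2), (σ ^ i) u * (c i * (σ ^ i) x) := by
    rw [skewOperator_apply]
    exact Finset.sum_congr rfl fun i _ ↦ by rw [map_mul]; ring
  rw [this, parts, skewOperator_apply, ← Finset.sum_neg_distrib]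
  refine Finset.sum_congr rfl fun i _ ↦ ?_
  rw [pow_succ, AlgHom.mul_apply, map_sub]
  ring

theorem finrank_ker_skewOperator_le [FiniteDimensional K F] {σ : F →ₐ[K] F}
    (hσ : ∀ x, σ x = x → x ∈ Set.range (algebraMap K F)) {c : ℕ → F} {d : ℕ} (hc : c d ≠ 0) :
    finrank K (skewOperator σ c d).ker ≤ d := by
  induction d generalizing c with
  | zero =>
    have ker_eq_bot : (skewOperator σ c 0).ker = ⊥ :=
      LinearMap.ker_eq_bot'.mpr fun x hx ↦ by simpa [skewOperator_apply, hc] using hx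
    rw [ker_eq_bot, finrank_bot]
  | succ d ih =>
    by_cases h_bot : (skewOperator σ c (d + 1)).ker = ⊥
    · rw [h_bot, finrank_bot]
      exact Nat.zero_le _
    obtain ⟨x, hx, hx0⟩ := Submodule.exists_mem_ne_zero_of_ne_bot h_bot
    rw [LinearMap.mem_ker] at hx
    let e : ℕ → F := fun i ↦ -skewOperator σ c i x
    have he : e d ≠ 0 := by
      have : c (d + 1) * (σ ^ (d + 1)) x = e d := by
        rw [skewOperator_apply, Finset.sum_range_succ, ← skewOperator_apply, add_comm] at hx
        exact eq_neg_of_add_eq_zero_left hx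
      rw [← this]
      exact mul_ne_zero hc ((map_ne_zero _).mpr hx0)
    let δ : F →ₗ[K] F := (σ.toLinearMap - LinearMap.id) ∘ₗ LinearMap.mulRight K x⁻¹
    have δ_mem : ∀ z ∈ (skewOperator σ c (d + 1)).ker, δ z ∈ (skewOperator σ e d).ker := by
      intro z hz
      have := skewOperator_mul_eq hx (z * x⁻¹)
      rw [inv_mul_cancel_right₀ hx0, LinearMap.mem_ker.mp hz] at this
      exact this.symm
    have ker_δ_le : δ.ker ≤ K ∙ x := by
      intro z hz
      obtain ⟨t, ht⟩ := hσ (z * x⁻¹) (sub_eq_zero.mp hz)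
      exact Submodule.mem_span_singleton.mpr
        ⟨t, by rw [Algebra.smul_def, ht, inv_mul_cancel_right₀ hx0]⟩
    calc finrank K (skewOperator σ c (d + 1)).ker
        ≤ finrank K ((skewOperator σ c (d + 1)).ker.map δ) + finrank K δ.ker :=
          finrank_le_finrank_map_add_finrank_ker ..
      _ ≤ finrank K (skewOperator σ e d).ker + finrank K (K ∙ x) :=
          add_le_add (Submodule.finrank_mono (Submodule.map_le_iff_le_comap.mpr δ_mem))
            (Submodule.finrank_mono ker_δ_le)
      _ ≤ d + 1 := add_le_add (ih he) (finrank_span_singleton hx0).le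

end SkewOperators

section TwistedTraceForm

variable {K F : Type*} [Field K] [Field F] [Algebra K F]

/-- The bilinear form `(x, y) ↦ Tr ((a σ x + b x) y)` attached to `v = (a, b)`; its quadratic form
`x ↦ Tr (a σ(x) x + b x²)` lists the coordinates of the codeword of `v`. -/
noncomputable def twistedTraceForm (σ : F ≃ₐ[K] F) (v : F × F) : LinearMap.BilinForm K F :=
  Algebra.traceForm K F ∘ₗ
    (LinearMap.mulLeft K v.1 ∘ₗ σ.toLinearMap + LinearMap.mulLeft K v.2)

/-- The coordinate at `x` of the codeword of `(a, b)`, as a functional of `(a, b)`. -/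
noncomputable def codeCoord (σ : F ≃ₐ[K] F) (x : F) : Dual K (F × F) :=
  (Algebra.traceForm K F (σ x * x)).coprod (Algebra.traceForm K F (x * x))

/-- The coefficients of the skew polynomial `σ(a) σ² + 2 σ(b) σ + a`, which describes the polar form
of `x ↦ Tr (a σ(x) x + b x²)`. -/
def polarCoeff (σ : F ≃ₐ[K] F) (v : F × F) : ℕ → F
  | 0 => v.1
  | 1 => 2 * σ v.2
  | _ => σ v.1

theorem codeCoord_apply (σ : F ≃ₐ[K] F) (x : F) (v : F × F) :
    codeCoord σ x v = Algebra.trace K F (v.1 * (σ x * x)) + Algebra.trace K F (v.2 * (x * x)) := by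
  simp [codeCoord, Algebra.traceForm_apply, mul_comm]

theorem twistedTraceForm_toQuadraticMap (σ : F ≃ₐ[K] F) (v : F × F) :
    ⇑(twistedTraceForm σ v).toQuadraticMap = fun x ↦ codeCoord σ x v := by
  ext x
  simp [twistedTraceForm, codeCoord_apply, Algebra.traceForm_apply, mul_assoc]

theorem polar_twistedTraceForm [FiniteDimensional K F] (σ : F ≃ₐ[K] F) (v : F × F) (x y : F) :
    polar (twistedTraceForm σ v).toQuadraticMap x y =
      Algebra.traceForm K F (skewOperator (σ : F →ₐ[K] F) (polarCoeff σ v) 2 x) (σ y) := by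
  obtain ⟨a, b⟩ := v
  calc polar (twistedTraceForm σ (a, b)).toQuadraticMap x y
      = Algebra.trace K F (a * σ x * y + 2 * b * x * y) + Algebra.trace K F (a * x * σ y) := by
        simp only [LinearMap.BilinMap.polar_toQuadraticMap, twistedTraceForm, ← map_add,
          LinearMap.comp_apply, LinearMap.add_apply, LinearMap.mulLeft_apply,
          Algebra.traceForm_apply, AlgEquiv.toLinearMap_apply]
        ring_nf
    _ = Algebra.trace K F (σ (a * σ x * y + 2 * b * x * y)) + Algebra.trace K F (a * x * σ y) := by
        rw [Algebra.trace_eq_of_algEquiv σ]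
    _ = _ := by
        have eval_skew : skewOperator (σ : F →ₐ[K] F) (polarCoeff σ (a, b)) 2 x =
            a * x + 2 * σ b * σ x + σ a * σ (σ x) := by
          simp [skewOperator_apply, Finset.sum_range_succ, polarCoeff]
        rw [← map_add, Algebra.traceForm_apply, eval_skew]
        congr 1
        simp only [map_add, map_mul, map_ofNat]
        ring

variable [FiniteDimensional K F] [Algebra.IsSeparable K F]

theorem radical_twistedTraceForm_le (σ : F ≃ₐ[K] F) (v : F × F) :
    (twistedTraceForm σ v).toQuadraticMap.radical ≤
      (skewOperator (σ : F →ₐ[K] F) (polarCoeff σ v) 2).ker := by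
  intro x hx
  have hx := radical_le_ker_polarBilin hx
  refine (traceForm_nondegenerate K F).1 _ fun y ↦ ?_
  rw [← σ.apply_symm_apply y, ← polar_twistedTraceForm]
  exact LinearMap.congr_fun hx (σ.symm y)

theorem finrank_radical_twistedTraceForm_le_two (h2 : (2 : F) ≠ 0) {σ : F ≃ₐ[K] F}
    (hσ : ∀ x, σ x = x → x ∈ Set.range (algebraMap K F)) {v : F × F} (hv : v ≠ 0) :
    finrank K (twistedTraceForm σ v).toQuadraticMap.radical ≤ 2 := by
  refine (Submodule.finrank_mono (radical_twistedTraceForm_le σ v)).trans ?_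
  by_cases ha : v.1 = 0
  · have hb : v.2 ≠ 0 := fun hb ↦ hv (Prod.ext ha hb)
    have drop_top : skewOperator (σ : F →ₐ[K] F) (polarCoeff σ v) 2 =
        skewOperator (σ : F →ₐ[K] F) (polarCoeff σ v) 1 := by
      ext x
      simp [skewOperator_apply, Finset.sum_range_succ, polarCoeff, ha]
    rw [drop_top]
    exact (finrank_ker_skewOperator_le hσ (by simp [polarCoeff, h2, hb])).trans
      one_le_two
  · exact finrank_ker_skewOperator_le hσ (by simp [polarCoeff, ha])

theorem sum_smul_codeCoord_eq_zero_iff (σ : F ≃ₐ[K] F) {ι : Type*} [Fintype ι] (t : ι → K)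
    (x : ι → F) : ∑ i, t i • codeCoord σ (x i) = 0 ↔
      ∑ i, t i • (σ (x i) * x i) = 0 ∧ ∑ i, t i • (x i * x i) = 0 := by
  have traceForm_eq_zero {y : F} : Algebra.traceForm K F y = 0 ↔ y = 0 :=
    ⟨fun h ↦ (traceForm_nondegenerate K F).1 y fun z ↦ LinearMap.congr_fun h z, fun h ↦ by simp [h]⟩
  have collect : ∑ i, t i • codeCoord σ (x i) =
      (Algebra.traceForm K F (∑ i, t i • (σ (x i) * x i))).coprod
        (Algebra.traceForm K F (∑ i, t i • (x i * x i))) := by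
    ext <;> simp [codeCoord, LinearMap.sum_apply]
  rw [collect, LinearMap.prod_ext_iff, LinearMap.coprod_inl, LinearMap.coprod_inr,
    LinearMap.zero_comp, LinearMap.zero_comp, traceForm_eq_zero, traceForm_eq_zero]

end TwistedTraceForm

section WeightMoments

variable {K F : Type*} [Field K] [Field F] [Algebra K F]

theorem smul_map_mul_self_add_eq_zero_and_iff {σ : F ≃ₐ[K] F}
    (hσ : ∀ x, σ x = x → x ∈ Set.range (algebraMap K F)) {t s : Kˣ} {x y : F} (hx : x ≠ 0) :
    (t • (σ x * x) + s • (σ y * y) = 0 ∧ t • (x * x) + s • (y * y) = 0) ↔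
      ∃ u : Kˣ, t = -(s * u ^ 2) ∧ y = u • x := by
  simp only [Units.smul_def, Algebra.smul_def]
  constructor
  · rintro ⟨h₁, h₂⟩
    have hs : algebraMap K F s ≠ 0 := by simp
    have hy : y ≠ 0 := by
      rintro rfl
      simp [hx] at h₂
    have fixed : σ (y / x) = y / x := by
      have : algebraMap K F s * y * (σ y * x - y * σ x) = 0 := by
        linear_combination x * h₁ - σ x * h₂
      have := (mul_eq_zero.mp this).resolve_left (mul_ne_zero hs hy)
      rw [map_div₀, div_eq_div_iff ((map_ne_zero σ).mpr hx) hx, sub_eq_zero.mp this]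
    obtain ⟨u, hu⟩ := hσ _ fixed
    have hyx : y = algebraMap K F u * x := by rw [hu, div_mul_cancel₀ _ hx]
    have hu0 : u ≠ 0 := by
      rintro rfl
      exact hy (by rw [hyx, map_zero, zero_mul])
    refine ⟨Units.mk0 u hu0, Units.ext ((algebraMap K F).injective ?_), hyx⟩
    refine mul_right_cancel₀ (mul_ne_zero hx hx) ?_
    rw [hyx] at h₂
    simp only [Units.val_neg, Units.val_mul, Units.val_pow_eq_pow_val, Units.val_mk0,
      map_neg, map_mul, map_pow]
    linear_combination h₂
  · rintro ⟨u, rfl, rfl⟩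
    constructor <;>
      simp only [Units.val_neg, Units.val_mul, Units.val_pow_eq_pow_val, map_neg, map_mul, map_pow,
        AlgEquiv.commutes] <;>
      ring

theorem smul_codeCoord_add_eq_zero_iff [FiniteDimensional K F] [Algebra.IsSeparable K F]
    {σ : F ≃ₐ[K] F} (hσ : ∀ x, σ x = x → x ∈ Set.range (algebraMap K F)) (t s : Kˣ) (x y : F) :
    t • codeCoord σ x + s • codeCoord σ y = 0 ↔
      x = 0 ∧ y = 0 ∨ x ≠ 0 ∧ ∃ u : Kˣ, t = -(s * u ^ 2) ∧ y = u • x := by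
  have split : t • codeCoord σ x + s • codeCoord σ y = 0 ↔
      t • (σ x * x) + s • (σ y * y) = 0 ∧ t • (x * x) + s • (y * y) = 0 := by
    simpa [Units.smul_def] using sum_smul_codeCoord_eq_zero_iff σ ![(t : K), s] ![x, y]
  rw [split]
  by_cases hx : x = 0
  · simp +contextual [hx, smul_eq_zero_iff_eq]
  · simp [hx, smul_map_mul_self_add_eq_zero_and_iff hσ hx]

variable [Fintype K] [DecidableEq K] [Fintype F]

theorem zeroExcess_codeCoord {σ : F ≃ₐ[K] F}
    (hσ : ∀ x, σ x = x → x ∈ Set.range (algebraMap K F)) (hK : ringChar K ≠ 2) {k : ℕ}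
    (hk : finrank K F = 2 * k + 1) {v : F × F} (hv : v ≠ 0) :
    zeroExcess (fun x ↦ codeCoord σ x v) = 0 ∨ ∃ ε : ℤˣ, zeroExcess (fun x ↦ codeCoord σ x v) =
      ε * ((Fintype.card K - 1) * Fintype.card K ^ (k + 1)) := by
  have h2 : (2 : F) ≠ 0 := Ring.two_ne_zero (by rwa [← Algebra.ringChar_eq K F])
  have rank_le_two := finrank_radical_twistedTraceForm_le_two h2 hσ hv
  rw [← twistedTraceForm_toQuadraticMap]
  set Q := (twistedTraceForm σ v).toQuadraticMap
  have rank_le : finrank K Q.radical ≤ 2 * k + 1 := hk ▸ Submodule.finrank_le _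
  obtain h_one | h_even : finrank K Q.radical = 1 ∨ Even (finrank K Q.radical) := by
    interval_cases finrank K Q.radical <;> simp
  · right
    obtain ⟨ε, hε⟩ := exists_zeroExcess_eq_of_even hK (Q := Q) (k := k) (by omega)
    exact ⟨ε, by rw [hε, h_one]; ring⟩
  · left
    apply zeroExcess_eq_zero_of_odd hK
    rw [hk, Nat.odd_sub rank_le]
    exact iff_of_true (by simp) h_even

theorem card_codeCoord_relations_one [DecidableEq (Dual K (F × F))] (σ : F ≃ₐ[K] F) :
    Fintype.card {z : Fin 1 → Kˣ × F // ∑ i, (z i).1 • codeCoord σ (z i).2 = 0} =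
      Fintype.card K - 1 := by
  classical
  let param : Kˣ → Fin 1 → Kˣ × F := fun t _ ↦ (t, 0)
  have param_injective : Function.Injective param := fun t s h ↦ congrArg Prod.fst (congrFun h 0)
  have mem_range (z : Fin 1 → Kˣ × F) :
      ∑ i, (z i).1 • codeCoord σ (z i).2 = 0 ↔ z ∈ Set.range param := by
    simp only [Units.smul_def, sum_smul_codeCoord_eq_zero_iff]
    constructor
    · rintro ⟨-, h⟩
      have : (z 0).2 = 0 := by simpa using h
      exact ⟨(z 0).1, funext fun i ↦ by rw [Fin.fin_one_eq_zero i]; exact Prod.ext rfl this.symm⟩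
    · rintro ⟨t, rfl⟩
      simp [param]
  rw [Fintype.card_congr (Equiv.subtypeEquivRight mem_range),
    ← Fintype.card_units, ← Set.card_range_of_injective param_injective]

theorem card_codeCoord_relations_two [DecidableEq (Dual K (F × F))] {σ : F ≃ₐ[K] F}
    (hσ : ∀ x, σ x = x → x ∈ Set.range (algebraMap K F)) :
    Fintype.card {z : Fin 2 → Kˣ × F // ∑ i, (z i).1 • codeCoord σ (z i).2 = 0} =
      (Fintype.card K - 1) ^ 2 * Fintype.card F := by
  classical
  let param : Kˣ × Kˣ × F → Fin 2 → Kˣ × F := fun (s, u, x) ↦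
    if x = 0 then ![(u, 0), (s, 0)] else ![(-(s * u ^ 2), x), (s, u • x)]
  have param_injective : Function.Injective param := by
    have param_fst (z) : (param z 1).1 = z.1 := by simp only [param]; split_ifs <;> rfl
    have param_snd (z) : (param z 0).2 = z.2.2 := by
      simp only [param]
      split_ifs with hx
      exacts [hx.symm, rfl]
    rintro ⟨s, u, x⟩ ⟨s', u', x'⟩ h
    obtain rfl : s = s' := by simpa only [param_fst] using congrArg Prod.fst (congrFun h 1)
    obtain rfl : x = x' := by simpa only [param_snd] using congrArg Prod.snd (congrFun h 0)
    by_cases hx : x = 0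
    · simpa [param, hx] using congrArg Prod.fst (congrFun h 0)
    · have : u • x = u' • x := by simpa [param, hx] using congrArg Prod.snd (congrFun h 1)
      rw [Units.ext (smul_left_injective K hx this)]
  have mem_range (z : Fin 2 → Kˣ × F) :
      ∑ i, (z i).1 • codeCoord σ (z i).2 = 0 ↔ z ∈ Set.range param := by
    rw [Fin.sum_univ_two, smul_codeCoord_add_eq_zero_iff hσ]
    constructor
    · rintro (⟨hx, hy⟩ | ⟨hx, u, ht, hy⟩)
      · exact ⟨((z 1).1, (z 0).1, 0), by ext i <;> fin_cases i <;> simp [param, hx, hy]⟩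
      · exact ⟨((z 1).1, u, (z 0).2), by ext i <;> fin_cases i <;> simp [param, hx, hy, ht]⟩
    · rintro ⟨⟨s, u, x⟩, rfl⟩
      by_cases hx : x = 0
      · simp [param, hx]
      · exact Or.inr (by simpa [param, hx] using ⟨u, rfl, rfl⟩)
  rw [Fintype.card_congr (Equiv.subtypeEquivRight mem_range), ← Fintype.card_units, pow_two,
    mul_assoc, ← Fintype.card_prod, ← Fintype.card_prod,
    ← Set.card_range_of_injective param_injective]

theorem sum_zeroExcess_codeCoord (σ : F ≃ₐ[K] F) :
    ∑ v, zeroExcess (fun x ↦ codeCoord σ x v) = (Fintype.card K - 1) * Fintype.card F ^ 2 := by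
  classical
  have := sum_zeroExcess_pow (codeCoord σ) 1
  simp only [pow_one] at this
  rw [this, card_codeCoord_relations_one, Fintype.card_prod]
  push_cast [Fintype.card_pos (α := K), Nat.one_le_iff_ne_zero]
  ring

theorem sum_zeroExcess_codeCoord_sq {σ : F ≃ₐ[K] F}
    (hσ : ∀ x, σ x = x → x ∈ Set.range (algebraMap K F)) :
    ∑ v, zeroExcess (fun x ↦ codeCoord σ x v) ^ 2 =
      (Fintype.card K - 1) ^ 2 * Fintype.card F ^ 3 := by
  classical
  rw [sum_zeroExcess_pow, card_codeCoord_relations_two hσ, Fintype.card_prod]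
  push_cast [Fintype.card_pos (α := K)]
  ring

end WeightMoments

theorem card_filter_eq_of_moments {ι : Type*} {s : Finset ι} {E : ι → ℤ} {D A B : ℤ} (hD : D ≠ 0)
    (hE : ∀ i ∈ s, E i = 0 ∨ ∃ ε : ℤˣ, E i = ε * D) (h₁ : ∑ i ∈ s, E i = D * A)
    (h₂ : ∑ i ∈ s, E i ^ 2 = D ^ 2 * B) :
    (s.card - {i ∈ s | E i = 0}.card : ℤ) = B ∧
      ∀ ε : ℤˣ, (2 * {i ∈ s | E i = ε * D}.card : ℤ) = B + ε * A := by
  have hD2 : D ^ 2 ≠ 0 := pow_ne_zero 2 hD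
  have card_eq (e : ℤ) : ({i ∈ s | E i = e}.card : ℤ) = ∑ i ∈ s, if E i = e then 1 else 0 := by
    simp
  constructor
  · apply mul_left_cancel₀ hD2
    rw [← h₂, card_eq, Finset.card_eq_sum_ones, Nat.cast_sum, ← Finset.sum_sub_distrib,
      Finset.mul_sum]
    refine Finset.sum_congr rfl fun i hi ↦ ?_
    obtain h | ⟨ε, h⟩ := hE i hi
    · simp [h]
    · simp [h, hD, mul_pow, ← Units.val_pow_eq_pow_val]
  · intro ε
    apply mul_left_cancel₀ hD2
    calc D ^ 2 * (2 * ({i ∈ s | E i = ε * D}.card : ℤ))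
        = ∑ i ∈ s, (E i ^ 2 + ε * D * E i) := by
          rw [card_eq, Finset.mul_sum, Finset.mul_sum]
          refine Finset.sum_congr rfl fun i hi ↦ ?_
          obtain h | ⟨η, h⟩ := hE i hi
          · simp [h, hD, eq_comm]
          · obtain rfl | rfl := Int.units_eq_one_or η <;>
              obtain rfl | rfl := Int.units_eq_one_or ε <;>
              simp [h, hD, self_eq_neg, neg_eq_self] <;> ring
      _ = D ^ 2 * (B + ε * A) := by
          rw [Finset.sum_add_distrib, ← Finset.mul_sum, h₁, h₂]
          ring

section WeightDistribution

variable {K F : Type*} [Field K] [Field F] [Algebra K F] [DecidableEq K] [Fintype F]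
  {σ : F ≃ₐ[K] F} {k : ℕ}

/-- The Hamming weight of the codeword of `v`, whose coordinates are indexed by all of `F` instead
of `Fˣ`; this changes nothing, as the coordinate at `0` vanishes. -/
noncomputable def codeWeight (σ : F ≃ₐ[K] F) (v : F × F) : ℕ :=
  Fintype.card {x // codeCoord σ x v ≠ 0}

theorem codeWeight_zero (σ : F ≃ₐ[K] F) : codeWeight σ 0 = 0 := by
  simp [codeWeight]

theorem codeWeight_eq_iff [Fintype K] (hk : finrank K F = 2 * k + 1) (v : F × F) {w e : ℤ}
    (hw : w = (Fintype.card K - 1) * (Fintype.card K ^ (2 * k) - e * Fintype.card K ^ k)) :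
    codeWeight σ v = w ↔ zeroExcess (fun x ↦ codeCoord σ x v) =
      e * ((Fintype.card K - 1) * Fintype.card K ^ (k + 1)) := by
  have card_mul_weight := card_mul_card_ne_zero fun x ↦ codeCoord σ x v
  rw [← codeWeight, Module.card_eq_pow_finrank (K := K) (V := F), hk] at card_mul_weight
  push_cast at card_mul_weight
  have hq : (Fintype.card K : ℤ) ≠ 0 := by simp
  subst hw
  constructor
  · intro h
    rw [h] at card_mul_weight
    linear_combination card_mul_weight
  · intro h
    apply mul_left_cancel₀ hq
    rw [card_mul_weight, h]
    ring

theorem codeWeight_of_ne_zero [Fintype K]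
    (hσ : ∀ x, σ x = x → x ∈ Set.range (algebraMap K F)) (hK : ringChar K ≠ 2)
    (hk : finrank K F = 2 * k + 1) {v : F × F} (hv : v ≠ 0) :
    (codeWeight σ v : ℤ) = (Fintype.card K - 1) * Fintype.card K ^ (2 * k) ∨
    ∃ ε : ℤˣ, (codeWeight σ v : ℤ) =
      (Fintype.card K - 1) * (Fintype.card K ^ (2 * k) - ε * Fintype.card K ^ k) := by
  refine (zeroExcess_codeCoord hσ hK hk hv).imp (fun h ↦ ?_) (Exists.imp fun ε h ↦ ?_)
  · exact (codeWeight_eq_iff hk v (e := 0) (by ring)).mpr (by simpa using h)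
  · exact (codeWeight_eq_iff hk v rfl).mpr h

theorem codeWeight_eq_zero_iff
    (hσ : ∀ x, σ x = x → x ∈ Set.range (algebraMap K F)) (hK : ringChar K ≠ 2)
    (hk : finrank K F = 2 * k + 1) (hk0 : k ≠ 0) (v : F × F) :
    codeWeight σ v = 0 ↔ v = 0 := by
  have := Fintype.ofInjective _ (algebraMap K F).injective
  refine ⟨fun h ↦ ?_, fun h ↦ h ▸ codeWeight_zero σ⟩
  by_contra hv
  have hq : (1 : ℤ) < Fintype.card K := mod_cast Fintype.one_lt_card
  have hP : (1 : ℤ) < Fintype.card K ^ k := one_lt_pow₀ hq hk0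
  have hq1 : (Fintype.card K : ℤ) - 1 ≠ 0 := by omega
  have := codeWeight_of_ne_zero hσ hK hk hv
  simp only [h, Nat.cast_zero, zero_eq_mul, hq1, false_or, pow_mul', pow_two] at this
  obtain h | ⟨ε, h⟩ := this
  · nlinarith
  · obtain rfl | rfl := Int.units_eq_one_or ε <;> norm_num at h <;> nlinarith

variable [Fintype K]

theorem card_zeroExcess_codeCoord_eq [DecidableEq F]
    (hσ : ∀ x, σ x = x → x ∈ Set.range (algebraMap K F)) (hK : ringChar K ≠ 2)
    (hk : finrank K F = 2 * k + 1) :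
    ((Finset.univ.erase (0 : F × F)).card -
        {v ∈ Finset.univ.erase (0 : F × F) | zeroExcess (fun x ↦ codeCoord σ x v) = 0}.card : ℤ) =
        (Fintype.card F - 1) * Fintype.card K ^ (2 * k) ∧
      ∀ ε : ℤˣ, (2 * {v ∈ Finset.univ.erase (0 : F × F) | zeroExcess (fun x ↦ codeCoord σ x v) =
          ε * ((Fintype.card K - 1) * Fintype.card K ^ (k + 1))}.card : ℤ) =
        (Fintype.card F - 1) * Fintype.card K ^ (2 * k) +
          ε * ((Fintype.card F - 1) * Fintype.card K ^ k) := by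
  have hq : (Fintype.card K : ℤ) - 1 ≠ 0 := by
    have : 1 < Fintype.card K := Fintype.one_lt_card
    omega
  apply card_filter_eq_of_moments (mul_ne_zero hq (by simp))
    (fun v hv ↦ zeroExcess_codeCoord hσ hK hk (Finset.ne_of_mem_erase hv))
  all_goals
    rw [Finset.sum_erase_eq_sub (Finset.mem_univ _)]
    simp only [sum_zeroExcess_codeCoord, sum_zeroExcess_codeCoord_sq hσ, map_zero, zeroExcess_zero,
      Module.card_eq_pow_finrank (K := K) (V := F), hk]
    push_cast
    ring

theorem ncard_codeWeight_eq [DecidableEq F] (hk : finrank K F = 2 * k + 1) {w : ℕ}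
    (hw0 : w ≠ 0) {e : ℤ} (hw : (w : ℤ) =
      (Fintype.card K - 1) * (Fintype.card K ^ (2 * k) - e * Fintype.card K ^ k)) :
    {v | codeWeight σ v = w}.ncard =
      {v ∈ Finset.univ.erase (0 : F × F) | zeroExcess (fun x ↦ codeCoord σ x v) =
          e * ((Fintype.card K - 1) * Fintype.card K ^ (k + 1))}.card := by
  rw [← Set.ncard_coe_finset]
  congr 1
  ext v
  simp only [Set.mem_ofPred_eq, Finset.coe_filter, Finset.mem_erase, Finset.mem_univ, and_true,
    ← codeWeight_eq_iff hk v hw, Nat.cast_inj, iff_and_self]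
  rintro rfl rfl
  exact hw0 (codeWeight_zero σ)

theorem ncard_codeWeight_eq_of_unit
    (hσ : ∀ x, σ x = x → x ∈ Set.range (algebraMap K F)) (hK : ringChar K ≠ 2)
    (hk : finrank K F = 2 * k + 1) {w : ℕ} (hw0 : w ≠ 0) (ε : ℤˣ)
    (hw : (w : ℤ) =
      (Fintype.card K - 1) * (Fintype.card K ^ (2 * k) - ε * Fintype.card K ^ k)) :
    (2 * {v | codeWeight σ v = w}.ncard : ℤ) =
      (Fintype.card F - 1) * (Fintype.card K ^ (2 * k) + ε * Fintype.card K ^ k) := by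
  classical
  rw [ncard_codeWeight_eq hk hw0 hw, (card_zeroExcess_codeCoord_eq hσ hK hk).2 ε]
  ring

theorem ncard_codeWeight_eq_of_middle
    (hσ : ∀ x, σ x = x → x ∈ Set.range (algebraMap K F)) (hK : ringChar K ≠ 2)
    (hk : finrank K F = 2 * k + 1) {w : ℕ} (hw0 : w ≠ 0)
    (hw : (w : ℤ) = (Fintype.card K - 1) * Fintype.card K ^ (2 * k)) :
    ({v | codeWeight σ v = w}.ncard : ℤ) =
      (Fintype.card F - 1) * (Fintype.card F - Fintype.card K ^ (2 * k) + 1) := by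
  classical
  have card_zero := (card_zeroExcess_codeCoord_eq hσ hK hk).1
  rw [Finset.card_erase_of_mem (Finset.mem_univ _), Finset.card_univ, Fintype.card_prod,
    Nat.cast_sub (Nat.mul_pos Fintype.card_pos Fintype.card_pos)] at card_zero
  push_cast at card_zero
  rw [ncard_codeWeight_eq hk hw0 (e := 0) (by rw [hw]; ring), zero_mul]
  linear_combination -card_zero

theorem ncard_codeWeight
    (hσ : ∀ x, σ x = x → x ∈ Set.range (algebraMap K F)) (hK : ringChar K ≠ 2)
    (hk : finrank K F = 2 * k + 1) (hk0 : k ≠ 0) (w : ℕ) :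
    {v | codeWeight σ v = w}.ncard =
      if w = 0 then 1
      else if w = (Fintype.card K - 1) * (Fintype.card K ^ (2 * k) - Fintype.card K ^ k) then
        (Fintype.card F - 1) * (Fintype.card K ^ (2 * k) + Fintype.card K ^ k) / 2
      else if w = (Fintype.card K - 1) * Fintype.card K ^ (2 * k) then
        (Fintype.card F - 1) * (Fintype.card F - Fintype.card K ^ (2 * k) + 1)
      else if w = (Fintype.card K - 1) * (Fintype.card K ^ (2 * k) + Fintype.card K ^ k) then
        (Fintype.card F - 1) * (Fintype.card K ^ (2 * k) - Fintype.card K ^ k) / 2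
      else 0 := by
  have hq : 1 ≤ Fintype.card K := Fintype.card_pos
  have hF : 1 ≤ Fintype.card F := Fintype.card_pos
  have hP : Fintype.card K ^ k ≤ Fintype.card K ^ (2 * k) := Nat.pow_le_pow_right hq (by omega)
  have hPF : Fintype.card K ^ (2 * k) ≤ Fintype.card F := by
    rw [Module.card_eq_pow_finrank (K := K) (V := F), hk]
    exact Nat.pow_le_pow_right hq (by omega)
  have weight_zero_iff (v) := codeWeight_eq_zero_iff hσ hK hk hk0 v
  split_ifs with h0 h_low h_mid h_high
  · simp [h0, weight_zero_iff]
  · refine (Nat.div_eq_of_eq_mul_right two_pos (Nat.cast_injective (R := ℤ) ?_)).symm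
    have := ncard_codeWeight_eq_of_unit hσ hK hk h0 1 (by rw [h_low]; push_cast [hq, hP]; ring)
    push_cast [hF]
    simp [this]
  · apply Nat.cast_injective (R := ℤ)
    push_cast [hF, hPF]
    exact ncard_codeWeight_eq_of_middle hσ hK hk h0 (by rw [h_mid]; push_cast [hq]; rfl)
  · refine (Nat.div_eq_of_eq_mul_right two_pos (Nat.cast_injective (R := ℤ) ?_)).symm
    have := ncard_codeWeight_eq_of_unit hσ hK hk h0 (-1) (by rw [h_high]; push_cast [hq]; ring)
    push_cast [hF, hP]
    rw [this]
    push_cast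
    ring
  · rw [Set.ncard_eq_zero, Set.eq_empty_iff_forall_notMem]
    rintro v rfl
    obtain h | ⟨ε, h⟩ := codeWeight_of_ne_zero hσ hK hk (mt (weight_zero_iff v).mpr h0)
    · exact h_mid (by zify [hq]; exact h)
    · obtain rfl | rfl := Int.units_eq_one_or ε
      · exact h_low (by zify [hq, hP]; simpa using h)
      · exact h_high (by zify [hq]; simpa using h)

end WeightDistribution

theorem hammingNorm_comp_generator_pow {G₀ M : Type*} [GroupWithZero G₀] [Fintype G₀] [Zero M]
    [DecidableEq M] {α : G₀ˣ} (hα : ∀ x, x ∈ Subgroup.zpowers α) {n : ℕ}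
    (hn : Fintype.card G₀ - 1 = n) {f : G₀ → M} (hf : f 0 = 0) :
    hammingNorm (fun i : Fin n ↦ f ((α : G₀) ^ (i : ℕ))) = Fintype.card {x // f x ≠ 0} := by
  classical
  have order : orderOf α = n := by
    rw [orderOf_eq_card_of_forall_mem_zpowers hα, Nat.card_eq_fintype_card, Fintype.card_units, hn]
  rw [hammingNorm, Fintype.card_subtype]
  refine Finset.card_bij (fun i _ ↦ (α : G₀) ^ (i : ℕ)) (by simp) (fun i _ j _ hij ↦ ?_) ?_
  · have : α ^ (i : ℕ) = α ^ (j : ℕ) := Units.ext (by simpa using hij)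
    exact Fin.ext (pow_injOn_Iio_orderOf (by simp [order]) (by simp [order]) this)
  · intro x hx
    have hfx : f x ≠ 0 := (Finset.mem_filter.mp hx).2
    have hx0 : x ≠ 0 := by
      rintro rfl
      exact hfx hf
    obtain ⟨i, hi, hix⟩ :=
      Finset.mem_image.mp (mem_zpowers_iff_mem_range_orderOf.mp (hα (Units.mk0 x hx0)))
    have : (α : G₀) ^ i = x := by simpa using congrArg Units.val hix
    exact ⟨⟨i, order ▸ Finset.mem_range.mp hi⟩, by simp [this, hfx], this⟩

theorem mem_range_algebraMap_of_frobenius_pow_fixed {K F : Type*} [Field K] [Fintype K] [Field F]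
    [Finite F] [Algebra K F] {h : ℕ} (hh : h.Coprime (finrank K F)) {x : F}
    (hx : (FiniteField.frobeniusAlgEquivOfAlgebraic K F ^ h) x = x) :
    x ∈ Set.range (algebraMap K F) := by
  set φ := FiniteField.frobeniusAlgEquivOfAlgebraic K F
  have fixed : φ ∈ MulAction.stabilizer Gal(F/K) x := by
    refine Subgroup.zpowers_le.mpr (MulAction.mem_stabilizer_iff.mpr hx) ?_
    rwa [mem_zpowers_pow_iff, FiniteField.orderOf_frobeniusAlgEquivOfAlgebraic]
  rw [IsGalois.mem_range_algebraMap_iff_fixed]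
  intro g
  obtain ⟨n, rfl⟩ := (FiniteField.bijective_frobeniusAlgEquivOfAlgebraic_pow K F).surjective g
  exact MulAction.mem_stabilizer_iff.mp (pow_mem fixed n)

theorem ringChar_ne_two_of_odd_card {K : Type*} [Field K] [Fintype K] (hK : Odd (Fintype.card K)) :
    ringChar K ≠ 2 := by
  rw [Ne, FiniteField.even_card_iff_char_two, ← Nat.even_iff]
  exact Nat.not_even_iff_odd.mpr hK

theorem frobenius_pow_codeCoord_apply {K F : Type*} [Field K] [Fintype K] [Field F] [Finite F]
    [Algebra K F] (h : ℕ) (α : F) (i : ℕ) (v : F × F) :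
    codeCoord (FiniteField.frobeniusAlgEquivOfAlgebraic K F ^ h) (α ^ i) v =
      Algebra.trace K F (v.1 * α ^ (i * (Fintype.card K ^ h + 1))) +
        Algebra.trace K F (v.2 * α ^ (i * 2)) := by
  rw [codeCoord_apply, AlgEquiv.coe_pow, FiniteField.coe_frobeniusAlgEquivOfAlgebraic_iterate,
    ← pow_succ, ← pow_mul, ← pow_two, ← pow_mul]

theorem stmt15_general {K : Type*} [Field K] [Fintype K] [DecidableEq K] {q : ℕ}
    (hK : Fintype.card K = q) (hq : Odd q) {m : ℕ} (hm : Odd m) (hm3 : 3 ≤ m)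
    {h : ℕ} (hmh : Nat.gcd m h = 1)
    {F : Type*} [Field F] [Fintype F] [Algebra K F] (hF : Fintype.card F = q ^ m)
    (α : Fˣ) (hα : ∀ x : Fˣ, x ∈ Subgroup.zpowers α)
    (c : F × F → Fin (q ^ m - 1) → K)
    (hc : c = fun (ab : F × F) (i : Fin (q ^ m - 1)) =>
      Algebra.trace K F (ab.1 * (α : F) ^ ((i : ℕ) * (q ^ h + 1))) +
        Algebra.trace K F (ab.2 * (α : F) ^ ((i : ℕ) * 2))) :
    Function.Injective c ∧
    ∀ w : ℕ,
      {ab : F × F | hammingNorm (c ab) = w}.ncard =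
        if w = 0 then 1
        else if w = (q - 1) * (q ^ (m - 1) - q ^ ((m - 1) / 2)) then
          (q ^ m - 1) * (q ^ (m - 1) + q ^ ((m - 1) / 2)) / 2
        else if w = (q - 1) * q ^ (m - 1) then
          (q ^ m - 1) * (q ^ m - q ^ (m - 1) + 1)
        else if w = (q - 1) * (q ^ (m - 1) + q ^ ((m - 1) / 2)) then
          (q ^ m - 1) * (q ^ (m - 1) - q ^ ((m - 1) / 2)) / 2
        else 0 := by
  subst hK
  obtain ⟨k, rfl⟩ := hm
  have char_ne_two := ringChar_ne_two_of_odd_card hq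
  have degree : finrank K F = 2 * k + 1 :=
    Nat.pow_right_injective Fintype.one_lt_card (Module.card_eq_pow_finrank.symm.trans hF)
  set σ := FiniteField.frobeniusAlgEquivOfAlgebraic K F ^ h
  have fixed (x : F) (hx : σ x = x) : x ∈ Set.range (algebraMap K F) :=
    mem_range_algebraMap_of_frobenius_pow_fixed (by rwa [degree, Nat.coprime_comm]) hx
  let encode : F × F →ₗ[K] Fin (Fintype.card K ^ (2 * k + 1) - 1) → K :=
    LinearMap.pi fun i ↦ codeCoord σ ((α : F) ^ (i : ℕ))
  obtain rfl : c = encode := by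
    ext v i
    exact (congrFun (congrFun hc v) i).trans (frobenius_pow_codeCoord_apply h (α : F) i v).symm
  have weight (v : F × F) : hammingNorm (encode v) = codeWeight σ v :=
    hammingNorm_comp_generator_pow hα (by rw [hF]) (f := fun x ↦ codeCoord σ x v)
      (by simp [codeCoord])
  constructor
  · refine (injective_iff_map_eq_zero _).mpr fun v hv ↦ ?_
    rw [← codeWeight_eq_zero_iff fixed char_ne_two degree (by omega), ← weight, hv,
      hammingNorm_zero]
  · intro w
    have half : 2 * k / 2 = k := Nat.mul_div_cancel_left k two_pos
    simp only [weight, ncard_codeWeight fixed char_ne_two degree (by omega : k ≠ 0), hF,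
      Nat.add_sub_cancel, half]

/-- Feng–Luo: for `p` an odd prime, `m ≥ 3` odd, `gcd(m,h) = 1`, the map
`(a,b) ↦ c(a,b)` with `c(a,b)_i = Tr(a α^{i(p^h+1)}) + Tr(b α^{2i})` is injective (so the
code `C_{(p^h+1,2,p,m)}` has dimension `2m`), and its weight distribution is given by
Table II. -/
theorem stmt15 {p : ℕ} [Fact p.Prime] (hp : Odd p)
    {m : ℕ} (hm : Odd m) (hm3 : 3 ≤ m)
    {h : ℕ} (hh : 0 < h) (hmh : Nat.gcd m h = 1)
    {F : Type*} [Field F] [Fintype F] [Algebra (ZMod p) F]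
    (hF : Fintype.card F = p ^ m)
    (α : Fˣ) (hα : ∀ x : Fˣ, x ∈ Subgroup.zpowers α)
    (c : F × F → Fin (p ^ m - 1) → ZMod p)
    (hc : c = fun (ab : F × F) (i : Fin (p ^ m - 1)) =>
      Algebra.trace (ZMod p) F (ab.1 * (α : F) ^ ((i : ℕ) * (p ^ h + 1))) +
        Algebra.trace (ZMod p) F (ab.2 * (α : F) ^ ((i : ℕ) * 2))) :
    Function.Injective c ∧
    ∀ w : ℕ,
      {ab : F × F | hammingNorm (c ab) = w}.ncard =
        if w = 0 then 1
        else if w = (p - 1) * (p ^ (m - 1) - p ^ ((m - 1) / 2)) then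
          (p ^ m - 1) * (p ^ (m - 1) + p ^ ((m - 1) / 2)) / 2
        else if w = (p - 1) * p ^ (m - 1) then
          (p ^ m - 1) * (p ^ m - p ^ (m - 1) + 1)
        else if w = (p - 1) * (p ^ (m - 1) + p ^ ((m - 1) / 2)) then
          (p ^ m - 1) * (p ^ (m - 1) - p ^ ((m - 1) / 2)) / 2
        else 0 :=
  stmt15_general (ZMod.card p) hp hm hm3 hmh hF α hα c hc
end

section
/- Let m ≥ 3 be odd, q = 3^m, and let h be a positive integer such that h divides m+1 and (m+1)/h is even. Set v = (3^{m+1}−1)/(3^h+1) + (3^m−1)/2 (an integer). Then the number of pairs (a,b) ∈ GF(q)² such that wt(c(a,b)) = w equals: 1 if w = 0; (1/2)(3^m−1)(3^{m−1}+3^{(m−1)/2}) if w = 2(3^{m−1}−3^{(m−1)/2}); (3^m−1)(3^m−3^{m−1}+1) if w = 2·3^{m−1}; (1/2)(3^m−1)(3^{m−1}−3^{(m−1)/2}) if w = 2(3^{m−1}+3^{(m−1)/2}); and 0 for every other value of w. -/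
/-!
The weight of a codeword is determined by the real part of the cubic character sum of its
coordinates. In terms of `f x = Tr (a * x) + Tr (b * x ^ v)` this is a character sum over the whole
field; doubled, it is an integer `T (a, b)`.

As `(3 ^ h + 1) * v` is congruent to `2` modulo `q - 1`, a bijective substitution
`x = ± y ^ (3 ^ h + 1)` turns `f` into the quadratic form `Tr (a * y ^ (3 ^ h + 1) + b * y ^ 2)`.
Its radical is annihilated by a `σ`-difference operator of order `2`, where `σ x = x ^ 3 ^ h` fixes
only `𝔽₃`, and hence has dimension at most `2` unless `a = b = 0`. The character sum of a quadratic
form has norm `q * #radical` in `ℤ[ω]`, where `3` is ramified, so `T (a, b)` is `0` or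
`± 2 * 3 ^ ((m + 1) / 2)`. The number of pairs at which each value occurs now follows from the sums
of `1`, `T` and `T ^ 2`, which are computed by orthogonality of characters.
-/

section CyclicCode

open Finset Module

universe u

section CubicCharacter

/-- `2 cos (2πt/3)`, that is, twice the real part of the additive character `ω ^ t` of `𝔽₃`. The
factor `2` makes all values integers. -/
def cubicCos (t : ZMod 3) : ℤ := if t = 0 then 2 else -1

/-- `(2 / √3) sin (2πt/3)`, that is, the imaginary part of the additive character `ω ^ t` of `𝔽₃`,
scaled so as to be integer valued. -/
def cubicSin (t : ZMod 3) : ℤ := if t = 0 then 0 else if t = 1 then 1 else -1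

lemma cubicCos_neg : ∀ t, cubicCos (-t) = cubicCos t := by decide

lemma cubicCos_of_ne_zero {t : ZMod 3} (ht : t ≠ 0) : cubicCos t = -1 := if_neg ht

lemma cubicCos_mul_cubicCos :
    ∀ s t, cubicCos s * cubicCos t = cubicCos (s + t) + cubicCos (s - t) := by
  decide

lemma two_mul_cubicCos_sub :
    ∀ s t, 2 * cubicCos (s - t) = cubicCos s * cubicCos t + 3 * (cubicSin s * cubicSin t) := by
  decide

lemma sum_cubicCos_eq_sub_hammingNorm {ι : Type*} [Fintype ι] (f : ι → ZMod 3) :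
    ∑ i, cubicCos (f i) = 2 * Fintype.card ι - 3 * hammingNorm f := by
  have cubicCos_eq : ∀ t, cubicCos t = 2 - 3 * (if t ≠ 0 then 1 else 0) := by decide
  simp only [cubicCos_eq, sum_sub_distrib, ← mul_sum, sum_boole, hammingNorm, sum_const, card_univ,
    nsmul_eq_mul, mul_comm]

lemma sum_cubicCos_add_apply_eq_zero {G : Type*} [AddGroup G] [Fintype G] {l : G →+ ZMod 3}
    (hl : l ≠ 0) (c : ZMod 3) : ∑ y, cubicCos (c + l y) = 0 := by
  obtain ⟨d, hd⟩ : ∃ d, l d ≠ 0 := DFunLike.exists_ne hl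
  have sum_add : ∑ y, cubicCos (c + l y + l d) = ∑ y, cubicCos (c + l y) := by
    rw [← Equiv.sum_comp (Equiv.addRight d) fun y ↦ cubicCos (c + l y)]
    simp [add_assoc]
  have sum_sub : ∑ y, cubicCos (c + l y - l d) = ∑ y, cubicCos (c + l y) := by
    rw [← Equiv.sum_comp (Equiv.subRight d) fun y ↦ cubicCos (c + l y)]
    simp [add_sub_assoc]
  have key : (∑ y, cubicCos (c + l y)) * cubicCos (l d) = 2 * ∑ y, cubicCos (c + l y) := by
    simp only [sum_mul, cubicCos_mul_cubicCos, sum_add_distrib, sum_add, sum_sub, two_mul]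
  rw [cubicCos_of_ne_zero hd] at key
  linarith

end CubicCharacter

section QuadraticForm

lemma even_sum_of_neg_eq {G : Type*} [AddGroup G] [Fintype G] (hG : ∀ x : G, -x = x → x = 0)
    {f : G → ℤ} (hf0 : f 0 = 0) (hf : ∀ x, f (-x) = f x) : Even (∑ x, f x) := by
  rw [← ZMod.intCast_eq_zero_iff_even, Int.cast_sum]
  refine sum_ninvolution (fun x ↦ -x) (fun x ↦ ?_) (fun x hx hneg ↦ hx ?_) (fun x ↦ mem_univ _)
    neg_neg
  · rw [hf, CharTwo.add_self_eq_zero]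
  · rw [hG x hneg, hf0, Int.cast_zero]

lemma eq_zero_of_sq_add_three_mul_sq_eq_nine_pow {X Y : ℤ} {k : ℕ}
    (h : X ^ 2 + 3 * Y ^ 2 = 9 ^ k) : Y = 0 := by
  induction k generalizing X Y with
  | zero =>
    by_contra hY
    have : 0 < Y ^ 2 := by positivity
    nlinarith [sq_nonneg X]
  | succ k ih =>
    rw [pow_succ (9 : ℤ)] at h
    obtain ⟨Z, rfl⟩ : 3 ∣ X := Int.prime_three.dvd_of_dvd_pow (n := 2) ⟨3 * 9 ^ k - Y ^ 2, by
      linarith⟩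
    obtain ⟨W, rfl⟩ : 3 ∣ Y := Int.prime_three.dvd_of_dvd_pow (n := 2) ⟨9 ^ k - Z ^ 2, by
      linarith⟩
    rw [ih (X := Z) (Y := W) (by linarith), mul_zero]

lemma eq_zero_of_sq_add_three_mul_sq_eq_three_mul_nine_pow {X Y : ℤ} {k : ℕ}
    (h : X ^ 2 + 3 * Y ^ 2 = 3 * 9 ^ k) : X = 0 := by
  obtain ⟨Z, rfl⟩ : 3 ∣ X := Int.prime_three.dvd_of_dvd_pow (n := 2) ⟨9 ^ k - Y ^ 2, by
    linear_combination h⟩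
  rw [eq_zero_of_sq_add_three_mul_sq_eq_nine_pow (X := Y) (Y := Z) (k := k) (by
    linarith), mul_zero]

variable {V : Type*} [AddCommGroup V] [Module (ZMod 3) V] [Fintype V]

lemma sum_cubicCos_apply_add_polar (Q : QuadraticForm (ZMod 3) V) [DecidablePred (· ∈ Q.radical)]
    (z : V) :
    ∑ y, cubicCos (Q z + Q.polarBilin z y) =
      if z ∈ Q.radical then 2 * (Fintype.card V : ℤ) else 0 := by
  split_ifs with hz
  · simp [hz.1, hz.2, cubicCos, mul_comm]
  · have : Invertible (2 : ZMod 3) := ⟨2, by decide, by decide⟩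
    rw [QuadraticMap.radical_eq_ker_polarBilin, LinearMap.mem_ker] at hz
    refine sum_cubicCos_add_apply_eq_zero (l := (Q.polarBilin z).toAddMonoidHom) (fun h ↦ hz ?_) _
    exact LinearMap.toAddMonoidHom_injective h

lemma sum_cubicCos_sq_add_three_mul_sum_cubicSin_sq (Q : QuadraticForm (ZMod 3) V) :
    (∑ y, cubicCos (Q y)) ^ 2 + 3 * (∑ y, cubicSin (Q y)) ^ 2 =
      4 * Fintype.card V * Nat.card Q.radical := by
  classical
  calc (∑ y, cubicCos (Q y)) ^ 2 + 3 * (∑ y, cubicSin (Q y)) ^ 2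
      = ∑ y, ∑ z, 2 * cubicCos (Q z - Q y) := by
        simp only [two_mul_cubicCos_sub, sum_add_distrib, ← mul_sum, ← sum_mul, sq]
    _ = ∑ y, ∑ z, 2 * cubicCos (Q z + Q.polarBilin z y) := by
        refine sum_congr rfl fun y _ ↦ ?_
        rw [← Equiv.sum_comp (Equiv.addRight y)]
        simp [QuadraticMap.map_add Q, add_sub_right_comm]
    _ = ∑ z, if z ∈ Q.radical then 4 * (Fintype.card V : ℤ) else 0 := by
        rw [sum_comm]
        refine sum_congr rfl fun z _ ↦ ?_
        rw [← mul_sum, sum_cubicCos_apply_add_polar, mul_ite, mul_zero, ← mul_assoc]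
        norm_num
    _ = 4 * Fintype.card V * Nat.card Q.radical := by
        rw [← sum_filter, sum_const, nsmul_eq_mul, mul_comm,
          Nat.subtype_card {z | z ∈ Q.radical} (by simp)]

/-- The sum is the real part of an element of `ℤ[ω]` of norm `3 ^ n`; as `3` is ramified, such an
element is determined by `n` up to a unit. -/
lemma exists_sq_add_three_mul_sq_eq_three_pow (Q : QuadraticForm (ZMod 3) V) :
    ∃ X Y : ℤ, ∑ y, cubicCos (Q y) = 2 * X ∧
      X ^ 2 + 3 * Y ^ 2 = 3 ^ (finrank (ZMod 3) V + finrank (ZMod 3) Q.radical) := by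
  have neg_eq_self (x : V) (hx : -x = x) : x = 0 := by
    have two_smul_eq_zero : (2 : ZMod 3) • x = 0 := by rw [two_smul, ← eq_neg_iff_add_eq_zero, hx]
    exact (smul_eq_zero.mp two_smul_eq_zero).resolve_left (by decide)
  have norm := sum_cubicCos_sq_add_three_mul_sum_cubicSin_sq Q
  obtain ⟨Y, hY⟩ : Even (∑ y, cubicSin (Q y)) :=
    even_sum_of_neg_eq neg_eq_self (by simp [cubicSin]) fun x ↦ by rw [QuadraticMap.map_neg]
  have card_mul_card : (Fintype.card V * Nat.card Q.radical : ℤ) =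
      3 ^ (finrank (ZMod 3) V + finrank (ZMod 3) Q.radical) := by
    rw [Module.card_eq_pow_finrank (K := ZMod 3) (V := V),
      Module.natCard_eq_pow_finrank (K := ZMod 3) (V := Q.radical), ZMod.card, Nat.card_zmod,
      pow_add]
    norm_cast
  obtain ⟨X, hX⟩ : Even (∑ y, cubicCos (Q y)) := by
    rw [← Int.even_pow' two_ne_zero]
    exact ⟨2 * Fintype.card V * Nat.card Q.radical - 6 * Y ^ 2, by rw [hY] at norm; linarith⟩
  refine ⟨X, Y, by rw [hX, two_mul], ?_⟩
  rw [hX, hY] at norm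
  linarith

theorem sum_cubicCos_eq_zero_of_odd {Q : QuadraticForm (ZMod 3) V}
    (hQ : Odd (finrank (ZMod 3) V + finrank (ZMod 3) Q.radical)) :
    ∑ y, cubicCos (Q y) = 0 := by
  obtain ⟨k, hk⟩ := hQ
  obtain ⟨X, Y, hX, norm⟩ := exists_sq_add_three_mul_sq_eq_three_pow Q
  rw [hk, pow_succ' (3 : ℤ), pow_mul] at norm
  rw [hX, eq_zero_of_sq_add_three_mul_sq_eq_three_mul_nine_pow norm, mul_zero]

theorem sum_cubicCos_eq_or_eq_neg {Q : QuadraticForm (ZMod 3) V} {k : ℕ}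
    (hQ : finrank (ZMod 3) V + finrank (ZMod 3) Q.radical = 2 * k) :
    ∑ y, cubicCos (Q y) = 2 * 3 ^ k ∨ ∑ y, cubicCos (Q y) = -(2 * 3 ^ k) := by
  obtain ⟨X, Y, hX, norm⟩ := exists_sq_add_three_mul_sq_eq_three_pow Q
  rw [hQ, pow_mul] at norm
  rw [eq_zero_of_sq_add_three_mul_sq_eq_nine_pow norm] at norm
  have : X ^ 2 = (3 ^ k) ^ 2 := by rw [← pow_mul, mul_comm, pow_mul]; linear_combination norm
  rw [hX, ← mul_neg]
  exact (sq_eq_sq_iff_eq_or_eq_neg.mp this).imp (congrArg _) (congrArg _)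

end QuadraticForm

section DifferenceOperator

lemma rank_ker_comp_le {K : Type*} [DivisionRing K] {U V : Type u} {W : Type*} [AddCommGroup U]
    [Module K U] [AddCommGroup V] [Module K V] [AddCommGroup W] [Module K W] (g : V →ₗ[K] W)
    (f : U →ₗ[K] V) :
    Module.rank K (g ∘ₗ f).ker ≤ Module.rank K f.ker + Module.rank K g.ker := by
  let r : (g ∘ₗ f).ker →ₗ[K] g.ker := f.restrict fun x hx ↦ hx
  have rank_ker_r : Module.rank K r.ker ≤ Module.rank K f.ker :=
    LinearMap.rank_le_of_injective
      ((g ∘ₗ f).ker.subtype.restrict fun x hx ↦ congrArg Subtype.val hx : r.ker →ₗ[K] f.ker)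
      fun x y h ↦ Subtype.ext (Subtype.ext (congrArg (fun w : f.ker ↦ (w : U)) h))
  rw [← r.rank_range_add_rank_ker, add_comm]
  exact add_le_add rank_ker_r (Submodule.rank_le _)

variable {K F : Type*} [Field K] [Field F] [Algebra K F]

/-- The linear `σ`-difference operator `x ↦ ∑ i ≤ d, c i * σ ^ i x` of order at most `d`. As for
differential operators, order bounds the dimension of the kernel over the field of constants. -/
def differenceOperator (σ : F →ₐ[K] F) (c : ℕ → F) (d : ℕ) : F →ₗ[K] F :=
  ∑ i ∈ range (d + 1), c i • (σ ^ i).toLinearMap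

lemma differenceOperator_apply (σ : F →ₐ[K] F) (c : ℕ → F) (d : ℕ) (x : F) :
    differenceOperator σ c d x = ∑ i ∈ range (d + 1), c i * (σ ^ i) x := by
  simp [differenceOperator]

/-- Reduction of order, by Abel summation. -/
lemma differenceOperator_comp_mulLeft {σ : F →ₐ[K] F} {c : ℕ → F} {d : ℕ} {z : F}
    (hz : differenceOperator σ c (d + 1) z = 0) :
    differenceOperator σ c (d + 1) ∘ₗ LinearMap.mulLeft K z =
      differenceOperator σ (fun j ↦ -∑ i ∈ range (j + 1), c i * (σ ^ i) z) d ∘ₗ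
        (σ.toLinearMap - LinearMap.id) := by
  ext y
  rw [differenceOperator_apply] at hz
  have by_parts :=
    sum_range_by_parts (fun i ↦ (σ ^ i) y) (fun i ↦ c i * (σ ^ i) z) (d + 1 + 1)
  rw [hz, smul_zero, zero_sub, Nat.add_sub_cancel, ← sum_neg_distrib] at by_parts
  rw [LinearMap.comp_apply, differenceOperator_apply, LinearMap.comp_apply,
    differenceOperator_apply]
  convert by_parts using 2 with i _ i _
  · simp only [LinearMap.mulLeft_apply, map_mul, smul_eq_mul]; ring
  · simp only [LinearMap.sub_apply, AlgHom.toLinearMap_apply, LinearMap.id_apply, map_sub,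
      smul_eq_mul, pow_succ, AlgHom.mul_apply]; ring

lemma exists_sum_range_mul_ne_zero (σ : F →ₐ[K] F) {c : ℕ → F} {d : ℕ} {z : F} (hz : z ≠ 0)
    (hc : ∃ i ≤ d, c i ≠ 0) : ∃ j ≤ d, ∑ i ∈ range (j + 1), c i * (σ ^ i) z ≠ 0 := by
  obtain ⟨i, hi, hci⟩ := hc
  by_contra! h
  have term_eq_zero : c i * (σ ^ i) z = 0 := by
    rw [← sum_range_succ_sub_sum (fun i ↦ c i * (σ ^ i) z), h i hi, zero_sub, neg_eq_zero]
    cases i with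
    | zero => simp
    | succ i => exact h i (by omega)
  exact mul_ne_zero hci ((map_ne_zero _).mpr hz) term_eq_zero

lemma rank_ker_sub_id_le_one {σ : F →ₐ[K] F}
    (hσ : ∀ x, σ x = x → x ∈ Set.range (algebraMap K F)) :
    Module.rank K (σ.toLinearMap - LinearMap.id).ker ≤ 1 := by
  refine (rank_submodule_le_one_iff' _).mpr ⟨1, fun x hx ↦ ?_⟩
  obtain ⟨k, rfl⟩ := hσ x (by simpa [sub_eq_zero] using hx)
  exact Submodule.mem_span_singleton.mpr ⟨k, (Algebra.algebraMap_eq_smul_one k).symm⟩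

theorem rank_ker_differenceOperator_le {σ : F →ₐ[K] F}
    (hσ : ∀ x, σ x = x → x ∈ Set.range (algebraMap K F)) {c : ℕ → F} {d : ℕ}
    (hc : ∃ i ≤ d, c i ≠ 0) : Module.rank K (differenceOperator σ c d).ker ≤ d := by
  induction d generalizing c with
  | zero =>
    obtain ⟨i, hi, hci⟩ := hc
    obtain rfl : i = 0 := by omega
    have ker_eq_bot : (differenceOperator σ c 0).ker = ⊥ := by
      ext x; simp [differenceOperator_apply, hci]
    simp [ker_eq_bot]
  | succ d ih =>
    by_cases! hker : ∀ z ∈ (differenceOperator σ c (d + 1)).ker, z = 0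
    · rw [(Submodule.eq_bot_iff _).mpr hker, rank_bot]
      exact zero_le
    obtain ⟨z, hz, hz0⟩ := hker
    let e (j : ℕ) : F := -∑ i ∈ range (j + 1), c i * (σ ^ i) z
    have he : ∃ j ≤ d, e j ≠ 0 := by
      obtain ⟨j, hj, hne⟩ := exists_sum_range_mul_ne_zero σ hz0 hc
      refine ⟨j, Nat.le_of_lt_succ (lt_of_le_of_ne hj ?_), neg_ne_zero.mpr hne⟩
      rintro rfl
      exact hne (by rwa [LinearMap.mem_ker, differenceOperator_apply] at hz)
    have reduction : differenceOperator σ c (d + 1) ∘ₗ LinearMap.mulLeft K z =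
        differenceOperator σ e d ∘ₗ (σ.toLinearMap - LinearMap.id) :=
      differenceOperator_comp_mulLeft hz
    calc Module.rank K (differenceOperator σ c (d + 1)).ker
        = Module.rank K (differenceOperator σ c (d + 1) ∘ₗ LinearMap.mulLeft K z).ker := by
          rw [LinearMap.ker_comp]
          exact ((Units.mulLeftLinearEquiv K F (Units.mk0 z hz0)).ofSubmodule' _).rank_eq.symm
      _ ≤ Module.rank K (σ.toLinearMap - LinearMap.id).ker +
            Module.rank K (differenceOperator σ e d).ker := by
          rw [reduction]; exact rank_ker_comp_le _ _
      _ ≤ 1 + d := add_le_add (rank_ker_sub_id_le_one hσ) (ih he)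
      _ = (d + 1 : ℕ) := by push_cast; exact add_comm _ _

end DifferenceOperator

section TraceForm

section

variable {K F : Type*} [Field K] [Field F] [Algebra K F]

/-- The quadratic form `y ↦ Tr (a * σ y * y + b * y ^ 2)`, which a codeword becomes after a change
of variable, with `σ y = y ^ 3 ^ h`. -/
noncomputable def traceQuadraticForm (σ : F ≃ₐ[K] F) (a b : F) : QuadraticForm K F :=
  LinearMap.BilinMap.toQuadraticMap
    (Algebra.traceForm K F ∘ₗ (LinearMap.mulLeft K a ∘ₗ σ.toLinearMap + LinearMap.mulLeft K b))

lemma traceQuadraticForm_apply (σ : F ≃ₐ[K] F) (a b y : F) :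
    traceQuadraticForm σ a b y = Algebra.trace K F (a * (σ y * y) + b * y ^ 2) := by
  simp [traceQuadraticForm, Algebra.traceForm_apply, mul_assoc, sq]

lemma polarBilin_traceQuadraticForm_apply (σ : F ≃ₐ[K] F) (a b z y : F) :
    (traceQuadraticForm σ a b).polarBilin z y =
      Algebra.trace K F ((a * z + 2 * σ b * σ z + σ a * σ (σ z)) * σ y) := by
  have trace_mul_σ (x : F) : Algebra.trace K F (σ x * σ y) = Algebra.trace K F (x * y) := by
    rw [← map_mul, Algebra.trace_eq_of_algEquiv]
  have expand : (a * z + 2 * σ b * σ z + σ a * σ (σ z)) * σ y =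
      a * z * σ y + σ (2 * b * z + a * σ z) * σ y := by
    simp only [map_add, map_mul, map_ofNat]; ring
  rw [expand, map_add, trace_mul_σ, ← map_add, QuadraticMap.polarBilin_apply_apply,
    traceQuadraticForm, LinearMap.BilinMap.polar_toQuadraticMap]
  simp only [LinearMap.comp_apply, LinearMap.add_apply, LinearMap.mulLeft_apply,
    AlgEquiv.toLinearMap_apply, Algebra.traceForm_apply, ← map_add]
  congr 1
  ring

lemma radical_traceQuadraticForm_le [FiniteDimensional K F] [Algebra.IsSeparable K F]
    (σ : F ≃ₐ[K] F) (a b : F) :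
    (traceQuadraticForm σ a b).radical ≤
      (differenceOperator σ.toAlgHom (fun | 0 => a | 1 => 2 * σ b | _ => σ a) 2).ker := by
  intro z hz
  rw [LinearMap.mem_ker, differenceOperator_apply]
  simp only [sum_range_succ, range_zero, sum_empty, zero_add]
  refine (traceForm_nondegenerate K F).1 _ fun y ↦ ?_
  obtain ⟨y, rfl⟩ := σ.surjective y
  rw [Algebra.traceForm_apply]
  have := polarBilin_traceQuadraticForm_apply σ a b z y
  rw [hz.2] at this
  simpa using this.symm

theorem finrank_radical_traceQuadraticForm_le [FiniteDimensional K F] [Algebra.IsSeparable K F]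
    (h2 : (2 : K) ≠ 0) {σ : F ≃ₐ[K] F} (hσ : ∀ x, σ x = x → x ∈ Set.range (algebraMap K F))
    {a b : F} (hab : (a, b) ≠ 0) : finrank K (traceQuadraticForm σ a b).radical ≤ 2 := by
  refine finrank_le_of_rank_le ((Submodule.rank_mono (radical_traceQuadraticForm_le σ a b)).trans
    (rank_ker_differenceOperator_le hσ ?_))
  by_cases ha : a = 0
  · refine ⟨1, by norm_num, ?_⟩
    have hb : b ≠ 0 := fun hb ↦ hab (Prod.ext ha hb)
    have two_ne_zero : (2 : F) ≠ 0 := by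
      rw [← map_ofNat (algebraMap K F)]; exact (map_ne_zero _).mpr h2
    exact mul_ne_zero two_ne_zero ((map_ne_zero σ).mpr hb)
  · exact ⟨0, by norm_num, ha⟩

end

theorem sum_cubicCos_traceQuadraticForm {F : Type*} [Field F] [Fintype F] [Algebra (ZMod 3) F]
    {j : ℕ} (hF : finrank (ZMod 3) F = 2 * j + 1) {σ : F ≃ₐ[ZMod 3] F}
    (hσ : ∀ x, σ x = x → x ∈ Set.range (algebraMap (ZMod 3) F)) {a b : F} (hab : (a, b) ≠ 0) :
    ∑ y, cubicCos (traceQuadraticForm σ a b y) ∈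
      ({0, 2 * 3 ^ (j + 1), -(2 * 3 ^ (j + 1))} : Set ℤ) := by
  have radical_le := finrank_radical_traceQuadraticForm_le (by decide) hσ hab
  obtain hr | hr | hr : finrank (ZMod 3) (traceQuadraticForm σ a b).radical = 0 ∨
      finrank (ZMod 3) (traceQuadraticForm σ a b).radical = 1 ∨
      finrank (ZMod 3) (traceQuadraticForm σ a b).radical = 2 := by omega
  · exact .inl (sum_cubicCos_eq_zero_of_odd (by rw [hF, hr]; exact ⟨j, rfl⟩))
  · exact .inr (sum_cubicCos_eq_or_eq_neg (by rw [hF, hr]; ring))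
  · exact .inl (sum_cubicCos_eq_zero_of_odd (by rw [hF, hr]; exact ⟨j + 1, by ring⟩))

end TraceForm

section FiniteField

lemma mem_range_algebraMap_of_frobenius_pow_apply_eq {K F : Type*} [Field K] [Fintype K] [Field F]
    [Finite F] [Algebra K F] {h : ℕ} (hcop : h.Coprime (finrank K F)) {x : F}
    (hx : (FiniteField.frobeniusAlgEquivOfAlgebraic K F ^ h) x = x) :
    x ∈ Set.range (algebraMap K F) := by
  set φ := FiniteField.frobeniusAlgEquivOfAlgebraic K F with hφ
  have periodic_h : Function.IsPeriodicPt φ h x := by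
    rwa [AlgEquiv.coe_pow] at hx
  have periodic_finrank : Function.IsPeriodicPt φ (finrank K F) x := by
    rw [Function.IsPeriodicPt, Function.IsFixedPt, ← AlgEquiv.coe_pow,
      ← FiniteField.orderOf_frobeniusAlgEquivOfAlgebraic K F, pow_orderOf_eq_one,
      AlgEquiv.one_apply]
  have fixed : φ x = x := by
    simpa [hcop.gcd_eq_one, Function.IsPeriodicPt, Function.IsFixedPt] using
      periodic_h.gcd periodic_finrank
  refine (IsGalois.mem_range_algebraMap_iff_fixed x).mpr fun σ ↦ ?_
  obtain ⟨n, rfl⟩ := (FiniteField.bijective_frobeniusAlgEquivOfAlgebraic_pow K F).2 σ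
  rw [AlgEquiv.coe_pow]
  exact Function.IsFixedPt.iterate fixed n

variable {F : Type*} [Field F] [Fintype F]

lemma pow_eq_pow_of_modEq_card_sub_one {a b : ℕ} (hab : a ≡ b [MOD Fintype.card F - 1]) (ha : a ≠ 0)
    (hb : b ≠ 0) (x : F) : x ^ a = x ^ b := by
  rcases eq_or_ne x 0 with rfl | hx
  · rw [zero_pow ha, zero_pow hb]
  · exact pow_eq_pow_of_modEq hab (FiniteField.pow_card_sub_one_eq_one x hx)

lemma pow_bijective_of_coprime_card_sub_one {n : ℕ} (hn0 : n ≠ 0)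
    (hn : n.Coprime (Fintype.card F - 1)) : Function.Bijective fun x : F ↦ x ^ n := by
  refine Finite.injective_iff_bijective.mp fun x y (hxy : x ^ n = y ^ n) ↦ ?_
  rcases eq_or_ne y 0 with rfl | hy
  · exact pow_eq_zero_iff hn0 |>.mp (by rw [hxy, zero_pow hn0])
  · have hx : x ≠ 0 := fun hx ↦ pow_ne_zero n hy (by rw [← hxy, hx, zero_pow hn0])
    have div_pow_eq_one : (x / y) ^ n = 1 := by rw [div_pow, hxy, div_self (pow_ne_zero n hy)]
    have pow_gcd_eq_one : (x / y) ^ n.gcd (Fintype.card F - 1) = 1 :=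
      pow_gcd_eq_one.mpr
        ⟨div_pow_eq_one, FiniteField.pow_card_sub_one_eq_one _ (div_ne_zero hx hy)⟩
    rwa [hn.gcd_eq_one, pow_one, div_eq_one_iff_eq hy] at pow_gcd_eq_one

/-- Substitute `x = y ^ (N + t) = ± y ^ t`, where `2 * N = q - 1`: as `v` is odd and `N` is odd,
`x ^ v = ± y ^ 2` with the same sign, and the substitution is bijective. -/
lemma sum_apply_pow_eq_sum_apply_pow_sq {M : Type*} [AddCommMonoid M]
    (hq : Fintype.card F % 4 = 3) {v t : ℕ} (hv : Odd v) (ht : t ≠ 0)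
    (htv : t * v ≡ 2 [MOD Fintype.card F - 1]) {g : F → F → M}
    (hg : ∀ x y, g (-x) (-y) = g x y) :
    ∑ x, g x (x ^ v) = ∑ y, g (y ^ t) (y ^ 2) := by
  set N := Fintype.card F / 2 with hN
  have card_sub_one : Fintype.card F - 1 = 2 * N := by omega
  have v_pos : 0 < v := hv.pos
  have exponent : (N + t) * v ≡ N + 2 [MOD Fintype.card F - 1] := by
    obtain ⟨k, rfl⟩ := hv
    rw [add_mul]
    refine Nat.ModEq.add ?_ htv
    rw [card_sub_one, show N * (2 * k + 1) = N + 2 * N * k by ring]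
    simp [Nat.ModEq]
  have coprime : (N + t).Coprime (Fintype.card F - 1) := by
    refine Nat.Coprime.coprime_mul_right (k := v) ?_
    rw [Nat.Coprime, exponent.gcd_eq, card_sub_one]
    have N_odd : Odd N := by rw [Nat.odd_iff]; omega
    exact Nat.Coprime.mul_right (Nat.coprime_two_right.mpr (N_odd.add_even even_two))
      (by simpa using N_odd)
  rw [← (pow_bijective_of_coprime_card_sub_one (by omega) coprime).sum_comp]
  refine sum_congr rfl fun y _ ↦ ?_
  rw [← pow_mul, pow_eq_pow_of_modEq_card_sub_one exponent (by positivity) (by omega),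
    pow_add, pow_add]
  rcases eq_or_ne y 0 with rfl | hy
  · simp [ht]
  have ringChar_ne_two : ringChar F ≠ 2 := by
    rw [Ne, FiniteField.even_card_iff_char_two]; omega
  obtain h | h := FiniteField.pow_dichotomy ringChar_ne_two hy
  · rw [hN, h, one_mul, one_mul]
  · rw [hN, h, neg_one_mul, neg_one_mul, hg]

lemma bijective_pow_generator {α : Fˣ} (hα : ∀ x : Fˣ, x ∈ Subgroup.zpowers α) {n : ℕ}
    (hn : Fintype.card F - 1 = n) : Function.Bijective fun i : Fin n ↦ α ^ (i : ℕ) := by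
  classical
  have card_units : Fintype.card Fˣ = n := by rw [Fintype.card_units, hn]
  have orderOf_eq : orderOf α = n := by
    rw [orderOf_eq_card_of_forall_mem_zpowers hα, Nat.card_eq_fintype_card, card_units]
  refine (Fintype.bijective_iff_injective_and_card _).mpr ⟨fun i j hij ↦ ?_, by simp [card_units]⟩
  exact Fin.ext (pow_injOn_Iio_orderOf (by simp [orderOf_eq]) (by simp [orderOf_eq]) hij)

lemma hammingNorm_comp_pow_generator {M : Type*} [Zero M] [DecidableEq M] {α : Fˣ}
    (hα : ∀ x : Fˣ, x ∈ Subgroup.zpowers α) {n : ℕ} (hn : Fintype.card F - 1 = n) {f : F → M}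
    (hf : f 0 = 0) : hammingNorm (fun i : Fin n ↦ f ((α : F) ^ (i : ℕ))) = hammingNorm f := by
  have pow_bijective := bijective_pow_generator hα hn
  refine card_nbij (fun i ↦ (α : F) ^ (i : ℕ)) (fun i hi ↦ by simpa using hi) ?_ fun x hx ↦ ?_
  · exact fun i _ j _ hij ↦ pow_bijective.1 (Units.ext (by simpa using hij))
  · have hx0 : x ≠ 0 := by rintro rfl; simp [hf] at hx
    obtain ⟨i, hi⟩ := pow_bijective.2 (Units.mk0 x hx0)
    have pow_eq : (α : F) ^ (i : ℕ) = x := by simpa using congrArg Units.val hi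
    exact ⟨i, by simpa [pow_eq] using hx, pow_eq⟩

end FiniteField

section Exponent

lemma three_pow_mod_four_of_odd {m : ℕ} (hm : Odd m) : 3 ^ m % 4 = 3 := by
  obtain ⟨k, rfl⟩ := hm
  rw [pow_succ, pow_mul, Nat.mul_mod, Nat.pow_mod]
  norm_num

lemma two_dvd_three_pow_sub_one (n : ℕ) : 2 ∣ 3 ^ n - 1 :=
  Nat.sub_one_dvd_pow_sub_one 3 n

lemma mul_two_dvd_three_pow_sub_one {h n : ℕ} (hn : 2 * h ∣ n) :
    (3 ^ h + 1) * 2 ∣ 3 ^ n - 1 := by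
  calc (3 ^ h + 1) * 2 ∣ (3 ^ h + 1) * (3 ^ h - 1) :=
        mul_dvd_mul_left _ (two_dvd_three_pow_sub_one h)
    _ = 3 ^ (2 * h) - 1 := by
        rw [mul_comm 2 h, pow_mul, ← one_pow 2, Nat.sq_sub_sq]; simp
    _ ∣ 3 ^ n - 1 := Nat.pow_sub_one_dvd_pow_sub_one 3 hn

variable {m h : ℕ}

lemma odd_exponent (hm : Odd m) (hdvd : 2 * h ∣ m + 1) :
    Odd ((3 ^ (m + 1) - 1) / (3 ^ h + 1) + (3 ^ m - 1) / 2) := by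
  obtain ⟨u, hu⟩ := mul_two_dvd_three_pow_sub_one hdvd
  have mod_four := three_pow_mod_four_of_odd hm
  rw [hu, mul_assoc, Nat.mul_div_cancel_left _ (by positivity)]
  refine (even_two_mul u).add_odd (Nat.odd_iff.mpr ?_)
  generalize 3 ^ m = q at mod_four ⊢
  omega

lemma mul_exponent_modEq (hdvd : 2 * h ∣ m + 1) :
    (3 ^ h + 1) * ((3 ^ (m + 1) - 1) / (3 ^ h + 1) + (3 ^ m - 1) / 2) ≡ 2 [MOD 3 ^ m - 1] := by
  obtain ⟨N, hN⟩ := two_dvd_three_pow_sub_one m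
  obtain ⟨g, hg⟩ : 2 ∣ 3 ^ h + 1 :=
    even_iff_two_dvd.mp (Odd.pow (by decide)).add_one
  have three_pow_succ : 3 ^ (m + 1) - 1 = 2 + (3 ^ m - 1) * 3 := by
    have := Nat.one_le_pow m 3 (by norm_num)
    rw [pow_succ]; omega
  have expand : (3 ^ h + 1) * ((3 ^ (m + 1) - 1) / (3 ^ h + 1) + (3 ^ m - 1) / 2) =
      2 + (3 ^ m - 1) * (3 + g) := by
    rw [mul_add, Nat.mul_div_cancel' (dvd_of_mul_right_dvd (mul_two_dvd_three_pow_sub_one hdvd)),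
      three_pow_succ, hN, Nat.mul_div_cancel_left _ two_pos, hg]
    ring
  rw [expand]
  simp [Nat.ModEq]

end Exponent

section Moments

variable {F : Type*} [Field F] [Algebra (ZMod 3) F]

/-- The function `x ↦ Tr (a * x) + Tr (b * x ^ v)` on the whole field: the codeword `c(a, b)`
consists of its values at the nonzero elements. -/
noncomputable def traceFunction (v : ℕ) (ab : F × F) (x : F) : ZMod 3 :=
  Algebra.trace (ZMod 3) F (ab.1 * x) + Algebra.trace (ZMod 3) F (ab.2 * x ^ v)

lemma traceFunction_apply_zero {v : ℕ} (hv : v ≠ 0) (ab : F × F) : traceFunction v ab 0 = 0 := by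
  simp [traceFunction, hv]

variable [Fintype F]

lemma sum_cubicCos_trace_mul_add_trace_mul [DecidableEq F] (x y : F) :
    ∑ ab : F × F,
        cubicCos (Algebra.trace (ZMod 3) F (ab.1 * x) + Algebra.trace (ZMod 3) F (ab.2 * y)) =
      if x = 0 ∧ y = 0 then 2 * (Fintype.card F : ℤ) ^ 2 else 0 := by
  have trace_ne_zero {z : F} (hz : z ≠ 0) : ∃ c, Algebra.trace (ZMod 3) F (c * z) ≠ 0 := by
    by_contra! h
    exact hz ((traceForm_nondegenerate (ZMod 3) F).2 z h)
  split_ifs with hxy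
  · simp only [hxy.1, hxy.2, mul_zero, map_zero, add_zero, cubicCos, if_true, sum_const, card_univ,
      Fintype.card_prod, nsmul_eq_mul, Nat.cast_mul]
    ring
  · let l : F × F →ₗ[ZMod 3] ZMod 3 :=
      Algebra.trace (ZMod 3) F ∘ₗ
        (LinearMap.mulRight (ZMod 3) x).coprod (LinearMap.mulRight (ZMod 3) y)
    have hl : l.toAddMonoidHom ≠ 0 := fun h ↦ hxy ⟨by_contra fun hx ↦ ?_, by_contra fun hy ↦ ?_⟩
    · simpa [l] using sum_cubicCos_add_apply_eq_zero hl 0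
    · obtain ⟨c, hc⟩ := trace_ne_zero hx
      exact hc (by simpa [l] using DFunLike.congr_fun h (c, 0))
    · obtain ⟨c, hc⟩ := trace_ne_zero hy
      exact hc (by simpa [l] using DFunLike.congr_fun h (0, c))

lemma sum_sum_cubicCos_traceFunction {v : ℕ} (hv : v ≠ 0) :
    ∑ ab : F × F, ∑ x, cubicCos (traceFunction v ab x) = 2 * (Fintype.card F : ℤ) ^ 2 := by
  classical
  rw [sum_comm]
  simp only [traceFunction, sum_cubicCos_trace_mul_add_trace_mul, pow_eq_zero_iff hv, and_self,
    sum_ite_eq', mem_univ, if_true]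

lemma sum_sq_sum_cubicCos_traceFunction {v : ℕ} (hv : Odd v) :
    ∑ ab : F × F, (∑ x, cubicCos (traceFunction v ab x)) ^ 2 = 4 * (Fintype.card F : ℤ) ^ 3 := by
  classical
  have add_eq_zero_iff (x y : F) : (x + y = 0 ∧ x ^ v + y ^ v = 0) ↔ y = -x :=
    ⟨fun h ↦ (neg_eq_of_add_eq_zero_right h.1).symm, by rintro rfl; simp [hv.neg_pow]⟩
  have sub_eq_zero_iff (x y : F) : (x - y = 0 ∧ x ^ v - y ^ v = 0) ↔ y = x :=
    ⟨fun h ↦ (sub_eq_zero.mp h.1).symm, by rintro rfl; simp⟩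
  have product (ab : F × F) (x y : F) :
      cubicCos (traceFunction v ab x) * cubicCos (traceFunction v ab y) =
        cubicCos (Algebra.trace (ZMod 3) F (ab.1 * (x + y)) +
            Algebra.trace (ZMod 3) F (ab.2 * (x ^ v + y ^ v))) +
          cubicCos (Algebra.trace (ZMod 3) F (ab.1 * (x - y)) +
            Algebra.trace (ZMod 3) F (ab.2 * (x ^ v - y ^ v))) := by
    rw [cubicCos_mul_cubicCos]
    simp only [traceFunction, mul_add, mul_sub, map_add, map_sub]
    congr 2 <;> ring
  calc ∑ ab : F × F, (∑ x, cubicCos (traceFunction v ab x)) ^ 2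
      = ∑ x : F, ∑ y : F, ∑ ab : F × F,
          cubicCos (traceFunction v ab x) * cubicCos (traceFunction v ab y) := by
        simp only [sq, sum_mul_sum]
        rw [sum_comm]
        exact sum_congr rfl fun x _ ↦ sum_comm
    _ = ∑ x : F, ∑ y : F, ((if y = -x then 2 * (Fintype.card F : ℤ) ^ 2 else 0) +
          if y = x then 2 * (Fintype.card F : ℤ) ^ 2 else 0) := by
        simp only [product, sum_add_distrib, sum_cubicCos_trace_mul_add_trace_mul,
          add_eq_zero_iff, sub_eq_zero_iff]
    _ = 4 * (Fintype.card F : ℤ) ^ 3 := by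
        simp only [sum_add_distrib, sum_ite_eq', mem_univ, if_true, sum_const, card_univ,
          nsmul_eq_mul]
        ring

theorem sum_cubicCos_traceFunction_mem {j : ℕ} (hF : finrank (ZMod 3) F = 2 * j + 1) {h v : ℕ}
    (hcop : h.Coprime (2 * j + 1)) (hv : Odd v)
    (hhv : (3 ^ h + 1) * v ≡ 2 [MOD 3 ^ (2 * j + 1) - 1]) {ab : F × F} (hab : ab ≠ 0) :
    ∑ x, cubicCos (traceFunction v ab x) ∈
      ({0, 2 * 3 ^ (j + 1), -(2 * 3 ^ (j + 1))} : Set ℤ) := by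
  let σ : F ≃ₐ[ZMod 3] F := FiniteField.frobeniusAlgEquivOfAlgebraic (ZMod 3) F ^ h
  have σ_apply (x : F) : σ x = x ^ 3 ^ h := by
    rw [AlgEquiv.coe_pow, FiniteField.coe_frobeniusAlgEquivOfAlgebraic_iterate, ZMod.card]
  have fixed (x : F) (hx : σ x = x) : x ∈ Set.range (algebraMap (ZMod 3) F) :=
    mem_range_algebraMap_of_frobenius_pow_apply_eq (hF ▸ hcop) hx
  have card_F : Fintype.card F = 3 ^ (2 * j + 1) := by
    rw [Module.card_eq_pow_finrank (K := ZMod 3), hF, ZMod.card]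
  have substitution : ∑ x, cubicCos (traceFunction v ab x) =
      ∑ y, cubicCos (traceQuadraticForm σ ab.1 ab.2 y) := by
    refine (sum_apply_pow_eq_sum_apply_pow_sq (t := 3 ^ h + 1) ?_ hv (by positivity)
      (card_F ▸ hhv) (g := fun x z ↦ cubicCos (Algebra.trace (ZMod 3) F (ab.1 * x) +
        Algebra.trace (ZMod 3) F (ab.2 * z))) fun x z ↦ ?_).trans ?_
    · rw [card_F]; exact three_pow_mod_four_of_odd ⟨j, rfl⟩
    · rw [← cubicCos_neg]; simp [add_comm]
    · simp only [traceQuadraticForm_apply, σ_apply, pow_succ, map_add]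
  rw [substitution]
  exact sum_cubicCos_traceQuadraticForm hF fixed hab

end Moments

section Counting

variable {V : Type*} [Fintype V] [Zero V]

lemma card_filter_eq_six_mul_sq_eq_one {p : ℤ} (hp : 1 < p) {T : V → ℤ} (hT0 : T 0 = 6 * p ^ 2)
    (hT : ∀ x ≠ 0, T x ∈ ({0, 6 * p, -(6 * p)} : Set ℤ)) : #{x | T x = 6 * p ^ 2} = 1 := by
  refine card_eq_one.mpr ⟨0, eq_singleton_iff_unique_mem.mpr ⟨by simpa using hT0, fun x hx ↦ ?_⟩⟩
  by_contra hx0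
  rcases hT x hx0 with h | h | h <;> rw [mem_filter_univ, h] at hx <;> nlinarith

lemma card_filter_eq_of_moments_s16 {p : ℤ} (hp : 1 < p) {T : V → ℤ} (hT0 : T 0 = 6 * p ^ 2)
    (hT : ∀ x ≠ 0, T x ∈ ({0, 6 * p, -(6 * p)} : Set ℤ))
    (hcard : Fintype.card V = (3 * p ^ 2) ^ 2) (moment_one : ∑ x, T x = 2 * (3 * p ^ 2) ^ 2)
    (moment_two : ∑ x, T x ^ 2 = 4 * (3 * p ^ 2) ^ 3) :
    #{x | T x = 0} = (3 * p ^ 2 - 1) * (2 * p ^ 2 + 1) ∧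
      2 * #{x | T x = 6 * p} = (3 * p ^ 2 - 1) * (p ^ 2 + p) ∧
        2 * #{x | T x = -(6 * p)} = (3 * p ^ 2 - 1) * (p ^ 2 - p) := by
  have lt_sq : p < p ^ 2 := by nlinarith
  have values (x : V) : T x ∈ ({6 * p ^ 2, 0, 6 * p, -(6 * p)} : Finset ℤ) := by
    rcases eq_or_ne x 0 with rfl | hx
    · simp [hT0]
    · simpa using .inr (hT x hx)
  have sum_comp (f : ℤ → ℤ) : ∑ x, f (T x) = f (6 * p ^ 2) + #{x | T x = 0} * f 0 +
      #{x | T x = 6 * p} * f (6 * p) + #{x | T x = -(6 * p)} * f (-(6 * p)) := by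
    rw [← sum_fiberwise_of_maps_to' (fun x _ ↦ values x),
      sum_insert, sum_insert, sum_insert, sum_singleton]
    · simp [card_filter_eq_six_mul_sq_eq_one hp hT0 hT, add_assoc]
    all_goals simp only [mem_insert, mem_singleton]; omega
  have count_zero := sum_comp fun _ ↦ 1
  have count_one := (sum_comp id).symm.trans moment_one
  have count_two := (sum_comp (· ^ 2)).symm.trans moment_two
  simp only [sum_const, card_univ, nsmul_eq_mul, hcard, mul_one, id_eq] at count_zero count_one
  have difference : (#{x | T x = 6 * p} - #{x | T x = -(6 * p)} : ℤ) = (3 * p ^ 2 - 1) * p :=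
    mul_left_cancel₀ (a := 6 * p) (by positivity) (by linear_combination count_one)
  have sum : (#{x | T x = 6 * p} + #{x | T x = -(6 * p)} : ℤ) = (3 * p ^ 2 - 1) * p ^ 2 :=
    mul_left_cancel₀ (a := 36 * p ^ 2) (by positivity) (by linear_combination count_two)
  exact ⟨by linear_combination -count_zero - sum, by linear_combination sum + difference,
    by linear_combination sum - difference⟩

theorem ncard_setOf_eq_of_moments {p : ℕ} (hp : 1 < p) {T : V → ℤ} (hT0 : T 0 = 6 * p ^ 2)
    (hT : ∀ x ≠ 0, T x ∈ ({0, 6 * (p : ℤ), -(6 * (p : ℤ))} : Set ℤ))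
    (hcard : Fintype.card V = (3 * p ^ 2) ^ 2) (moment_one : ∑ x, T x = 2 * (3 * p ^ 2) ^ 2)
    (moment_two : ∑ x, T x ^ 2 = 4 * (3 * p ^ 2) ^ 3) {W : V → ℕ}
    (hW : ∀ x, T x = 6 * p ^ 2 - 3 * W x) (w : ℕ) :
    {x | W x = w}.ncard =
      if w = 0 then 1
      else if w = 2 * (p ^ 2 - p) then (3 * p ^ 2 - 1) * (p ^ 2 + p) / 2
      else if w = 2 * p ^ 2 then (3 * p ^ 2 - 1) * (3 * p ^ 2 - p ^ 2 + 1)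
      else if w = 2 * (p ^ 2 + p) then (3 * p ^ 2 - 1) * (p ^ 2 - p) / 2
      else 0 := by
  have hp' : (1 : ℤ) < p := by exact_mod_cast hp
  have p_le_sq : p ≤ p ^ 2 := Nat.le_self_pow two_ne_zero p
  have one_le : 1 ≤ 3 * p ^ 2 := by omega
  have card_level : {x | W x = w}.ncard = #{x | T x = 6 * p ^ 2 - 3 * w} := by
    rw [← Set.ncard_coe_finset]
    congr 1
    ext x
    simp [hW]
  obtain ⟨zero, plus, minus⟩ :=
    card_filter_eq_of_moments_s16 hp' hT0 hT (by exact_mod_cast hcard) moment_one moment_two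
  rw [card_level]
  split_ifs with h0 h1 h2 h3
  · simpa [h0] using card_filter_eq_six_mul_sq_eq_one hp' hT0 hT
  · rw [show (6 * p ^ 2 - 3 * w : ℤ) = 6 * p by rw [h1]; push_cast [p_le_sq]; ring]
    refine Nat.eq_div_of_mul_eq_right two_ne_zero ?_
    zify [one_le]
    exact plus
  · rw [show (6 * p ^ 2 - 3 * w : ℤ) = 0 by rw [h2]; push_cast; ring]
    zify [one_le, show p ^ 2 ≤ 3 * p ^ 2 by omega]
    linear_combination zero
  · rw [show (6 * p ^ 2 - 3 * w : ℤ) = -(6 * p) by rw [h3]; push_cast; ring]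
    refine Nat.eq_div_of_mul_eq_right two_ne_zero ?_
    zify [one_le, p_le_sq]
    exact minus
  · refine card_eq_zero.mpr (filter_eq_empty_iff.mpr fun x _ hx ↦ ?_)
    zify [p_le_sq] at h0 h1 h2 h3
    rcases eq_or_ne x 0 with rfl | hx0
    · exact h0 (by linarith)
    · rcases hT x hx0 with h | h | h
      · exact h2 (by linarith)
      · exact h1 (by linarith)
      · exact h3 (by linarith [h.symm.trans hx])

end Counting

section WeightDistribution

theorem ncard_setOf_hammingNorm_traceFunction_eq {m : ℕ} (hm : Odd m) (hm1 : 1 < m) {h v : ℕ}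
    (hcop : h.Coprime m) (hv : Odd v) (hhv : (3 ^ h + 1) * v ≡ 2 [MOD 3 ^ m - 1])
    {F : Type*} [Field F] [Fintype F] [Algebra (ZMod 3) F] (hF : Fintype.card F = 3 ^ m) (w : ℕ) :
    {ab : F × F | hammingNorm (traceFunction v ab) = w}.ncard =
      if w = 0 then 1
      else if w = 2 * (3 ^ (m - 1) - 3 ^ ((m - 1) / 2)) then
        (3 ^ m - 1) * (3 ^ (m - 1) + 3 ^ ((m - 1) / 2)) / 2
      else if w = 2 * 3 ^ (m - 1) then
        (3 ^ m - 1) * (3 ^ m - 3 ^ (m - 1) + 1)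
      else if w = 2 * (3 ^ (m - 1) + 3 ^ ((m - 1) / 2)) then
        (3 ^ m - 1) * (3 ^ (m - 1) - 3 ^ ((m - 1) / 2)) / 2
      else 0 := by
  obtain ⟨j, rfl⟩ := hm
  have finrank_F : finrank (ZMod 3) F = 2 * j + 1 := by
    rw [Module.card_eq_pow_finrank (K := ZMod 3), ZMod.card] at hF
    exact Nat.pow_right_injective (by decide : 2 ≤ 3) hF
  have sq_pow : 3 ^ (2 * j) = (3 ^ j) ^ 2 := by rw [← pow_mul, mul_comm]
  have card_eq : 3 ^ (2 * j + 1) = 3 * (3 ^ j) ^ 2 := by rw [pow_succ', sq_pow]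
  have card_F : Fintype.card F = 3 * (3 ^ j) ^ 2 := hF.trans card_eq
  have six_mul : 6 * ((3 ^ j : ℕ) : ℤ) = 2 * 3 ^ (j + 1) := by push_cast; ring
  rw [show 2 * j + 1 - 1 = 2 * j by omega, show 2 * j / 2 = j by omega, sq_pow, card_eq]
  refine ncard_setOf_eq_of_moments (Nat.one_lt_pow (by omega) (by norm_num))
    (T := fun ab : F × F ↦ ∑ x, cubicCos (traceFunction v ab x)) ?_ (fun ab hab ↦ ?_) ?_ ?_ ?_
    (fun ab ↦ ?_) w
  · simp only [traceFunction, Prod.fst_zero, Prod.snd_zero, zero_mul, map_zero, add_zero, cubicCos,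
      if_true, sum_const, card_univ, card_F, nsmul_eq_mul]
    push_cast
    ring
  · rw [six_mul]
    exact sum_cubicCos_traceFunction_mem finrank_F hcop hv hhv hab
  · rw [Fintype.card_prod, card_F, ← sq]
  · rw [sum_sum_cubicCos_traceFunction hv.pos.ne', card_F]; push_cast; rfl
  · rw [sum_sq_sum_cubicCos_traceFunction hv, card_F]; push_cast; rfl
  · rw [sum_cubicCos_eq_sub_hammingNorm, card_F]; push_cast; ring

end WeightDistribution

end CyclicCode

/-- weight distribution (Table II) of the ternary cyclic code
`C_{(1,v,3,m)}` with `m ≥ 3` odd, `h ∣ m+1` with `(m+1)/h` even, and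
`v = (3^{m+1}-1)/(3^h+1) + (3^m-1)/2`; codewords are
`c(a,b)_i = Tr(a α^i) + Tr(b α^{iv})`. -/
theorem stmt16 {m : ℕ} (hm : Odd m) (hm3 : 3 ≤ m)
    {h : ℕ} (hh : 0 < h) (hdvd : h ∣ m + 1) (heven : Even ((m + 1) / h))
    {F : Type*} [Field F] [Fintype F] [Algebra (ZMod 3) F]
    (hF : Fintype.card F = 3 ^ m)
    (α : Fˣ) (hα : ∀ x : Fˣ, x ∈ Subgroup.zpowers α)
    (v : ℕ) (hv : v = (3 ^ (m + 1) - 1) / (3 ^ h + 1) + (3 ^ m - 1) / 2)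
    (c : F × F → Fin (3 ^ m - 1) → ZMod 3)
    (hc : c = fun (ab : F × F) (i : Fin (3 ^ m - 1)) =>
      Algebra.trace (ZMod 3) F (ab.1 * (α : F) ^ (i : ℕ)) +
        Algebra.trace (ZMod 3) F (ab.2 * (α : F) ^ ((i : ℕ) * v))) :
    ∀ w : ℕ,
      {ab : F × F | hammingNorm (c ab) = w}.ncard =
        if w = 0 then 1
        else if w = 2 * (3 ^ (m - 1) - 3 ^ ((m - 1) / 2)) then
          (3 ^ m - 1) * (3 ^ (m - 1) + 3 ^ ((m - 1) / 2)) / 2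
        else if w = 2 * 3 ^ (m - 1) then
          (3 ^ m - 1) * (3 ^ m - 3 ^ (m - 1) + 1)
        else if w = 2 * (3 ^ (m - 1) + 3 ^ ((m - 1) / 2)) then
          (3 ^ m - 1) * (3 ^ (m - 1) - 3 ^ ((m - 1) / 2)) / 2
        else 0 := by
  have two_mul_dvd : 2 * h ∣ m + 1 := by
    rw [← Nat.div_mul_cancel hdvd]
    exact mul_dvd_mul_right heven.two_dvd h
  have coprime : h.Coprime m := Nat.Coprime.coprime_dvd_left hdvd (by simp)
  have v_odd : Odd v := hv ▸ odd_exponent hm two_mul_dvd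
  have weight_eq (ab : F × F) : hammingNorm (c ab) = hammingNorm (traceFunction v ab) := by
    rw [← hammingNorm_comp_pow_generator hα (congrArg (· - 1) hF)
      (traceFunction_apply_zero v_odd.pos.ne' ab)]
    simp only [hc, traceFunction, pow_mul]
  simp only [weight_eq]
  exact ncard_setOf_hammingNorm_traceFunction_eq hm (by omega) coprime v_odd
    (hv ▸ mul_exponent_modEq two_mul_dvd) hF
end

section
/- Let m ≡ 7 (mod 8), q = 3^m, and v = (3^{(m+1)/8}−1)(3^{(m+1)/4}+1)(3^{(m+1)/2}+1) + (3^m−1)/2. Then the number of pairs (a,b) ∈ GF(q)² such that wt(c(a,b)) = w equals: 1 if w = 0; (1/2)(3^m−1)(3^{m−1}+3^{(m−1)/2}) if w = 2(3^{m−1}−3^{(m−1)/2}); (3^m−1)(3^m−3^{m−1}+1) if w = 2·3^{m−1}; (1/2)(3^m−1)(3^{m−1}−3^{(m−1)/2}) if w = 2(3^{m−1}+3^{(m−1)/2}); and 0 for every other value of w. -/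
/-!
Put `k = (m + 1) / 8`. Since `v (3 ^ k + 1) ≡ 2` modulo `3 ^ m - 1`, substituting
`x = ± y ^ (3 ^ k + 1)` turns the exponential sum of a codeword into the sum `S` of a quadratic form
`Tr (a y ^ (3 ^ k + 1) + b y ^ 2)` over `GF(3)`. As `gcd(k, m) = 1`, the Frobenius power
`y ↦ y ^ 3 ^ k` fixes only `GF(3)`, so the twisted-linear equation satisfied by the radical has a
solution space of dimension at most `2`; hence the radical has dimension `r ≤ 2`. Squaring the sum
gives `S ^ 2 + 3 T ^ 2 = 4 * 3 ^ (m + r)` with `T` a sum of quadratic characters, and descent in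
this norm equation leaves `S = 0` or `S ^ 2 = 4 * 3 ^ (m + r)`; the latter makes `m + r` even, so
`r = 1` as `m` is odd. Hence a nonzero codeword has one of three weights, and the first two moments
of `S` over all pairs `(a, b)`, known by orthogonality of characters, determine the frequencies.
-/

open Finset Module

namespace TernaryCode

/-- `ω ^ t + ω ^ (-t)` for a primitive cube root of unity `ω`, an integer: the sum of the two
nontrivial additive characters of `ZMod 3`. Its sums count zeros of ternary functions. -/
def cubeRootTrace (t : ZMod 3) : ℤ := if t = 0 then 2 else -1

lemma cubeRootTrace_zero : cubeRootTrace 0 = 2 := rfl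

lemma cubeRootTrace_neg (t : ZMod 3) : cubeRootTrace (-t) = cubeRootTrace t := by
  decide +revert

lemma cubeRootTrace_mul (s t : ZMod 3) :
    cubeRootTrace s * cubeRootTrace t = cubeRootTrace (s + t) + cubeRootTrace (s - t) := by
  decide +revert

-- `ω ^ t - ω ^ (-t) = √-3 * quadraticChar (ZMod 3) t`
lemma two_mul_cubeRootTrace_sub (s t : ZMod 3) :
    2 * cubeRootTrace (s - t) = cubeRootTrace s * cubeRootTrace t +
      3 * (quadraticChar (ZMod 3) s * quadraticChar (ZMod 3) t) := by
  decide +revert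

lemma cubeRootTrace_add_shifts (s : ZMod 3) {u : ZMod 3} (hu : u ≠ 0) :
    cubeRootTrace s + cubeRootTrace (s + u) + cubeRootTrace (s + u + u) = 0 := by
  decide +revert

lemma sum_cubeRootTrace_eq_sub {X : Type*} [Fintype X] (g : X → ZMod 3) :
    ∑ x, cubeRootTrace (g x) = 2 * Fintype.card X - 3 * #{x | g x ≠ 0} := by
  have h : ∀ t : ZMod 3, cubeRootTrace t = 2 - 3 * if t ≠ 0 then 1 else 0 := by decide
  simp only [h, sum_sub_distrib, ← mul_sum, sum_boole, sum_const, card_univ, nsmul_eq_mul]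
  ring

section Dual

variable {V : Type*} [AddCommGroup V] [Module (ZMod 3) V] [Fintype V]

lemma sum_cubeRootTrace_add_eq_zero {φ : Dual (ZMod 3) V} (hφ : φ ≠ 0) (s : ZMod 3) :
    ∑ x, cubeRootTrace (s + φ x) = 0 := by
  obtain ⟨x, hx⟩ : ∃ x, φ x ≠ 0 := DFunLike.ne_iff.mp hφ
  have shift (s : ZMod 3) :
      ∑ y, cubeRootTrace (s + φ y) = ∑ y, cubeRootTrace (s + φ x + φ y) := by
    rw [← Equiv.sum_comp (Equiv.addLeft x)]
    simp only [Equiv.coe_addLeft, map_add, add_assoc]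
  have total : ∑ y, cubeRootTrace (s + φ y) + ∑ y, cubeRootTrace (s + φ x + φ y) +
      ∑ y, cubeRootTrace (s + φ x + φ x + φ y) = 0 := by
    simp only [← sum_add_distrib]
    refine sum_eq_zero fun y _ ↦ ?_
    simpa only [add_right_comm] using cubeRootTrace_add_shifts (s + φ y) hx
  rw [← shift (s + φ x), ← shift] at total
  lia

lemma sum_cubeRootTrace_dual [DecidableEq (Dual (ZMod 3) V)] (φ : Dual (ZMod 3) V) :
    ∑ x, cubeRootTrace (φ x) = if φ = 0 then 2 * (Fintype.card V : ℤ) else 0 := by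
  split_ifs with hφ
  · simp [hφ, cubeRootTrace_zero, mul_comm]
  · simpa using sum_cubeRootTrace_add_eq_zero hφ 0

variable {X : Type*} [AddGroup X] [Fintype X] {φ : X → Dual (ZMod 3) V}

lemma sum_sum_cubeRootTrace (hφ : Function.Injective φ) (h0 : φ 0 = 0) :
    ∑ a, ∑ x, cubeRootTrace (φ x a) = 2 * Fintype.card V := by
  classical
  have h (x : X) : φ x = 0 ↔ x = 0 := by rw [← h0, hφ.eq_iff]
  rw [sum_comm]
  simp [sum_cubeRootTrace_dual, h]

lemma sum_sum_cubeRootTrace_sq (hφ : Function.Injective φ) (hneg : ∀ x, φ (-x) = -φ x) :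
    ∑ a, (∑ x, cubeRootTrace (φ x a)) ^ 2 = 4 * Fintype.card V * Fintype.card X := by
  classical
  have hadd (x y : X) : φ x + φ y = 0 ↔ x = -y := by
    rw [add_eq_zero_iff_eq_neg, ← hneg, hφ.eq_iff]
  have hsub (x y : X) : φ x - φ y = 0 ↔ x = y := by rw [sub_eq_zero, hφ.eq_iff]
  calc ∑ a, (∑ x, cubeRootTrace (φ x a)) ^ 2
      = ∑ a, ∑ x, ∑ y, (cubeRootTrace ((φ x + φ y) a) + cubeRootTrace ((φ x - φ y) a)) := by
        simp only [sq, sum_mul_sum, cubeRootTrace_mul, LinearMap.add_apply, LinearMap.sub_apply]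
    _ = ∑ x, ∑ y, (∑ a, cubeRootTrace ((φ x + φ y) a) + ∑ a, cubeRootTrace ((φ x - φ y) a)) := by
        simp only [sum_comm (s := (univ : Finset V)), sum_add_distrib]
    _ = ∑ x : X, ∑ y : X, ((if x = -y then 2 * (Fintype.card V : ℤ) else 0) +
          if x = y then 2 * (Fintype.card V : ℤ) else 0) := by
        simp only [sum_cubeRootTrace_dual, hadd, hsub]
    _ = 4 * Fintype.card V * Fintype.card X := by
        simp only [sum_add_distrib, sum_ite_eq, mem_univ, if_true, ← neg_eq_iff_eq_neg, sum_const,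
          card_univ, nsmul_eq_mul]
        ring

end Dual

lemma eq_zero_or_eq_zero_of_sq_add_three_mul_sq_eq_pow {n : ℕ} {s t : ℤ}
    (h : s ^ 2 + 3 * t ^ 2 = 3 ^ n) : s = 0 ∨ t = 0 := by
  induction n generalizing s t with
  | zero =>
    right
    by_contra ht
    have : 0 < t ^ 2 := by positivity
    linarith [sq_nonneg s]
  | succ n ih =>
    rw [pow_succ (3 : ℤ)] at h
    obtain ⟨r, rfl⟩ : 3 ∣ s :=
      Int.prime_three.dvd_of_dvd_pow (n := 2) ⟨3 ^ n - t ^ 2, by linarith⟩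
    have descent : t ^ 2 + 3 * r ^ 2 = 3 ^ n := by linarith
    rcases ih descent with ht | hr
    · exact .inr ht
    · exact .inl (by simp [hr])

lemma even_sum_of_even {G : Type*} [AddGroup G] [Fintype G] (hG : ∀ x : G, -x = x → x = 0)
    {f : G → ℤ} (hf : f.Even) (h0 : Even (f 0)) : Even (∑ x, f x) := by
  rw [← ZMod.intCast_eq_zero_iff_even, Int.cast_sum]
  refine sum_involution (fun x _ ↦ -x) (fun x _ ↦ ?_) (fun x _ hx hneg ↦ hx ?_)
    (fun _ _ ↦ mem_univ _) (fun x _ ↦ neg_neg x)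
  · rw [hf, CharTwo.add_self_eq_zero]
  · rwa [hG x hneg, ZMod.intCast_eq_zero_iff_even]

section QuadraticForm

variable {V : Type*} [AddCommGroup V] [Module (ZMod 3) V] [Fintype V]
  (Q : QuadraticForm (ZMod 3) V)

lemma sum_sum_cubeRootTrace_sub :
    ∑ y, ∑ x, cubeRootTrace (Q x - Q y) = 2 * Fintype.card V * Nat.card Q.radical := by
  classical
  have : Invertible (2 : ZMod 3) := ⟨2, by decide, by decide⟩
  have inner (z : V) : ∑ y, cubeRootTrace (Q (y + z) - Q y) =
      if z ∈ Q.radical then 2 * (Fintype.card V : ℤ) else 0 := by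
    split_ifs with hz
    · have h (y : V) : Q (y + z) = Q y := by
        rw [add_comm, (QuadraticMap.mem_radical_iff'.mp hz).2]
      simp [h, cubeRootTrace_zero, mul_comm]
    · rw [QuadraticMap.radical_eq_ker_polarBilin, LinearMap.mem_ker] at hz
      rw [← sum_cubeRootTrace_add_eq_zero hz (Q z)]
      refine sum_congr rfl fun y _ ↦ congrArg cubeRootTrace ?_
      rw [QuadraticMap.polarBilin_apply_apply, QuadraticMap.polar_comm, QuadraticMap.polar]
      ring
  calc ∑ y, ∑ x, cubeRootTrace (Q x - Q y)
      = ∑ y, ∑ z, cubeRootTrace (Q (y + z) - Q y) :=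
        sum_congr rfl fun y _ ↦
          (Equiv.sum_comp (Equiv.addLeft y) fun x ↦ cubeRootTrace (Q x - Q y)).symm
    _ = ∑ z, if z ∈ Q.radical then 2 * (Fintype.card V : ℤ) else 0 := by
        rw [sum_comm]
        exact sum_congr rfl fun z _ ↦ inner z
    _ = 2 * Fintype.card V * Nat.card Q.radical := by
        rw [← sum_filter, sum_const, nsmul_eq_mul, mul_comm, Nat.card_eq_fintype_card,
          Fintype.card_subtype]

lemma sq_sum_cubeRootTrace_add :
    (∑ x, cubeRootTrace (Q x)) ^ 2 + 3 * (∑ x, quadraticChar (ZMod 3) (Q x)) ^ 2 =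
      4 * Fintype.card V * Nat.card Q.radical := by
  calc _ = 2 * ∑ y, ∑ x, cubeRootTrace (Q x - Q y) := by
        rw [sum_comm, sq, sq, sum_mul_sum, sum_mul_sum]
        simp only [mul_sum, ← sum_add_distrib, two_mul_cubeRootTrace_sub]
    _ = _ := by rw [sum_sum_cubeRootTrace_sub]; ring

theorem exists_sum_cubeRootTrace_eq_two_mul :
    ∃ s : ℤ, ∑ x, cubeRootTrace (Q x) = 2 * s ∧
      (s = 0 ∨ s ^ 2 = 3 ^ (finrank (ZMod 3) V + finrank (ZMod 3) Q.radical)) := by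
  have hV (x : V) (hx : -x = x) : x = 0 := by
    have h2 : (2 : ZMod 3) • x = 0 := by rw [two_smul]; nth_rw 1 [← hx]; exact neg_add_cancel x
    exact (smul_eq_zero.mp h2).resolve_left (by decide)
  obtain ⟨s, hs⟩ := (even_sum_of_even (f := fun x ↦ cubeRootTrace (Q x)) hV
    (fun x ↦ by simp only [QuadraticMap.map_neg]) (by simp [cubeRootTrace_zero])).exists_two_nsmul
  obtain ⟨t, ht⟩ := (even_sum_of_even (f := fun x ↦ quadraticChar (ZMod 3) (Q x)) hV
    (fun x ↦ by simp only [QuadraticMap.map_neg]) (by simp)).exists_two_nsmul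
  rw [two_nsmul, ← two_mul] at hs ht
  have hst := sq_sum_cubeRootTrace_add Q
  rw [card_eq_pow_finrank (K := ZMod 3) (V := V),
    natCard_eq_pow_finrank (K := ZMod 3) (V := Q.radical), ZMod.card, Nat.card_zmod, hs, ht] at hst
  push_cast at hst
  have hnorm : s ^ 2 + 3 * t ^ 2 = 3 ^ (finrank (ZMod 3) V + finrank (ZMod 3) Q.radical) := by
    rw [pow_add]
    linarith
  refine ⟨s, hs, ?_⟩
  rcases eq_zero_or_eq_zero_of_sq_add_three_mul_sq_eq_pow hnorm with hs0 | rfl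
  · exact .inl hs0
  · exact .inr (by simpa using hnorm)

end QuadraticForm

section Twisted

variable {K L : Type*} [Field K] [Field L] [Algebra K L]

lemma finrank_ker_twisted_le_one {σ : L →ₐ[K] L}
    (hσ : ∀ x, σ x = x → x ∈ Set.range (algebraMap K L)) {A : L} (hA : A ≠ 0) (C : L) :
    finrank K (A • σ.toLinearMap - C • LinearMap.id).ker ≤ 1 := by
  by_cases h : ∃ w : (A • σ.toLinearMap - C • LinearMap.id).ker, w ≠ 0
  · obtain ⟨⟨w, hw⟩, hw0⟩ := h
    replace hw0 : w ≠ 0 := by simpa using hw0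
    refine finrank_le_one ⟨w, hw⟩ fun ⟨z, hz⟩ ↦ ?_
    simp only [LinearMap.mem_ker, LinearMap.sub_apply, LinearMap.smul_apply,
      AlgHom.toLinearMap_apply, LinearMap.id_apply, smul_eq_mul] at hw hz
    have hfix : σ (z / w) = z / w := by
      rw [map_div₀, div_eq_div_iff (by simpa using hw0) hw0]
      exact mul_left_cancel₀ hA (by linear_combination w * hz - z * hw)
    obtain ⟨c, hc⟩ := hσ _ hfix
    refine ⟨c, Subtype.ext ?_⟩
    rw [Submodule.coe_smul, Algebra.smul_def, hc, div_mul_cancel₀ z hw0]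
  · push Not at h
    have := subsingleton_of_forall_eq 0 h
    simp [finrank_zero_of_subsingleton]

lemma finrank_ker_twisted_le_two [FiniteDimensional K L] {σ : L →ₐ[K] L}
    (hσ : ∀ x, σ x = x → x ∈ Set.range (algebraMap K L)) {A : L} (hA : A ≠ 0) (B C : L) :
    finrank K (A • (σ.toLinearMap ∘ₗ σ.toLinearMap) + B • σ.toLinearMap +
      C • LinearMap.id).ker ≤ 2 := by
  set S := (A • (σ.toLinearMap ∘ₗ σ.toLinearMap) + B • σ.toLinearMap + C • LinearMap.id).ker
    with hS
  by_cases h : ∃ w ∈ S, w ≠ 0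
  · obtain ⟨w, hw, hw0⟩ := h
    -- The Wronskian of `w` and a further solution satisfies a first-order equation.
    let W : L →ₗ[K] L := w • σ.toLinearMap - σ w • LinearMap.id
    have hW : ∀ z ∈ S, W z ∈ (A • σ.toLinearMap - C • LinearMap.id).ker := fun z hz ↦ by
      simp only [hS, W, LinearMap.mem_ker, LinearMap.add_apply, LinearMap.sub_apply,
        LinearMap.smul_apply, LinearMap.comp_apply, AlgHom.toLinearMap_apply, LinearMap.id_apply,
        smul_eq_mul, map_sub, map_mul] at hw hz ⊢
      linear_combination σ w * hz - σ z * hw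
    have hker : finrank K (W.restrict hW).ker ≤ 1 := by
      rw [LinearMap.ker_restrict, ← Submodule.finrank_map_subtype_eq]
      exact (Submodule.finrank_mono (Submodule.map_comap_le _ _)).trans
        (finrank_ker_twisted_le_one hσ hw0 (σ w))
    have hrange : finrank K (W.restrict hW).range ≤ 1 :=
      (Submodule.finrank_le _).trans (finrank_ker_twisted_le_one hσ hA C)
    rw [← (W.restrict hW).finrank_range_add_finrank_ker]
    lia
  · push Not at h
    rw [(Submodule.eq_bot_iff S).mpr h, finrank_bot]
    exact zero_le_two

/-- The quadratic form `x ↦ Tr (a * σ x * x + b * x ^ 2)` of a field automorphism `σ`; for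
`σ x = x ^ 3 ^ k` these are the forms into which the codewords transform. -/
noncomputable def twistedForm (σ : L ≃ₐ[K] L) (a b : L) : QuadraticForm K L :=
  LinearMap.BilinMap.toQuadraticMap
    (Algebra.traceForm K L ∘ₗ (a • σ.toLinearMap + b • LinearMap.id))

lemma twistedForm_apply (σ : L ≃ₐ[K] L) (a b x : L) :
    twistedForm σ a b x = Algebra.trace K L ((a * σ x + b * x) * x) := rfl

lemma polarBilin_twistedForm_apply (σ : L ≃ₐ[K] L) (a b x y : L) :
    (twistedForm σ a b).polarBilin x y =
      Algebra.trace K L ((σ a * σ (σ x) + 2 * σ b * σ x + a * x) * σ y) := by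
  have hσ := Algebra.trace_eq_of_algEquiv σ ((a * σ x + 2 * b * x) * y)
  calc (twistedForm σ a b).polarBilin x y
      = Algebra.trace K L ((a * σ x + b * x) * y) + Algebra.trace K L ((a * σ y + b * y) * x) := by
        rw [twistedForm, LinearMap.BilinMap.polarBilin_toQuadraticMap]
        rfl
    _ = Algebra.trace K L ((a * σ x + 2 * b * x) * y) + Algebra.trace K L (a * x * σ y) := by
        rw [← map_add, ← map_add]
        congr 1
        ring
    _ = _ := by
        rw [← hσ, ← map_add]
        congr 1
        simp only [map_mul, map_add, map_ofNat]
        ring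

variable [FiniteDimensional K L]

lemma radical_twistedForm_le [Algebra.IsSeparable K L] (σ : L ≃ₐ[K] L) (a b : L) :
    (twistedForm σ a b).radical ≤
      (σ a • (σ.toLinearMap ∘ₗ σ.toLinearMap) + (2 * σ b) • σ.toLinearMap +
        a • LinearMap.id).ker := by
  intro x hx
  have hx := LinearMap.mem_ker.mp (QuadraticMap.radical_le_ker_polarBilin hx)
  refine (traceForm_nondegenerate K L).1 _ fun y ↦ ?_
  rw [← σ.apply_symm_apply y, Algebra.traceForm_apply]
  exact (polarBilin_twistedForm_apply σ a b x _).symm.trans (by rw [hx, LinearMap.zero_apply])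

lemma finrank_radical_twistedForm_le_two [Algebra.IsSeparable K L] [NeZero (2 : L)]
    {σ : L ≃ₐ[K] L} (hσ : ∀ x, σ x = x → x ∈ Set.range (algebraMap K L)) {a b : L}
    (hab : a ≠ 0 ∨ b ≠ 0) : finrank K (twistedForm σ a b).radical ≤ 2 := by
  refine (Submodule.finrank_mono (radical_twistedForm_le σ a b)).trans ?_
  obtain rfl | ha := eq_or_ne a 0
  · have hb : 2 * σ b ≠ 0 := mul_ne_zero two_ne_zero (by simpa using hab)
    have h := finrank_ker_twisted_le_one (σ := (σ : L →ₐ[K] L)) hσ hb 0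
    exact (Submodule.finrank_mono fun x hx ↦ by simpa using hx).trans (h.trans one_le_two)
  · exact finrank_ker_twisted_le_two (σ := (σ : L →ₐ[K] L)) hσ (by simpa using ha) _ a

end Twisted

lemma mem_range_algebraMap_of_frobenius_pow_apply_eq {K L : Type*} [Field K] [Fintype K] [Field L]
    [Finite L] [Algebra K L] {k : ℕ} (hk : (finrank K L).Coprime k) {x : L}
    (hx : (FiniteField.frobeniusAlgEquivOfAlgebraic K L ^ k) x = x) :
    x ∈ Set.range (algebraMap K L) := by
  rw [← IntermediateField.mem_bot, IsGalois.mem_bot_iff_fixed]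
  rw [← IsGalois.card_aut_eq_finrank] at hk
  intro τ
  obtain ⟨ρ, rfl⟩ := hk.pow_left_bijective.surjective τ
  obtain ⟨n, rfl⟩ := (FiniteField.bijective_frobeniusAlgEquivOfAlgebraic_pow K L).surjective ρ
  dsimp only
  rw [pow_right_comm, AlgEquiv.coe_pow (n := n)]
  exact Function.iterate_fixed hx n

lemma even_of_isSquare_prime_pow {p n : ℕ} (hp : p.Prime) (h : IsSquare (p ^ n)) : Even n := by
  obtain ⟨r, hr⟩ := h
  have := congrArg (·.factorization p) hr
  have hr0 : r ≠ 0 := by rintro rfl; simp [hp.ne_zero] at hr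
  exact ⟨r.factorization p, by
    simpa [hp.factorization_self, Nat.factorization_mul hr0 hr0] using this⟩

section FiniteField

lemma pow_bijective_of_coprime {F : Type*} [Field F] [Fintype F] {n : ℕ} (hn : n ≠ 0)
    (h : (Fintype.card F - 1).Coprime n) : Function.Bijective fun x : F ↦ x ^ n := by
  classical
  have hunits : Function.Injective fun u : Fˣ ↦ u ^ n :=
    (Nat.Coprime.pow_left_bijective (by
      rwa [Nat.card_eq_fintype_card, Fintype.card_units])).injective
  refine Finite.injective_iff_bijective.mp fun x y (hxy : x ^ n = y ^ n) ↦ ?_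
  rcases eq_or_ne x 0 with rfl | hx
  · rw [zero_pow hn, eq_comm, pow_eq_zero_iff hn] at hxy
    exact hxy.symm
  · have hy : y ≠ 0 := by
      rintro rfl
      exact hx ((pow_eq_zero_iff hn).mp (hxy.trans (zero_pow hn)))
    have := @hunits (Units.mk0 x hx) (Units.mk0 y hy) (Units.ext hxy)
    exact congrArg Units.val this

lemma coprime_two_mul_add_of_mul_modEq_two {p v e : ℕ} (hp : Odd p) (he : Even e)
    (h : v * e ≡ 2 [MOD 2 * p]) : (2 * p).Coprime (e + p) := by
  refine Nat.Coprime.mul_left (Nat.coprime_two_left.mpr (he.add_odd hp)) ?_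
  rw [Nat.coprime_add_self_right]
  refine Nat.Coprime.coprime_mul_left_right (k := v) ?_
  rw [Nat.coprime_iff_gcd_eq_one, Nat.gcd_comm, (h.of_mul_left 2).gcd_eq]
  exact Nat.coprime_two_left.mpr hp

lemma exists_odd_three_pow_eq {m : ℕ} (hm : Odd m) : ∃ p, Odd p ∧ 3 ^ m = 2 * p + 1 := by
  obtain ⟨j, rfl⟩ := hm
  have h4 : 3 ^ (2 * j + 1) % 4 = 3 := by
    rw [pow_succ, pow_mul, Nat.mul_mod, Nat.pow_mod]
    norm_num
  exact ⟨3 ^ (2 * j + 1) / 2, Nat.odd_iff.mpr (by lia), by lia⟩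

lemma sum_eq_apply_zero_add_sum_units {F M : Type*} [Field F] [Fintype F] [DecidableEq F]
    [AddCommMonoid M] (f : F → M) : ∑ x, f x = f 0 + ∑ u : Fˣ, f u := by
  rw [Fintype.sum_eq_add_sum_subtype_ne f 0, ← unitsEquivNeZero.sum_comp]
  rfl

lemma bijective_pow_of_forall_mem_zpowers {G : Type*} [Group G] [Finite G] {α : G}
    (hα : ∀ x, x ∈ Subgroup.zpowers α) {n : ℕ} (hn : Nat.card G = n) :
    Function.Bijective fun i : Fin n ↦ α ^ (i : ℕ) := by
  obtain rfl : orderOf α = n := by rw [orderOf_eq_card_of_forall_mem_zpowers hα, hn]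
  refine Function.Injective.bijective_of_nat_card_le (fun i j hij ↦ Fin.ext ?_) (by simp [hn])
  exact pow_injOn_Iio_orderOf i.2 j.2 hij

-- The vanishing at `0` accounts for the coordinate that the code omits.
lemma three_mul_hammingNorm_eq {F : Type*} [Field F] [Fintype F] {α : Fˣ}
    (hα : ∀ x, x ∈ Subgroup.zpowers α) {n : ℕ} (hF : Fintype.card F = n + 1) {g : F → ZMod 3}
    (hg : g 0 = 0) :
    3 * (hammingNorm fun i : Fin n ↦ g ((α : F) ^ (i : ℕ)) : ℤ) =
      2 * Fintype.card F - ∑ x, cubeRootTrace (g x) := by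
  classical
  have hn : Nat.card Fˣ = n := by
    rw [Nat.card_eq_fintype_card, Fintype.card_units, hF, Nat.add_sub_cancel]
  have hsum : ∑ i : Fin n, cubeRootTrace (g ((α : F) ^ (i : ℕ))) =
      ∑ u : Fˣ, cubeRootTrace (g u) :=
    (bijective_pow_of_forall_mem_zpowers hα hn).sum_comp fun u : Fˣ ↦ cubeRootTrace (g u)
  rw [sum_eq_apply_zero_add_sum_units, ← hsum, sum_cubeRootTrace_eq_sub, hg, cubeRootTrace_zero,
    hF, hammingNorm, Fintype.card_fin]
  push_cast
  ring

end FiniteField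

section Code

variable {F : Type*} [Field F] [Algebra (ZMod 3) F]

/-- The coordinate of the code at `x : F`, as a linear functional of the pair `(a, b)`: it sends
`(a, b)` to `Tr (a * x + b * x ^ v)`. -/
noncomputable def coordinate (v : ℕ) (x : F) : Dual (ZMod 3) (F × F) :=
  (Algebra.traceForm (ZMod 3) F x).coprod (Algebra.traceForm (ZMod 3) F (x ^ v))

lemma coordinate_apply (v : ℕ) (x : F) (ab : F × F) :
    coordinate v x ab =
      Algebra.trace (ZMod 3) F (ab.1 * x) + Algebra.trace (ZMod 3) F (ab.2 * x ^ v) := by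
  rw [coordinate, LinearMap.coprod_apply, Algebra.traceForm_apply, Algebra.traceForm_apply,
    mul_comm x, mul_comm (x ^ v)]

lemma coordinate_neg {v : ℕ} (hv : Odd v) (x : F) : coordinate v (-x) = -coordinate v x := by
  ext <;> simp [coordinate, hv.neg_pow]

lemma coordinate_zero {v : ℕ} (hv : v ≠ 0) : coordinate v (0 : F) = 0 := by
  ext <;> simp [coordinate, hv]

lemma coordinate_injective [Finite F] (v : ℕ) : Function.Injective (coordinate v : F → _) := by
  intro x y hxy
  have hker := LinearMap.separatingLeft_iff_ker_eq_bot.mp (traceForm_nondegenerate (ZMod 3) F).1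
  refine LinearMap.ker_eq_bot.mp hker (LinearMap.ext fun a ↦ ?_)
  simpa [coordinate] using LinearMap.congr_fun hxy (a, 0)

variable [Fintype F]

/-- The exponential sum `∑ x, (ω ^ Tr (a * x + b * x ^ v) + ω ^ (-Tr (a * x + b * x ^ v)))`, which
determines the weight of the codeword of `(a, b)`. -/
noncomputable def expSum (v : ℕ) (ab : F × F) : ℤ := ∑ x, cubeRootTrace (coordinate v x ab)

lemma expSum_zero (v : ℕ) : expSum v (0 : F × F) = 2 * Fintype.card F := by
  simp [expSum, cubeRootTrace_zero, mul_comm]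

lemma sum_expSum {v : ℕ} (hv : v ≠ 0) :
    ∑ ab : F × F, expSum v ab = 2 * Fintype.card F ^ 2 := by
  refine (sum_sum_cubeRootTrace (coordinate_injective v) (coordinate_zero hv)).trans ?_
  rw [Fintype.card_prod]
  push_cast
  ring

lemma sum_expSum_sq {v : ℕ} (hv : Odd v) :
    ∑ ab : F × F, expSum v ab ^ 2 = 4 * Fintype.card F ^ 3 := by
  refine (sum_sum_cubeRootTrace_sq (coordinate_injective v) (coordinate_neg hv)).trans ?_
  rw [Fintype.card_prod]
  push_cast
  ring

-- Substitute `x = y ^ (e + p)`; since `y ^ p = ±1`, both `x` and `x ^ v` pick up the same sign.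
lemma expSum_eq_sum_trace_pow {p v e : ℕ} (hp : Odd p) (hF : Fintype.card F = 2 * p + 1)
    (hv : Odd v) (he : Even e) (he0 : e ≠ 0) (h : v * e ≡ 2 [MOD 2 * p]) (ab : F × F) :
    expSum v ab =
      ∑ y, cubeRootTrace (Algebra.trace (ZMod 3) F (ab.1 * y ^ e + ab.2 * y ^ 2)) := by
  have hbij : Function.Bijective fun y : F ↦ y ^ (e + p) :=
    pow_bijective_of_coprime (by lia) (by
      rw [hF, Nat.add_sub_cancel]
      exact coprime_two_mul_add_of_mul_modEq_two hp he h)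
  rw [expSum, ← hbij.sum_comp]
  refine sum_congr rfl fun y _ ↦ ?_
  rw [coordinate_apply, ← map_add]
  rcases eq_or_ne y 0 with rfl | hy
  · rw [zero_pow (by lia), zero_pow hv.pos.ne', zero_pow he0, zero_pow two_ne_zero]
  have hcard : y ^ (2 * p) = 1 := by
    simpa only [hF, Nat.add_sub_cancel] using FiniteField.pow_card_sub_one_eq_one y hy
  have hye : (y ^ e) ^ v = y ^ 2 := by
    rw [← pow_mul, mul_comm, pow_eq_pow_of_modEq h hcard]
  have hyp : y ^ p = 1 ∨ y ^ p = -1 := by rwa [← sq_eq_one_iff, ← pow_mul, mul_comm]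
  rcases hyp with hyp | hyp
  · rw [pow_add, hyp, mul_one, hye]
  · rw [pow_add, hyp, mul_neg_one, hv.neg_pow, hye, mul_neg, mul_neg, ← neg_add, map_neg,
      cubeRootTrace_neg]

lemma expSum_eq_sum_twistedForm {j k v : ℕ} (hF : Fintype.card F = 3 ^ (2 * j + 1)) (hv : Odd v)
    (h : v * (3 ^ k + 1) ≡ 2 [MOD 3 ^ (2 * j + 1) - 1]) (ab : F × F) :
    expSum v ab = ∑ y, cubeRootTrace
      (twistedForm (FiniteField.frobeniusAlgEquivOfAlgebraic (ZMod 3) F ^ k) ab.1 ab.2 y) := by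
  obtain ⟨p, hp, hq⟩ := exists_odd_three_pow_eq (odd_two_mul_add_one j)
  rw [hq, Nat.add_sub_cancel] at h
  rw [expSum_eq_sum_trace_pow hp (hF.trans hq) hv ((Odd.pow (by decide)).add_odd odd_one)
    (Nat.succ_ne_zero _) h]
  refine sum_congr rfl fun y _ ↦ ?_
  rw [twistedForm_apply, AlgEquiv.coe_pow, FiniteField.coe_frobeniusAlgEquivOfAlgebraic_iterate,
    ZMod.card]
  congr 2
  ring

theorem expSum_eq_zero_or_eq_or_eq_neg {j k v : ℕ} (hF : Fintype.card F = 3 ^ (2 * j + 1))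
    (hk : (2 * j + 1).Coprime k) (hv : Odd v)
    (h : v * (3 ^ k + 1) ≡ 2 [MOD 3 ^ (2 * j + 1) - 1]) {ab : F × F} (hab : ab ≠ 0) :
    expSum v ab = 0 ∨ expSum v ab = 6 * 3 ^ j ∨ expSum v ab = -(6 * 3 ^ j) := by
  have hdim : finrank (ZMod 3) F = 2 * j + 1 := by
    rw [card_eq_pow_finrank (K := ZMod 3), ZMod.card] at hF
    exact Nat.pow_right_injective (Nat.le_succ 2) hF
  have : CharP F 3 := charP_of_injective_algebraMap (algebraMap (ZMod 3) F).injective 3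
  have : NeZero (2 : F) := ⟨Ring.two_ne_zero (by rw [ringChar.eq F 3]; decide)⟩
  set Q := twistedForm (FiniteField.frobeniusAlgEquivOfAlgebraic (ZMod 3) F ^ k) ab.1 ab.2
  have hrad : finrank (ZMod 3) Q.radical ≤ 2 := by
    refine finrank_radical_twistedForm_le_two (fun x hx ↦ ?_) ?_
    · exact mem_range_algebraMap_of_frobenius_pow_apply_eq (hdim.symm ▸ hk) hx
    · contrapose! hab
      exact Prod.ext hab.1 hab.2
  rw [expSum_eq_sum_twistedForm hF hv h]
  obtain ⟨s, hs, hs0 | hs2⟩ := exists_sum_cubeRootTrace_eq_two_mul Q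
  · exact .inl (by rw [hs, hs0, mul_zero])
  right
  have heven : Even (finrank (ZMod 3) F + finrank (ZMod 3) Q.radical) :=
    even_of_isSquare_prime_pow Nat.prime_three ⟨s.natAbs, by
      zify
      rw [← sq, sq_abs, hs2]⟩
  have hexp : finrank (ZMod 3) F + finrank (ZMod 3) Q.radical = (j + 1) * 2 := by
    rw [hdim] at heven ⊢
    obtain ⟨i, hi⟩ := heven
    lia
  rw [hexp, pow_mul, sq_eq_sq_iff_eq_or_eq_neg, pow_succ] at hs2
  rw [hs]
  rcases hs2 with rfl | rfl
  · left; ring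
  · right; ring

end Code

section Counting

variable {ι : Type*} {P : Finset ι} {f : ι → ℤ} {A : ℤ}

lemma two_mul_sq_mul_card_filter_eq (hA : A ≠ 0) (hf : ∀ i ∈ P, f i = 0 ∨ f i = A ∨ f i = -A) :
    2 * A ^ 2 * #{i ∈ P | f i = A} = ∑ i ∈ P, f i ^ 2 + A * ∑ i ∈ P, f i := by
  have hneg : -A ≠ A := by lia
  rw [mul_sum, ← sum_add_distrib, card_filter, Nat.cast_sum, mul_sum]
  refine sum_congr rfl fun i hi ↦ ?_
  rcases hf i hi with h | h | h <;> rw [h]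
  · rw [if_neg hA.symm]
    push_cast
    ring
  · rw [if_pos rfl]
    push_cast
    ring
  · rw [if_neg hneg]
    push_cast
    ring

lemma sq_mul_card_filter_eq_zero (hA : A ≠ 0) (hf : ∀ i ∈ P, f i = 0 ∨ f i = A ∨ f i = -A) :
    A ^ 2 * #{i ∈ P | f i = 0} = A ^ 2 * #P - ∑ i ∈ P, f i ^ 2 := by
  rw [card_eq_sum_ones P, card_filter, Nat.cast_sum,
    Nat.cast_sum, mul_sum, mul_sum, ← sum_sub_distrib]
  refine sum_congr rfl fun i hi ↦ ?_
  rcases hf i hi with h | h | h <;> simp [h, hA]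

end Counting

section Distribution

variable {F : Type*} [Field F] [Fintype F] [Algebra (ZMod 3) F] {v : ℕ}

lemma setOf_hammingNorm_eq {α : Fˣ} (hα : ∀ x, x ∈ Subgroup.zpowers α) {n : ℕ}
    (hF : Fintype.card F = n + 1) (hv : v ≠ 0) (w : ℕ) :
    {ab : F × F | hammingNorm (fun i : Fin n ↦
      Algebra.trace (ZMod 3) F (ab.1 * (α : F) ^ (i : ℕ)) +
        Algebra.trace (ZMod 3) F (ab.2 * (α : F) ^ ((i : ℕ) * v))) = w} =
      {ab : F × F | expSum v ab = 2 * Fintype.card F - 3 * w} := by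
  ext ab
  have h := three_mul_hammingNorm_eq hα hF (g := fun x ↦ coordinate v x ab)
    (by rw [coordinate_zero hv, LinearMap.zero_apply])
  simp only [coordinate_apply, ← pow_mul] at h
  simp only [Set.mem_ofPred_eq, expSum, coordinate_apply]
  lia

section

variable [DecidableEq F]

lemma sum_compl_zero_expSum (hv : v ≠ 0) :
    ∑ ab ∈ ({0}ᶜ : Finset (F × F)), expSum v ab =
      2 * Fintype.card F * (Fintype.card F - 1) := by
  have h := sum_expSum (F := F) hv
  rw [Fintype.sum_eq_add_sum_compl 0, expSum_zero] at h
  linear_combination h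

lemma sum_compl_zero_expSum_sq (hv : Odd v) :
    ∑ ab ∈ ({0}ᶜ : Finset (F × F)), expSum v ab ^ 2 =
      4 * Fintype.card F ^ 2 * (Fintype.card F - 1) := by
  have h := sum_expSum_sq (F := F) hv
  rw [Fintype.sum_eq_add_sum_compl 0, expSum_zero] at h
  linear_combination h

variable {s : ℤ}

lemma two_mul_card_expSum_eq (hF : (Fintype.card F : ℤ) = 3 * s ^ 2) (hv : Odd v) (hs : s ≠ 0)
    (h : ∀ ab ∈ ({0}ᶜ : Finset (F × F)),
      expSum v ab = 0 ∨ expSum v ab = 6 * s ∨ expSum v ab = -(6 * s)) :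
    2 * (#{ab ∈ ({0}ᶜ : Finset (F × F)) | expSum v ab = 6 * s} : ℤ) =
      (3 * s ^ 2 - 1) * (s ^ 2 + s) := by
  have hcount := two_mul_sq_mul_card_filter_eq (mul_ne_zero (by decide) hs) h
  rw [sum_compl_zero_expSum hv.pos.ne', sum_compl_zero_expSum_sq hv, hF] at hcount
  apply mul_left_cancel₀ (pow_ne_zero 2 (mul_ne_zero (by decide : (6 : ℤ) ≠ 0) hs))
  linear_combination hcount

lemma card_expSum_eq_zero (hF : (Fintype.card F : ℤ) = 3 * s ^ 2) (hv : Odd v) (hs : s ≠ 0)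
    (h : ∀ ab ∈ ({0}ᶜ : Finset (F × F)),
      expSum v ab = 0 ∨ expSum v ab = 6 * s ∨ expSum v ab = -(6 * s)) :
    (#{ab ∈ ({0}ᶜ : Finset (F × F)) | expSum v ab = 0} : ℤ) =
      (3 * s ^ 2 - 1) * (3 * s ^ 2 - s ^ 2 + 1) := by
  have hcount := sq_mul_card_filter_eq_zero (mul_ne_zero (by decide) hs) h
  have hcard : (#({0}ᶜ : Finset (F × F)) : ℤ) = (3 * s ^ 2) ^ 2 - 1 := by
    rw [card_compl, card_singleton, Fintype.card_prod,
      Nat.cast_sub (Nat.mul_pos Fintype.card_pos Fintype.card_pos)]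
    push_cast
    rw [hF]
    ring
  rw [sum_compl_zero_expSum_sq hv, hcard, hF] at hcount
  apply mul_left_cancel₀ (pow_ne_zero 2 (mul_ne_zero (by decide : (6 : ℤ) ≠ 0) hs))
  linear_combination hcount

end

lemma expSum_eq_two_mul_card_iff {s : ℕ} (hF : Fintype.card F = 3 * s ^ 2) (hs : 1 < s)
    (h : ∀ ab : F × F, ab ≠ 0 → expSum v ab = 0 ∨ expSum v ab = 6 * s ∨ expSum v ab = -(6 * s))
    {ab : F × F} : expSum v ab = 2 * Fintype.card F ↔ ab = 0 := by
  refine ⟨fun hab ↦ ?_, fun hab ↦ hab ▸ expSum_zero v⟩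
  by_contra hab0
  have hs2 : s < s ^ 2 := by nlinarith
  rcases h ab hab0 with h | h | h <;> lia

theorem ncard_setOf_expSum_eq {s : ℕ} (hF : Fintype.card F = 3 * s ^ 2) (hs : 1 < s) (hv : Odd v)
    (h : ∀ ab : F × F, ab ≠ 0 → expSum v ab = 0 ∨ expSum v ab = 6 * s ∨ expSum v ab = -(6 * s))
    (t : ℤ) :
    {ab : F × F | expSum v ab = t}.ncard =
      if t = 6 * s ^ 2 then 1
      else if t = 6 * s then (3 * s ^ 2 - 1) * (s ^ 2 + s) / 2
      else if t = 0 then (3 * s ^ 2 - 1) * (3 * s ^ 2 - s ^ 2 + 1)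
      else if t = -(6 * s) then (3 * s ^ 2 - 1) * (s ^ 2 - s) / 2
      else 0 := by
  classical
  have hs0 : (s : ℤ) ≠ 0 := by lia
  have hss : 1 ≤ 3 * s ^ 2 := by nlinarith
  have hFs : (Fintype.card F : ℤ) = 3 * (s : ℤ) ^ 2 := by exact_mod_cast hF
  have hmax (ab : F × F) : expSum v ab = 6 * s ^ 2 ↔ ab = 0 := by
    rw [← expSum_eq_two_mul_card_iff hF hs h, hFs]
    ring_nf
  have h' (ab : F × F) (hab : ab ∈ ({0}ᶜ : Finset (F × F))) := h ab (by simpa using hab)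
  have hset (ht : t ≠ 6 * s ^ 2) : {ab : F × F | expSum v ab = t} =
      ({ab ∈ ({0}ᶜ : Finset (F × F)) | expSum v ab = t} : Finset (F × F)) := by
    ext ab
    have : expSum v ab = t → ab ≠ 0 := by rintro rfl; exact (hmax ab).not.mp ht
    simpa using this
  split_ifs with h1 h2 h3 h4
  · simp only [h1, hmax, Set.ofPred_eq_eq_singleton, Set.ncard_singleton]
  · rw [hset h1, Set.ncard_coe_finset, h2]
    have := two_mul_card_expSum_eq hFs hv hs0 h'
    refine (Nat.div_eq_of_eq_mul_right two_pos ?_).symm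
    zify [hss]
    exact this.symm
  · rw [hset h1, Set.ncard_coe_finset, h3]
    zify [hss, show s ^ 2 ≤ 3 * s ^ 2 by nlinarith]
    exact card_expSum_eq_zero hFs hv hs0 h'
  · rw [hset h1, Set.ncard_coe_finset, h4]
    have := two_mul_card_expSum_eq (s := -s) (by simpa using hFs) hv (by simpa using hs0)
      (fun ab hab ↦ by simpa [or_comm] using h' ab hab)
    refine (Nat.div_eq_of_eq_mul_right two_pos ?_).symm
    zify [hss, show s ≤ s ^ 2 by nlinarith]
    simpa [sub_eq_add_neg] using this.symm
  · rw [hset h1, Set.ncard_coe_finset, card_eq_zero, filter_eq_empty_iff]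
    intro ab hab
    have := h' ab hab
    lia

end Distribution

section Exponent

lemma coprime_of_add_one_eq_mul {m k l : ℕ} (h : m + 1 = l * k) : m.Coprime k := by
  have : m.Coprime (m + 1) := by simp
  exact (h ▸ this).coprime_mul_left_right

variable {m k : ℕ}

lemma odd_exponent (hm : Odd m) :
    Odd ((3 ^ k - 1) * (3 ^ (2 * k) + 1) * (3 ^ (4 * k) + 1) + (3 ^ m - 1) / 2) := by
  obtain ⟨p, hp, hq⟩ := exists_odd_three_pow_eq hm
  have heven : Even (3 ^ k - 1) := Nat.Odd.sub_odd (Odd.pow (by decide)) odd_one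
  rw [hq, Nat.add_sub_cancel, Nat.mul_div_cancel_left p two_pos]
  exact ((heven.mul_right _).mul_right _).add_odd hp

lemma exponent_mul_modEq_two (hm : m + 1 = 8 * k) :
    ((3 ^ k - 1) * (3 ^ (2 * k) + 1) * (3 ^ (4 * k) + 1) + (3 ^ m - 1) / 2) * (3 ^ k + 1) ≡ 2
      [MOD 3 ^ m - 1] := by
  obtain ⟨x, hx⟩ : Odd (3 ^ k) := Odd.pow (by decide)
  obtain ⟨p, -, hq⟩ := exists_odd_three_pow_eq (m := m) (Nat.odd_iff.mpr (by lia))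
  have h8 : (2 * x + 1) ^ 8 = 3 * (2 * p + 1) := by
    rw [← hx, ← hq, ← pow_mul, mul_comm k, ← hm, pow_succ']
  rw [mul_comm 2 k, mul_comm 4 k, pow_mul, pow_mul, hx, hq, Nat.add_sub_cancel, Nat.add_sub_cancel,
    Nat.mul_div_cancel_left p two_pos]
  -- The first product times `3 ^ k + 1` telescopes to `3 ^ (8 * k) - 1 = 3 * 3 ^ m - 1`.
  have hmul : (2 * x * ((2 * x + 1) ^ 2 + 1) * ((2 * x + 1) ^ 4 + 1) + p) * (2 * x + 1 + 1) =
      2 + 2 * p * (x + 4) := by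
    zify at h8 ⊢
    linear_combination h8
  rw [hmul]
  simp [Nat.ModEq]

end Exponent

end TernaryCode

open TernaryCode in
theorem stmt17_general {m k v : ℕ} (hm : Odd m) (hm1 : 1 < m) (hk : m.Coprime k) (hv : Odd v)
    (hvk : v * (3 ^ k + 1) ≡ 2 [MOD 3 ^ m - 1])
    {F : Type*} [Field F] [Fintype F] [Algebra (ZMod 3) F] (hF : Fintype.card F = 3 ^ m)
    (α : Fˣ) (hα : ∀ x : Fˣ, x ∈ Subgroup.zpowers α) (w : ℕ) :
    {ab : F × F | hammingNorm (fun i : Fin (3 ^ m - 1) ↦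
      Algebra.trace (ZMod 3) F (ab.1 * (α : F) ^ (i : ℕ)) +
        Algebra.trace (ZMod 3) F (ab.2 * (α : F) ^ ((i : ℕ) * v))) = w}.ncard =
      if w = 0 then 1
      else if w = 2 * (3 ^ (m - 1) - 3 ^ ((m - 1) / 2)) then
        (3 ^ m - 1) * (3 ^ (m - 1) + 3 ^ ((m - 1) / 2)) / 2
      else if w = 2 * 3 ^ (m - 1) then
        (3 ^ m - 1) * (3 ^ m - 3 ^ (m - 1) + 1)
      else if w = 2 * (3 ^ (m - 1) + 3 ^ ((m - 1) / 2)) then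
        (3 ^ m - 1) * (3 ^ (m - 1) - 3 ^ ((m - 1) / 2)) / 2
      else 0 := by
  classical
  obtain ⟨j, rfl⟩ := hm
  have hspec (ab : F × F) (hab : ab ≠ 0) := expSum_eq_zero_or_eq_or_eq_neg hF hk hv hvk hab
  have hq : 3 ^ (2 * j + 1) = 3 * (3 ^ j) ^ 2 := by ring
  have hq' : 3 ^ (2 * j) = (3 ^ j) ^ 2 := by ring
  have hs : 1 < 3 ^ j := one_lt_pow₀ (by decide) (by lia)
  have hn : Fintype.card F = 3 ^ (2 * j + 1) - 1 + 1 := by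
    rw [hF, Nat.sub_add_cancel (Nat.one_le_pow _ _ three_pos)]
  rw [setOf_hammingNorm_eq hα hn hv.pos.ne',
    ncard_setOf_expSum_eq (s := 3 ^ j) (hF.trans hq) hs hv (by exact_mod_cast hspec), hF]
  simp only [Nat.add_sub_cancel, Nat.mul_div_cancel_left j two_pos, hq, hq']
  generalize 3 ^ j = s at hs ⊢
  have hs2 : s < s ^ 2 := by nlinarith
  have h0 : (2 * (3 * s ^ 2 : ℕ) - 3 * w : ℤ) = 6 * s ^ 2 ↔ w = 0 := by lia
  have h1 : (2 * (3 * s ^ 2 : ℕ) - 3 * w : ℤ) = 6 * s ↔ w = 2 * (s ^ 2 - s) := by lia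
  have h2 : (2 * (3 * s ^ 2 : ℕ) - 3 * w : ℤ) = 0 ↔ w = 2 * s ^ 2 := by lia
  have h3 : (2 * (3 * s ^ 2 : ℕ) - 3 * w : ℤ) = -(6 * s) ↔ w = 2 * (s ^ 2 + s) := by lia
  simp only [h0, h1, h2, h3]

/-- weight distribution (Table II) of the ternary cyclic code
`C_{(1,v,3,m)}` with `m ≡ 7 (mod 8)` and
`v = (3^{(m+1)/8}-1)(3^{(m+1)/4}+1)(3^{(m+1)/2}+1) + (3^m-1)/2`; codewords are
`c(a,b)_i = Tr(a α^i) + Tr(b α^{iv})`. -/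
theorem stmt17 {m : ℕ} (hm : m % 8 = 7)
    {F : Type*} [Field F] [Fintype F] [Algebra (ZMod 3) F]
    (hF : Fintype.card F = 3 ^ m)
    (α : Fˣ) (hα : ∀ x : Fˣ, x ∈ Subgroup.zpowers α)
    (v : ℕ)
    (hv : v = (3 ^ ((m + 1) / 8) - 1) * (3 ^ ((m + 1) / 4) + 1) * (3 ^ ((m + 1) / 2) + 1)
        + (3 ^ m - 1) / 2)
    (c : F × F → Fin (3 ^ m - 1) → ZMod 3)
    (hc : c = fun (ab : F × F) (i : Fin (3 ^ m - 1)) =>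
      Algebra.trace (ZMod 3) F (ab.1 * (α : F) ^ (i : ℕ)) +
        Algebra.trace (ZMod 3) F (ab.2 * (α : F) ^ ((i : ℕ) * v))) :
    ∀ w : ℕ,
      {ab : F × F | hammingNorm (c ab) = w}.ncard =
        if w = 0 then 1
        else if w = 2 * (3 ^ (m - 1) - 3 ^ ((m - 1) / 2)) then
          (3 ^ m - 1) * (3 ^ (m - 1) + 3 ^ ((m - 1) / 2)) / 2
        else if w = 2 * 3 ^ (m - 1) then
          (3 ^ m - 1) * (3 ^ m - 3 ^ (m - 1) + 1)
        else if w = 2 * (3 ^ (m - 1) + 3 ^ ((m - 1) / 2)) then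
          (3 ^ m - 1) * (3 ^ (m - 1) - 3 ^ ((m - 1) / 2)) / 2
        else 0 := by
  have hmk : m + 1 = 8 * ((m + 1) / 8) := by lia
  have hodd : Odd m := Nat.odd_iff.mpr (by lia)
  have hk4 : (m + 1) / 4 = 2 * ((m + 1) / 8) := by lia
  have hk2 : (m + 1) / 2 = 4 * ((m + 1) / 8) := by lia
  rw [hk4, hk2] at hv
  subst hv hc
  exact stmt17_general hodd (by lia) (TernaryCode.coprime_of_add_one_eq_mul hmk)
    (TernaryCode.odd_exponent hodd) (TernaryCode.exponent_mul_modEq_two hmk) hF α hα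
end
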